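/- arXiv:1503.01605 — 3 statements merged into one kernel-verified Lean document; each statement's English description precedes it below -/
import Mathlib

section
/- If φ : ℝ → ℝ is an L-Lipschitz nondecreasing continuous surjection satisfying φ(x + a) = φ(x) + b for fixed reals a > 0, b > 0 and all x, then there exists a sequence of L-Lipschitz smooth functions φₙ : ℝ → ℝ, each with strictly positive derivative (hence diffeomorphisms of ℝ), such that φₙ(x + a) = φₙ(x) + b for all x and φₙ converges to φ uniformly on ℝ. -/
open Filter

/-!
Mollifying `φ` by a bump function averages translates of `φ`, so it keeps the Lipschitz constant,
the monotonicity and the quasi-period, and uniform continuity makes the error uniformly small.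
The linear map `ℓ x = (x / a) * b` has the same quasi-period, and it is `L`-Lipschitz since the
Lipschitz bound over one quasi-period gives `b ≤ L * a`. Moving the mollified function slightly
towards `ℓ` makes the derivative positive; this is uniformly small because the difference with
`ℓ` is continuous and `a`-periodic, hence bounded.
-/

open AffineMap ContinuousLinearMap MeasureTheory
open scoped Convolution NNReal

section Convolution

variable {G F : Type*} [MeasurableSpace G] {μ : Measure G} [NormedAddCommGroup F]
  [NormedSpace ℝ F] {w : G → ℝ}

theorem monotone_convolution [AddGroup G] [Preorder G] [AddRightMono G] {f : G → ℝ}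
    (hf : Monotone f) (hw : ∀ t, 0 ≤ w t) (hwf : ConvolutionExists w f (lsmul ℝ ℝ) μ) :
    Monotone (w ⋆[lsmul ℝ ℝ, μ] f) := fun x y hxy =>
  integral_mono (hwf x) (hwf y) fun t =>
    mul_le_mul_of_nonneg_left (hf (sub_le_sub_right hxy t)) (hw t)

theorem lipschitzWith_convolution [SeminormedAddCommGroup G] {f : G → F} {K : ℝ≥0}
    (hf : LipschitzWith K f) (hw : ∀ t, 0 ≤ w t) (hw_one : ∫ t, w t ∂μ = 1)
    (hwf : ConvolutionExists w f (lsmul ℝ ℝ) μ) :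
    LipschitzWith K (w ⋆[lsmul ℝ ℝ, μ] f) := by
  have hw_int : Integrable w μ := .of_integral_ne_zero (by simp [hw_one])
  refine .of_dist_le_mul fun x y => ?_
  calc dist ((w ⋆[lsmul ℝ ℝ, μ] f) x) ((w ⋆[lsmul ℝ ℝ, μ] f) y)
      = ‖∫ t, w t • (f (x - t) - f (y - t)) ∂μ‖ := by
        simp only [dist_eq_norm, convolution_lsmul, smul_sub]
        exact congrArg norm (integral_sub (hwf x) (hwf y)).symm
    _ ≤ ∫ t, w t * (K * dist x y) ∂μ := by
        refine norm_integral_le_of_norm_le (hw_int.mul_const _) (.of_forall fun t => ?_)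
        rw [norm_smul, Real.norm_of_nonneg (hw t), ← dist_eq_norm]
        gcongr
        · exact hw t
        · simpa only [dist_sub_right] using hf.dist_le_mul (x - t) (y - t)
    _ = K * dist x y := by rw [integral_mul_const, hw_one, one_mul]

theorem convolution_map_add_const [AddCommGroup G] [CompleteSpace F] {f : G → F} {a : G} {b : F}
    (hf : ∀ x, f (x + a) = f x + b) (hw_one : ∫ t, w t ∂μ = 1)
    (hwf : ConvolutionExists w f (lsmul ℝ ℝ) μ) (x : G) :
    (w ⋆[lsmul ℝ ℝ, μ] f) (x + a) = (w ⋆[lsmul ℝ ℝ, μ] f) x + b := by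
  have hw_int : Integrable w μ := .of_integral_ne_zero (by simp [hw_one])
  calc (w ⋆[lsmul ℝ ℝ, μ] f) (x + a) = ∫ t, w t • f (x - t) + w t • b ∂μ := by
        simp only [convolution_lsmul, add_sub_right_comm, hf, smul_add]
    _ = (∫ t, w t • f (x - t) ∂μ) + ∫ t, w t • b ∂μ :=
        integral_add (hwf x) (hw_int.smul_const b)
    _ = (w ⋆[lsmul ℝ ℝ, μ] f) x + b := by
        rw [integral_smul_const, hw_one, one_smul, convolution_lsmul]

end Convolution

theorem exists_contDiff_monotone_dist_lt {φ : ℝ → ℝ} {K : ℝ≥0} {a b ε : ℝ}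
    (hmono : Monotone φ) (hlip : LipschitzWith K φ) (hqp : ∀ x, φ (x + a) = φ x + b)
    (hε : 0 < ε) :
    ∃ ψ : ℝ → ℝ, ContDiff ℝ (⊤ : ℕ∞) ψ ∧ Monotone ψ ∧ LipschitzWith K ψ ∧
      (∀ x, ψ (x + a) = ψ x + b) ∧ ∀ x, dist (ψ x) (φ x) < ε := by
  obtain ⟨δ, hδ, hφδ⟩ := Metric.uniformContinuous_iff.1 hlip.uniformContinuous (ε / 2) (half_pos hε)
  let ρ : ContDiffBump (0 : ℝ) := ⟨δ / 2, δ, half_pos hδ, half_lt_self hδ⟩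
  have hρφ : ConvolutionExists (ρ.normed volume) φ (lsmul ℝ ℝ) volume :=
    ρ.hasCompactSupport_normed.convolutionExists_left _ ρ.continuous_normed
      hlip.continuous.locallyIntegrable
  refine ⟨ρ.normed volume ⋆[lsmul ℝ ℝ, volume] φ,
    ρ.hasCompactSupport_normed.contDiff_convolution_left _ ρ.contDiff_normed
      hlip.continuous.locallyIntegrable,
    monotone_convolution hmono ρ.nonneg_normed hρφ,
    lipschitzWith_convolution hlip ρ.nonneg_normed ρ.integral_normed hρφ,
    convolution_map_add_const hqp ρ.integral_normed hρφ, fun x => ?_⟩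
  refine (ρ.dist_normed_convolution_le hlip.continuous.aestronglyMeasurable
    fun y hy => ?_).trans_lt (half_lt_self hε)
  exact (hφδ (Metric.mem_ball.1 hy)).le

section LineMap

theorem lipschitzWith_lineMap_apply {X E : Type*} [PseudoMetricSpace X] [SeminormedAddCommGroup E]
    [NormedSpace ℝ E] {f g : X → E} {K : ℝ≥0} {s : ℝ} (hf : LipschitzWith K f)
    (hg : LipschitzWith K g) (hs : s ∈ Set.Icc 0 1) :
    LipschitzWith K fun x => lineMap (f x) (g x) s := by
  have hs' : 0 ≤ 1 - s := sub_nonneg.2 hs.2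
  refine .of_dist_le_mul fun x y => ?_
  simp only [lineMap_apply_module]
  calc dist ((1 - s) • f x + s • g x) ((1 - s) • f y + s • g y)
      ≤ (1 - s) * dist (f x) (f y) + s * dist (g x) (g y) := by
        refine (dist_add_add_le _ _ _ _).trans_eq ?_
        rw [dist_smul₀, dist_smul₀, Real.norm_of_nonneg hs', Real.norm_of_nonneg hs.1]
    _ ≤ (1 - s) * (K * dist x y) + s * (K * dist x y) :=
        add_le_add (mul_le_mul_of_nonneg_left (hf.dist_le_mul x y) hs')
          (mul_le_mul_of_nonneg_left (hg.dist_le_mul x y) hs.1)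
    _ = K * dist x y := by ring

theorem deriv_lineMap_pos {f g : ℝ → ℝ} {x s : ℝ} (hf : DifferentiableAt ℝ f x)
    (hg : DifferentiableAt ℝ g x) (hf' : 0 ≤ deriv f x) (hg' : 0 < deriv g x)
    (hs : s ∈ Set.Ioc 0 1) : 0 < deriv (fun y => lineMap (f y) (g y) s) x := by
  simp only [lineMap_apply_module]
  have hderiv := (hf.hasDerivAt.const_mul (1 - s)).add (hg.hasDerivAt.const_mul s)
  calc 0 < (1 - s) * deriv f x + s * deriv g x :=
        add_pos_of_nonneg_of_pos (mul_nonneg (sub_nonneg.2 hs.2) hf') (mul_pos hs.1 hg')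
    _ = deriv (fun y => (1 - s) • f y + s • g y) x := hderiv.deriv.symm

end LineMap

section QuasiPeriodic

theorem norm_le_mul_norm_of_map_add_const {G F : Type*} [SeminormedAddCommGroup G]
    [SeminormedAddCommGroup F] {f : G → F} {a : G} {b : F} {K : ℝ≥0} (hlip : LipschitzWith K f)
    (hqp : ∀ x, f (x + a) = f x + b) : ‖b‖ ≤ K * ‖a‖ := by
  simpa only [hqp, dist_self_add_left] using hlip.dist_le_mul (0 + a) 0

variable {F : Type*} [SeminormedAddCommGroup F] [NormedSpace ℝ F] {f : ℝ → F} {a : ℝ} {b : F}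

theorem lipschitzWith_div_smul {K : ℝ≥0} (hb : ‖b‖ ≤ K * ‖a‖) :
    LipschitzWith K fun x : ℝ => (x / a) • b := by
  refine .of_dist_le_mul fun x y => ?_
  calc dist ((x / a) • b) ((y / a) • b) = dist x y / ‖a‖ * ‖b‖ := by
        rw [dist_eq_norm, ← sub_smul, ← sub_div, norm_smul, norm_div, ← dist_eq_norm]
    _ = ‖b‖ / ‖a‖ * dist x y := by ring
    _ ≤ K * dist x y := by
        gcongr
        exact div_le_of_le_mul₀ (norm_nonneg a) K.coe_nonneg hb

theorem div_smul_map_add_const (ha : a ≠ 0) (x : ℝ) : ((x + a) / a) • b = (x / a) • b + b := by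
  rw [add_div, div_self ha, add_smul, one_smul]

theorem exists_forall_dist_div_smul_le (hf : Continuous f) (ha : a ≠ 0)
    (hqp : ∀ x, f (x + a) = f x + b) : ∃ C, ∀ x, dist (f x) ((x / a) • b) ≤ C := by
  have hper : Function.Periodic (fun x => f x - (x / a) • b) a := fun x => by
    simp only [hqp, div_smul_map_add_const ha, add_sub_add_right_eq_sub]
  obtain ⟨C, hC⟩ := (hper.isBounded_of_continuous ha (by fun_prop)).exists_norm_le
  exact ⟨C, fun x => (dist_eq_norm _ _).trans_le (hC _ ⟨x, rfl⟩)⟩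

end QuasiPeriodic

theorem exists_contDiff_deriv_pos_dist_lt_of_contDiff {ψ : ℝ → ℝ} {n : WithTop ℕ∞} {K : ℝ≥0}
    {a b ε : ℝ} (hn : n ≠ 0) (ha : 0 < a) (hb : 0 < b) (hsmooth : ContDiff ℝ n ψ)
    (hmono : Monotone ψ) (hlip : LipschitzWith K ψ) (hqp : ∀ x, ψ (x + a) = ψ x + b)
    (hε : 0 < ε) :
    ∃ χ : ℝ → ℝ, ContDiff ℝ n χ ∧ LipschitzWith K χ ∧ (∀ x, 0 < deriv χ x) ∧
      (∀ x, χ (x + a) = χ x + b) ∧ ∀ x, dist (χ x) (ψ x) < ε := by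
  let ℓ : ℝ → ℝ := fun x => (x / a) • b
  have hℓ_smooth : ContDiff ℝ n ℓ := by fun_prop
  have hℓ_lip : LipschitzWith K ℓ :=
    lipschitzWith_div_smul (norm_le_mul_norm_of_map_add_const hlip hqp)
  have hℓ_qp : ∀ x, ℓ (x + a) = ℓ x + b := div_smul_map_add_const ha.ne'
  have hℓ_deriv (x : ℝ) : 0 < deriv ℓ x := by
    simpa [ℓ] using mul_pos (inv_pos.2 ha) hb
  obtain ⟨C, hC⟩ := exists_forall_dist_div_smul_le hlip.continuous ha.ne' hqp
  obtain ⟨c, hc, hCc⟩ := exists_pos_mul_lt hε C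
  let s := min c 1
  have hs : s ∈ Set.Ioc 0 1 := ⟨lt_min hc one_pos, min_le_right _ _⟩
  refine ⟨fun x => lineMap (ψ x) (ℓ x) s, hsmooth.lineMap hℓ_smooth contDiff_const,
    lipschitzWith_lineMap_apply hlip hℓ_lip (Set.Ioc_subset_Icc_self hs),
    fun x => deriv_lineMap_pos (hsmooth.differentiable hn x) (hℓ_smooth.differentiable hn x)
      hmono.deriv_nonneg (hℓ_deriv x) hs,
    fun x => ?_, fun x => ?_⟩
  · simp only [hqp, hℓ_qp, lineMap_apply_ring']
    ring
  · calc dist (lineMap (ψ x) (ℓ x) s) (ψ x) = s * dist (ψ x) (ℓ x) := by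
          rw [dist_lineMap_left, Real.norm_of_nonneg hs.1.le]
      _ ≤ c * C := mul_le_mul (min_le_left _ _) (hC x) dist_nonneg hc.le
      _ < ε := by rwa [mul_comm]

theorem exists_contDiff_deriv_pos_dist_lt {φ : ℝ → ℝ} {K : ℝ≥0} {a b ε : ℝ} (ha : 0 < a)
    (hb : 0 < b) (hmono : Monotone φ) (hlip : LipschitzWith K φ)
    (hqp : ∀ x, φ (x + a) = φ x + b) (hε : 0 < ε) :
    ∃ χ : ℝ → ℝ, ContDiff ℝ (⊤ : ℕ∞) χ ∧ LipschitzWith K χ ∧ (∀ x, 0 < deriv χ x) ∧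
      (∀ x, χ (x + a) = χ x + b) ∧ ∀ x, dist (χ x) (φ x) < ε := by
  obtain ⟨ψ, hψ_smooth, hψ_mono, hψ_lip, hψ_qp, hψφ⟩ :=
    exists_contDiff_monotone_dist_lt hmono hlip hqp (half_pos hε)
  obtain ⟨χ, hχ_smooth, hχ_lip, hχ_deriv, hχ_qp, hχψ⟩ :=
    exists_contDiff_deriv_pos_dist_lt_of_contDiff (by simp) ha hb hψ_smooth hψ_mono hψ_lip
      hψ_qp (half_pos hε)
  refine ⟨χ, hχ_smooth, hχ_lip, hχ_deriv, hχ_qp, fun x => ?_⟩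
  calc dist (χ x) (φ x) ≤ dist (χ x) (ψ x) + dist (ψ x) (φ x) := dist_triangle _ _ _
    _ < ε / 2 + ε / 2 := add_lt_add (hχψ x) (hψφ x)
    _ = ε := add_halves ε

/-- Approximation of a Lipschitz quasi-periodic weak homeomorphism of `ℝ` by Lipschitz
smooth diffeomorphisms with the same quasi-period. -/
theorem approx_weak_homeo (L : NNReal) (a b : ℝ) (ha : 0 < a) (hb : 0 < b)
    (φ : ℝ → ℝ) (hmono : Monotone φ) (hsurj : Function.Surjective φ)
    (hcont : Continuous φ) (hlip : LipschitzWith L φ)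
    (hqp : ∀ x, φ (x + a) = φ x + b) :
    ∃ φn : ℕ → ℝ → ℝ,
      (∀ n, ContDiff ℝ (⊤ : ℕ∞) (φn n)) ∧
      (∀ n, LipschitzWith L (φn n)) ∧
      (∀ n x, 0 < deriv (φn n) x) ∧
      (∀ n x, φn n (x + a) = φn n x + b) ∧
      TendstoUniformly φn φ atTop := by
  obtain ⟨ε, -, hε_pos, hε_lim⟩ := exists_seq_strictAnti_tendsto (0 : ℝ)
  choose φn hsmooth hφn_lip hderiv hφn_qp hdist using fun n =>
    exists_contDiff_deriv_pos_dist_lt ha hb hmono hlip hqp (hε_pos n)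
  refine ⟨φn, hsmooth, hφn_lip, hderiv, hφn_qp, Metric.tendstoUniformly_iff.2 fun δ hδ => ?_⟩
  filter_upwards [hε_lim.eventually_lt_const hδ] with n hn x
  rw [dist_comm]
  exact (hdist n x).trans hn
end

section
/- The family {T[fₙ] : n ∈ ℕ}, where fₙ are L-Lipschitz nondecreasing functions with fₙ(t+2π) = fₙ(t)+l converging uniformly to f and g is an l-periodic arc-length parametrization of a Dini-smooth curve, is uniformly bounded and equicontinuous on [0, 2π]. -/
open MeasureTheory Set Real Filter

/-- The kernel `K(s,t) = Re[ conj(g(t) − g(s)) · i g'(s) ]`. -/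
noncomputable def Kker (g : ℝ → ℂ) (s t : ℝ) : ℝ :=
  ((starRingEnd ℂ) (g t - g s) * (Complex.I * deriv g s)).re

/-- The operator `T[f](τ) = ∫₀^{2π} K(f(τ), f(t)) / (2 sin²((t−τ)/2)) dt`. -/
noncomputable def Topf (g : ℝ → ℂ) (f : ℝ → ℝ) (τ : ℝ) : ℝ :=
  ∫ t in (0:ℝ)..(2 * π), Kker g (f τ) (f t) / (2 * Real.sin ((t - τ) / 2) ^ 2)

/-!
Since `Re (conj v * (i * v)) = 0`, the kernel `K(s, t)` only sees the first-order Taylor remainder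
of `g` at `s`, which is `O(W |t - s| * |t - s|)` for a modulus of continuity `W` of `g'`. As
`|sin (u / 2)| ≥ |u| / π` on `[-π, π]`, the integrand of `T[f]`, centred at `τ`, is then at most a
constant times `W (L |u|) / |u|`, which does not depend on `f` and is integrable by the Dini
condition. For fixed `u ≠ 0` the integrand varies with `τ` by `o(1)`, again uniformly in `f`, so
dominated convergence gives a common modulus of continuity for all the `T[f]`.
-/

open scoped NNReal Topology

section IntegralFamily

variable {ι X α E : Type*} [PseudoMetricSpace X] [MeasurableSpace α] {μ : Measure α}
  [NormedAddCommGroup E] [NormedSpace ℝ E]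

theorem uniformEquicontinuous_integral_of_dominated {H : ι → X → α → E} {Q : α → ℝ}
    {R : ℝ → α → ℝ} (hH : ∀ i x, AEStronglyMeasurable (H i x) μ) (hQ : Integrable Q μ)
    (hHQ : ∀ i x, ∀ᵐ a ∂μ, ‖H i x a‖ ≤ Q a) (hR : ∀ δ, AEStronglyMeasurable (R δ) μ)
    (hR_lim : ∀ᵐ a ∂μ, Tendsto (fun δ => R δ a) (𝓝 0) (𝓝 0))
    (hHR : ∀ i x y, ∀ᵐ a ∂μ, ‖H i x a - H i y a‖ ≤ R (dist x y) a) :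
    UniformEquicontinuous fun i x => ∫ a, H i x a ∂μ := by
  set B : ℝ → α → ℝ := fun δ a => min (2 * |Q a|) |R δ a|
  have hB_nonneg : ∀ δ a, 0 ≤ B δ a := fun δ a => by positivity
  have hB_meas : ∀ δ, AEStronglyMeasurable (B δ) μ := fun δ =>
    (hQ.abs.const_mul 2).aestronglyMeasurable.inf (hR δ).norm
  have hB_le : ∀ δ a, ‖B δ a‖ ≤ 2 * |Q a| := fun δ a =>
    (Real.norm_of_nonneg (hB_nonneg δ a)).trans_le (min_le_left _ _)
  have hB_lim : Tendsto (fun δ => ∫ a, B δ a ∂μ) (𝓝 0) (𝓝 0) := by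
    rw [← integral_zero α ℝ (μ := μ)]
    refine tendsto_integral_filter_of_dominated_convergence _ (.of_forall hB_meas)
      (.of_forall fun δ => ae_of_all _ (hB_le δ)) (hQ.abs.const_mul 2) ?_
    filter_upwards [hR_lim] with a ha
    exact squeeze_zero (fun δ => hB_nonneg δ a) (fun δ => min_le_right _ _) (by simpa using ha.abs)
  have hH_int : ∀ i x, Integrable (H i x) μ := fun i x => hQ.mono' (hH i x) (hHQ i x)
  refine Metric.uniformEquicontinuous_of_continuity_modulus _ hB_lim _ fun x y i => ?_
  rw [dist_eq_norm, ← integral_sub (hH_int i x) (hH_int i y)]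
  refine norm_integral_le_of_norm_le
    ((hQ.abs.const_mul 2).mono' (hB_meas _) (ae_of_all _ (hB_le _))) ?_
  filter_upwards [hHQ i x, hHQ i y, hHR i x y] with a hx hy hxy
  refine le_min ?_ (hxy.trans (le_abs_self _))
  linarith [norm_sub_le (H i x a) (H i y a), le_abs_self (Q a)]

end IntegralFamily

/-- A Dini modulus: a nondecreasing nonnegative `W` with `∫₀ W(t)/t dt < ∞`. Vanishing and
continuity at `0` are consequences, see `IsDiniModulus.tendsto_zero`. -/
structure IsDiniModulus (W : ℝ → ℝ) : Prop where
  monotone : Monotone W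
  nonneg : ∀ δ, 0 ≤ W δ
  exists_integrableOn : ∃ k > 0, IntegrableOn (fun t => W t / t) (Ioc 0 k)

namespace IsDiniModulus

variable {W : ℝ → ℝ}

theorem exists_pos_lt (hW : IsDiniModulus W) {ε : ℝ} (hε : 0 < ε) : ∃ δ > 0, W δ < ε := by
  obtain ⟨k, hk, hint⟩ := hW.exists_integrableOn
  by_contra! hε_le
  have hinv : IntegrableOn (fun t : ℝ => t⁻¹) (Ioc 0 k) := by
    refine (hint.const_mul ε⁻¹).mono' measurable_inv.aestronglyMeasurable
      (ae_restrict_of_forall_mem measurableSet_Ioc fun t ht => ?_)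
    have ht0 : 0 < t := ht.1
    rw [Real.norm_of_nonneg (inv_nonneg.2 ht0.le), inv_mul_eq_div, div_right_comm,
      ← one_div]
    gcongr
    exact (one_le_div hε).2 (hε_le t ht0)
  rw [← intervalIntegrable_iff_integrableOn_Ioc_of_le hk.le, intervalIntegrable_inv_iff] at hinv
  exact hinv.elim hk.ne fun h => h left_mem_uIcc

theorem tendsto_zero (hW : IsDiniModulus W) : Tendsto W (𝓝 0) (𝓝 0) := by
  rw [Metric.tendsto_nhds]
  intro ε hε
  obtain ⟨δ, hδ, hlt⟩ := hW.exists_pos_lt hε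
  filter_upwards [Iio_mem_nhds hδ] with x hx
  rw [Real.dist_eq, sub_zero, abs_of_nonneg (hW.nonneg x)]
  exact (hW.monotone (mem_Iio.1 hx).le).trans_lt hlt

theorem apply_zero (hW : IsDiniModulus W) : W 0 = 0 :=
  tendsto_nhds_unique (tendsto_pure_nhds W 0) (hW.tendsto_zero.mono_left (pure_le_nhds 0))

theorem intervalIntegrable_div (hW : IsDiniModulus W) {b : ℝ} (hb : 0 < b) :
    IntervalIntegrable (fun t => W t / t) volume 0 b := by
  obtain ⟨k, hk, hint⟩ := hW.exists_integrableOn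
  refine ((intervalIntegrable_iff_integrableOn_Ioc_of_le hk.le).2 hint).trans ?_
  simp only [div_eq_mul_inv]
  refine hW.monotone.intervalIntegrable.mul_continuousOn (continuousOn_inv₀.mono fun t ht => ?_)
  exact ((lt_min hk hb).trans_le ht.1).ne'

theorem intervalIntegrable_comp_mul_abs_div (hW : IsDiniModulus W) {M : ℝ} (hM : 0 ≤ M) (a b : ℝ) :
    IntervalIntegrable (fun u => W (M * |u|) / |u|) volume a b := by
  rcases hM.eq_or_lt with rfl | hM
  · simp [hW.apply_zero]
  refine intervalIntegrable_of_even (fun x => by simp) fun x hx => ?_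
  have h := ((hW.intervalIntegrable_div (mul_pos hM hx)).comp_mul_left (c := M)).const_mul M
  rw [zero_div, mul_div_cancel_left₀ x hM.ne'] at h
  refine h.congr fun t ht => ?_
  rw [uIoc_of_le hx.le] at ht
  have ht0 : 0 < t := ht.1
  simp only [abs_of_pos ht0]
  field_simp

end IsDiniModulus

section ModulusOfContinuity

variable {X Y : Type*} [PseudoMetricSpace X] [PseudoMetricSpace Y]

/-- The least modulus of continuity of `φ`. Being a real supremum, it has the junk value `0` at
`δ` if `φ` has unbounded oscillation at scale `δ`. -/
noncomputable def modulusOfContinuity (φ : X → Y) (δ : ℝ) : ℝ :=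
  ⨆ p : {p : X × X // dist p.1 p.2 ≤ δ}, dist (φ p.1.1) (φ p.1.2)

theorem modulusOfContinuity_nonneg (φ : X → Y) (δ : ℝ) : 0 ≤ modulusOfContinuity φ δ :=
  Real.iSup_nonneg fun _ => dist_nonneg

variable {φ : X → Y} {ω : ℝ → ℝ}

theorem dist_le_modulusOfContinuity (hω : ∀ δ x y, dist x y ≤ δ → dist (φ x) (φ y) ≤ ω δ)
    {δ : ℝ} {x y : X} (hxy : dist x y ≤ δ) : dist (φ x) (φ y) ≤ modulusOfContinuity φ δ :=
  le_ciSup (f := fun p : {p : X × X // dist p.1 p.2 ≤ δ} => dist (φ p.1.1) (φ p.1.2))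
    ⟨ω δ, forall_mem_range.2 fun p => hω δ _ _ p.2⟩ ⟨(x, y), hxy⟩

theorem monotone_modulusOfContinuity (hω : ∀ δ x y, dist x y ≤ δ → dist (φ x) (φ y) ≤ ω δ) :
    Monotone (modulusOfContinuity φ) := fun _ δ hδ =>
  Real.iSup_le (fun p => dist_le_modulusOfContinuity hω (p.2.trans hδ))
    (modulusOfContinuity_nonneg φ δ)

theorem isDiniModulus_modulusOfContinuity [Nonempty X]
    (hω : ∀ δ x y, dist x y ≤ δ → dist (φ x) (φ y) ≤ ω δ)
    (hωD : ∃ k > 0, IntegrableOn (fun t => ω t / t) (Ioc 0 k)) :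
    IsDiniModulus (modulusOfContinuity φ) where
  monotone := monotone_modulusOfContinuity hω
  nonneg := modulusOfContinuity_nonneg φ
  exists_integrableOn := by
    obtain ⟨k, hk, hint⟩ := hωD
    have hmeas := (monotone_modulusOfContinuity hω).measurable.div measurable_id
    refine ⟨k, hk, hint.mono' hmeas.aestronglyMeasurable
      (ae_restrict_of_forall_mem measurableSet_Ioc fun t ht => ?_)⟩
    have ht0 : 0 < t := ht.1
    have hle : modulusOfContinuity φ t ≤ ω t := by
      inhabit X
      have : Nonempty {p : X × X // dist p.1 p.2 ≤ t} := ⟨(default, default), by simp [ht0.le]⟩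
      exact ciSup_le fun p => hω t _ _ p.2
    rw [Real.norm_of_nonneg (div_nonneg (modulusOfContinuity_nonneg φ t) ht0.le)]
    gcongr

end ModulusOfContinuity

theorem norm_sub_sub_smul_deriv_le {E : Type*} [NormedAddCommGroup E] [NormedSpace ℝ E]
    {g : ℝ → E} {W : ℝ → ℝ} (hg : Differentiable ℝ g) (hW : Monotone W)
    (hWg : ∀ x y, ‖deriv g x - deriv g y‖ ≤ W |x - y|) (s t : ℝ) :
    ‖g t - g s - (t - s) • deriv g s‖ ≤ W |t - s| * |t - s| := by
  have hfderiv : ∀ x, ‖fderiv ℝ g x - fderiv ℝ g s‖ = ‖deriv g x - deriv g s‖ := fun x => by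
    rw [← ContinuousLinearMap.norm_toSpanSingleton (𝕜 := ℝ) (deriv g x - deriv g s)]
    congr 1
    ext
    simp
  simpa using (convex_uIcc s t).norm_image_sub_le_of_norm_fderiv_le' (fun x _ => hg x)
    (fun x hx => (hfderiv x).trans_le ((hWg x s).trans (hW (abs_sub_left_of_mem_uIcc hx))))
    left_mem_uIcc right_mem_uIcc

theorem re_conj_smul_mul_I_mul_self (x : ℝ) (v : ℂ) :
    ((starRingEnd ℂ) (x • v) * (Complex.I * v)).re = 0 := by
  have hmul : (starRingEnd ℂ) (x • v) * (Complex.I * v) = x * Complex.normSq v * Complex.I := by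
    rw [Complex.normSq_eq_conj_mul_self, Complex.real_smul, map_mul, Complex.conj_ofReal]
    ring
  rw [hmul, ← Complex.ofReal_mul, Complex.re_ofReal_mul, Complex.I_re, mul_zero]

/-- The integrand of `Topf g f τ`, centred at `τ` by the substitution `t = τ + u`. -/
noncomputable def topfIntegrand (g : ℝ → ℂ) (f : ℝ → ℝ) (τ u : ℝ) : ℝ :=
  Kker g (f τ) (f (τ + u)) / (2 * sin (u / 2) ^ 2)

/-- The majorant of the integrands `topfIntegrand g f τ` over all `L`-Lipschitz `f`, when `g` has
speed at most `c` and `W` is a modulus of continuity of its derivative. -/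
noncomputable def topfMajorant (W : ℝ → ℝ) (c L : ℝ≥0) (u : ℝ) : ℝ :=
  c * L * π ^ 2 / 2 * (W (L * |u|) / |u|)

section Operator

variable {g : ℝ → ℂ} {f : ℝ → ℝ} {W : ℝ → ℝ} {c L : ℝ≥0}

theorem measurable_topfIntegrand (hg : Continuous g) (hf : Continuous f) (τ : ℝ) :
    Measurable (topfIntegrand g f τ) := by
  refine Measurable.div (Continuous.measurable ?_) (by fun_prop)
  unfold Kker
  fun_prop

theorem Topf_eq_integral_topfIntegrand {l : ℝ} (hper : Function.Periodic g l)
    (hf : ∀ t, f (t + 2 * π) = f t + l) (τ : ℝ) :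
    Topf g f τ = ∫ u in Ioc (-π) π, topfIntegrand g f τ u := by
  set h : ℝ → ℝ := fun t => Kker g (f τ) (f t) / (2 * sin ((t - τ) / 2) ^ 2)
  have hh : Function.Periodic h (2 * π) := fun t => by
    have hsin : sin ((t + 2 * π - τ) / 2) = -sin ((t - τ) / 2) := by
      rw [← sin_add_pi]
      ring_nf
    simp only [h, Kker, hf, hper (f t), hsin, neg_sq]
  calc Topf g f τ = ∫ t in 0..0 + 2 * π, h t := by rw [zero_add, Topf]
    _ = ∫ t in τ + -π..τ + -π + 2 * π, h t := hh.intervalIntegral_add_eq 0 (τ + -π)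
    _ = ∫ t in τ + -π..τ + π, h t := by ring_nf
    _ = ∫ u in -π..π, h (τ + u) := (intervalIntegral.integral_comp_add_left h τ).symm
    _ = ∫ u in Ioc (-π) π, topfIntegrand g f τ u := by
      rw [intervalIntegral.integral_of_le (neg_le_self pi_pos.le)]
      simp only [h, add_sub_cancel_left, topfIntegrand]

theorem abs_Kker_le (hg : Differentiable ℝ g) (hc : ∀ s, ‖deriv g s‖ ≤ c) (hW : Monotone W)
    (hWg : ∀ x y, ‖deriv g x - deriv g y‖ ≤ W |x - y|) (s t : ℝ) :
    |Kker g s t| ≤ W |t - s| * |t - s| * c := by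
  have hKker : Kker g s t = ((starRingEnd ℂ) (g t - g s - (t - s) • deriv g s) *
      (Complex.I * deriv g s)).re := by
    rw [map_sub _ (g t - g s), sub_mul, Complex.sub_re, re_conj_smul_mul_I_mul_self, sub_zero, Kker]
  have hremainder := norm_sub_sub_smul_deriv_le hg hW hWg s t
  calc |Kker g s t| ≤ ‖g t - g s - (t - s) • deriv g s‖ * ‖deriv g s‖ := by
        rw [hKker]
        refine (Complex.abs_re_le_norm _).trans_eq ?_
        rw [norm_mul, norm_mul, RCLike.norm_conj, Complex.norm_I, one_mul]
    _ ≤ W |t - s| * |t - s| * c :=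
        mul_le_mul hremainder (hc s) (norm_nonneg _) ((norm_nonneg _).trans hremainder)

theorem abs_Kker_sub_le (hg : Differentiable ℝ g) (hc : ∀ s, ‖deriv g s‖ ≤ c)
    (hWg : ∀ x y, ‖deriv g x - deriv g y‖ ≤ W |x - y|) (s t s' t' : ℝ) :
    |Kker g s t - Kker g s' t'| ≤
      (c * |t - t'| + c * |s - s'|) * c + c * |t' - s'| * W |s - s'| := by
  have hKker : Kker g s t - Kker g s' t' =
      ((starRingEnd ℂ) ((g t - g t') - (g s - g s')) * (Complex.I * deriv g s) +
        (starRingEnd ℂ) (g t' - g s') * (Complex.I * (deriv g s - deriv g s'))).re := by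
    rw [Kker, Kker, ← Complex.sub_re]
    simp only [map_sub]
    ring_nf
  have hlip : ∀ x y, ‖g x - g y‖ ≤ c * |x - y| :=
    (lipschitzWith_of_nnnorm_deriv_le hg hc).norm_sub_le
  rw [hKker]
  refine (Complex.abs_re_le_norm _).trans ((norm_add_le _ _).trans ?_)
  simp only [norm_mul, RCLike.norm_conj, Complex.norm_I, one_mul]
  gcongr
  · exact (norm_sub_le _ _).trans (add_le_add (hlip t t') (hlip s s'))
  · exact hc s
  · exact hlip t' s'
  · exact hWg s s'

theorem abs_topfIntegrand_le (hg : Differentiable ℝ g) (hc : ∀ s, ‖deriv g s‖ ≤ c)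
    (hW : Monotone W) (hWg : ∀ x y, ‖deriv g x - deriv g y‖ ≤ W |x - y|) (hf : LipschitzWith L f)
    (τ : ℝ) {u : ℝ} (hu : |u| ≤ π) :
    |topfIntegrand g f τ u| ≤ topfMajorant W c L u := by
  rcases eq_or_ne u 0 with rfl | hu0
  · simp [topfIntegrand, topfMajorant]
  have hfu : |f (τ + u) - f τ| ≤ L * |u| := by
    simpa [Real.dist_eq] using hf.dist_le_mul (τ + u) τ
  have hWu : 0 ≤ W (L * |u|) := ((norm_nonneg _).trans (hWg (f (τ + u)) (f τ))).trans (hW hfu)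
  have hK : |Kker g (f τ) (f (τ + u))| ≤ W (L * |u|) * (L * |u|) * c :=
    (abs_Kker_le hg hc hW hWg _ _).trans <| by
      gcongr
      exact hW hfu
  have hsin : (|u| / π) ^ 2 ≤ sin (u / 2) ^ 2 := by
    have h := mul_abs_le_abs_sin (x := u / 2) (by rw [abs_div, abs_two]; linarith)
    rw [abs_div, abs_two, div_mul_div_cancel₀' two_ne_zero] at h
    rw [← sq_abs (sin (u / 2))]
    gcongr
  calc |topfIntegrand g f τ u| = |Kker g (f τ) (f (τ + u))| / (2 * sin (u / 2) ^ 2) := by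
        rw [topfIntegrand, abs_div, abs_of_nonneg (by positivity : 0 ≤ 2 * sin (u / 2) ^ 2)]
    _ ≤ W (L * |u|) * (L * |u|) * c / (2 * (|u| / π) ^ 2) := by gcongr
    _ = topfMajorant W c L u := by
        rw [topfMajorant]
        field_simp

theorem abs_topfIntegrand_sub_le (hg : Differentiable ℝ g) (hc : ∀ s, ‖deriv g s‖ ≤ c)
    (hW : Monotone W) (hWg : ∀ x y, ‖deriv g x - deriv g y‖ ≤ W |x - y|) (hf : LipschitzWith L f)
    (τ σ : ℝ) {u : ℝ} (hu : |u| ≤ π) :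
    |topfIntegrand g f τ u - topfIntegrand g f σ u| ≤
      (2 * c ^ 2 * (L * |τ - σ|) + c * L * π * W (L * |τ - σ|)) / (2 * sin (u / 2) ^ 2) := by
  have hlip : ∀ x y, |f x - f y| ≤ L * |x - y| := hf.dist_le_mul
  have hWf : 0 ≤ W |f τ - f σ| := (norm_nonneg _).trans (hWg _ _)
  rw [topfIntegrand, topfIntegrand, ← sub_div, abs_div,
    abs_of_nonneg (by positivity : 0 ≤ 2 * sin (u / 2) ^ 2)]
  gcongr
  calc |Kker g (f τ) (f (τ + u)) - Kker g (f σ) (f (σ + u))|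
      ≤ (c * |f (τ + u) - f (σ + u)| + c * |f τ - f σ|) * c +
          c * |f (σ + u) - f σ| * W |f τ - f σ| := abs_Kker_sub_le hg hc hWg _ _ _ _
    _ ≤ (c * (L * |τ - σ|) + c * (L * |τ - σ|)) * c + c * (L * π) * W (L * |τ - σ|) := by
        gcongr
        · simpa using hlip (τ + u) (σ + u)
        · exact hlip τ σ
        · calc |f (σ + u) - f σ| ≤ L * |u| := by simpa using hlip (σ + u) σ
            _ ≤ L * π := by gcongr
        · exact hW (hlip τ σ)
    _ = 2 * c ^ 2 * (L * |τ - σ|) + c * L * π * W (L * |τ - σ|) := by ring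

theorem integrableOn_topfMajorant (hW : IsDiniModulus W) (c L : ℝ≥0) :
    IntegrableOn (topfMajorant W c L) (Ioc (-π) π) :=
  ((hW.intervalIntegrable_comp_mul_abs_div L.2 (-π) π).const_mul _).1

theorem ae_norm_topfIntegrand_le (hg : Differentiable ℝ g) (hc : ∀ s, ‖deriv g s‖ ≤ c)
    (hW : Monotone W) (hWg : ∀ x y, ‖deriv g x - deriv g y‖ ≤ W |x - y|) (hf : LipschitzWith L f)
    (τ : ℝ) :
    ∀ᵐ u ∂volume.restrict (Ioc (-π) π), ‖topfIntegrand g f τ u‖ ≤ topfMajorant W c L u :=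
  ae_restrict_of_forall_mem measurableSet_Ioc fun _ hu =>
    abs_topfIntegrand_le hg hc hW hWg hf τ (abs_le.2 ⟨hu.1.le, hu.2⟩)

variable {l : ℝ}

theorem abs_Topf_le (hg : Differentiable ℝ g) (hper : Function.Periodic g l)
    (hc : ∀ s, ‖deriv g s‖ ≤ c) (hW : IsDiniModulus W)
    (hWg : ∀ x y, ‖deriv g x - deriv g y‖ ≤ W |x - y|) (hf : LipschitzWith L f)
    (hfqp : ∀ t, f (t + 2 * π) = f t + l) (τ : ℝ) :
    |Topf g f τ| ≤ ∫ u in Ioc (-π) π, topfMajorant W c L u := by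
  rw [Topf_eq_integral_topfIntegrand hper hfqp]
  exact norm_integral_le_of_norm_le (integrableOn_topfMajorant hW c L)
    (ae_norm_topfIntegrand_le hg hc hW.monotone hWg hf τ)

theorem uniformEquicontinuous_Topf {ι : Type*} {F : ι → ℝ → ℝ} (hg : Differentiable ℝ g)
    (hper : Function.Periodic g l) (hc : ∀ s, ‖deriv g s‖ ≤ c) (hW : IsDiniModulus W)
    (hWg : ∀ x y, ‖deriv g x - deriv g y‖ ≤ W |x - y|) (hF : ∀ i, LipschitzWith L (F i))
    (hFqp : ∀ i t, F i (t + 2 * π) = F i t + l) :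
    UniformEquicontinuous fun i => Topf g (F i) := by
  have hTopf : (fun i => Topf g (F i)) =
      fun i τ => ∫ u in Ioc (-π) π, topfIntegrand g (F i) τ u :=
    funext₂ fun i τ => Topf_eq_integral_topfIntegrand hper (hFqp i) τ
  set osc : ℝ → ℝ := fun δ => 2 * c ^ 2 * (L * δ) + c * L * π * W (L * δ)
  have hosc : Tendsto osc (𝓝 0) (𝓝 0) := by
    have hL : Tendsto (fun δ : ℝ => L * δ) (𝓝 0) (𝓝 0) := by
      simpa using (continuous_const_mul (L : ℝ)).tendsto 0
    simpa using (hL.const_mul (2 * c ^ 2 : ℝ)).add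
      ((hW.tendsto_zero.comp hL).const_mul (c * L * π : ℝ))
  rw [hTopf]
  exact uniformEquicontinuous_integral_of_dominated (R := fun δ u => osc δ / (2 * sin (u / 2) ^ 2))
    (fun i τ => (measurable_topfIntegrand hg.continuous (hF i).continuous τ).aestronglyMeasurable)
    (integrableOn_topfMajorant hW c L)
    (fun i => ae_norm_topfIntegrand_le hg hc hW.monotone hWg (hF i))
    (fun δ => (by fun_prop : Measurable _).aestronglyMeasurable)
    (ae_of_all _ fun u => by simpa using hosc.div_const (2 * sin (u / 2) ^ 2))
    (fun i τ σ => ae_restrict_of_forall_mem measurableSet_Ioc fun u hu =>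
      abs_topfIntegrand_sub_le hg hc hW.monotone hWg (hF i) τ σ (abs_le.2 ⟨hu.1.le, hu.2⟩))

end Operator

theorem T_bounded_equicontinuous_general {ι : Type*} {l : ℝ} {c L : ℝ≥0} {g : ℝ → ℂ}
    (hg : Differentiable ℝ g) (hper : Function.Periodic g l) (hc : ∀ s, ‖deriv g s‖ ≤ c)
    {ω : ℝ → ℝ} (hω : ∀ δ x y : ℝ, |x - y| ≤ δ → ‖deriv g x - deriv g y‖ ≤ ω δ)
    (hωD : ∃ k > 0, IntegrableOn (fun t => ω t / t) (Ioc 0 k))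
    {F : ι → ℝ → ℝ} (hF : ∀ i, LipschitzWith L (F i))
    (hFqp : ∀ i t, F i (t + 2 * π) = F i t + l) :
    (∃ C : ℝ, ∀ i τ, |Topf g (F i) τ| ≤ C) ∧ UniformEquicontinuous fun i => Topf g (F i) := by
  have hω_dist : ∀ δ x y, dist x y ≤ δ → dist (deriv g x) (deriv g y) ≤ ω δ := fun δ x y h =>
    (dist_eq_norm _ _).trans_le (hω δ x y h)
  have hW : IsDiniModulus (modulusOfContinuity (deriv g)) :=
    isDiniModulus_modulusOfContinuity hω_dist hωD
  have hWg : ∀ x y, ‖deriv g x - deriv g y‖ ≤ modulusOfContinuity (deriv g) |x - y| :=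
    fun x y => (dist_eq_norm _ _).symm.trans_le (dist_le_modulusOfContinuity hω_dist le_rfl)
  exact ⟨⟨_, fun i => abs_Topf_le hg hper hc hW hWg (hF i) (hFqp i)⟩,
    uniformEquicontinuous_Topf hg hper hc hW hWg hF hFqp⟩

/-- The family `{T[fₙ]}` is uniformly bounded and equicontinuous on `[0, 2π]`. -/
theorem T_bounded_equicontinuous (l : ℝ) (hl : 0 < l) (L : NNReal)
    (g : ℝ → ℂ) (hg : ContDiff ℝ 1 g)
    (hper : ∀ s, g (s + l) = g s)
    (hunit : ∀ s, ‖deriv g s‖ = 1)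
    (ω : ℝ → ℝ)
    (hω : ∀ δ ≥ (0:ℝ), ∀ x y : ℝ, |x - y| ≤ δ → ‖deriv g x - deriv g y‖ ≤ ω δ)
    (hωD : ∃ k > (0:ℝ), IntegrableOn (fun t => ω t / t) (Ioc 0 k))
    (f : ℝ → ℝ) (hf : Monotone f) (hfl : LipschitzWith L f)
    (hfqp : ∀ t, f (t + 2 * π) = f t + l)
    (fn : ℕ → ℝ → ℝ) (hfn : ∀ n, Monotone (fn n))
    (hfnl : ∀ n, LipschitzWith L (fn n))
    (hfnqp : ∀ n t, fn n (t + 2 * π) = fn n t + l)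
    (hconv : TendstoUniformly fn f atTop) :
    (∃ C : ℝ, ∀ n : ℕ, ∀ τ ∈ Icc (0:ℝ) (2 * π), |Topf g (fn n) τ| ≤ C) ∧
    EquicontinuousOn (fun n => Topf g (fn n)) (Icc (0:ℝ) (2 * π)) := by
  obtain ⟨⟨C, hC⟩, hequi⟩ := T_bounded_equicontinuous_general (hg.differentiable one_ne_zero) hper
    (c := 1) (fun s => (hunit s).le) (fun δ x y h => hω δ ((abs_nonneg _).trans h) x y h) hωD
    hfnl hfnqp
  exact ⟨⟨C, fun n τ _ => hC n τ⟩, hequi.equicontinuous.equicontinuousOn _⟩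
end

section
/- Let F : 𝕋 → γ be an orientation-preserving Lipschitz weak homeomorphism of the unit circle onto a Dini-smooth Jordan curve γ bounding a domain D, and let w = P[F] be the Poisson extension of F to the unit disk. If the continuous function T(ζ) satisfying J_w(ζ) = |∂_t F(ζ)| T(ζ) a.e. on 𝕋 is strictly positive everywhere on 𝕋, then w is a diffeomorphism of the unit disk onto D. -/
open MeasureTheory Set Real

/-- The Poisson kernel `P(r,t) = (1−r²)/(2π(1−2r cos t + r²))`. -/
noncomputable def poissonKer (r t : ℝ) : ℝ :=
  (1 - r ^ 2) / (2 * π * (1 - 2 * r * Real.cos t + r ^ 2))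

/-- The Poisson extension `P[F](z)` of a `2π`-periodic boundary function `F : ℝ → ℂ`. -/
noncomputable def poissonExt (F : ℝ → ℂ) (z : ℂ) : ℂ :=
  ∫ t in (0:ℝ)..(2 * π), (poissonKer ‖z‖ (t - Complex.arg z) : ℂ) * F t

/-- The Jacobian determinant of `w : ℂ → ℂ` viewed as a map `ℝ² → ℝ²`. -/
noncomputable def Jac (w : ℂ → ℂ) (z : ℂ) : ℝ :=
  LinearMap.det (fderiv ℝ w z : ℂ →ₗ[ℝ] ℂ)

/-!
Write `w = h + conj k` with `h`, `k` holomorphic in the disk. In polar coordinates, the product of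
the radial derivative of `w` with the conjugate unit tangent of the curve has imaginary part tending
to `-T / (2π) < 0` at the circle, while the product with the angular derivative is almost a
nonnegative real. Two things follow on circles of radius close to `1`. First, `z * h'` stays in a
half-plane relative to the tangent; as the tangent of a Jordan curve turns exactly once
(Hopf's Umlaufsatz), `h'` has winding number `0` and hence no zeros. Second,
`‖k'‖ ^ 2 ≤ (1 + ε) * ‖h'‖ ^ 2`, so the maximum principle applied to `k' / h'` gives `‖k'‖ < ‖h'‖`:
equality would force the curve into a line, where `T` vanishes. Hence `w` is a sense-preserving
local diffeomorphism. Since the curve winds once around each point of `D`, the argument principle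
makes `w` a bijection onto `D`.
-/

open Filter Topology Metric Function ComplexConjugate
open Complex (I)

/-! ### Winding numbers -/

theorem sub_eq_sub_of_exp_eqOn {X : Type*} [TopologicalSpace X] {s : Set X}
    (hs : IsPreconnected s) {Λ M : X → ℂ} (hΛ : ContinuousOn Λ s) (hM : ContinuousOn M s)
    (h : ∀ x ∈ s, Complex.exp (Λ x) = Complex.exp (M x)) {x y : X} (hx : x ∈ s) (hy : y ∈ s) :
    Λ x - M x = Λ y - M y := by
  have hone (z : X) (hz : z ∈ s) : Complex.exp (Λ z - M z) = 1 := by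
    rw [Complex.exp_sub, h z hz, div_self (Complex.exp_ne_zero _)]
  exact Complex.isCoveringMap_exp.eqOn_of_comp_eqOn hs (hΛ.sub hM) continuousOn_const
    (fun z hz ↦ Subtype.ext ((hone z hz).trans (hone y hy).symm)) hy rfl hx

theorem sub_eq_sub_of_exp_eq {X : Type*} [TopologicalSpace X] [PreconnectedSpace X] {Λ M : X → ℂ}
    (hΛ : Continuous Λ) (hM : Continuous M) (h : ∀ x, Complex.exp (Λ x) = Complex.exp (M x))
    (x y : X) : Λ x - M x = Λ y - M y :=
  sub_eq_sub_of_exp_eqOn isPreconnected_univ hΛ.continuousOn hM.continuousOn (fun x _ ↦ h x)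
    (mem_univ x) (mem_univ y)

theorem exists_continuous_exp_eq {X : Type*} [TopologicalSpace X] [SimplyConnectedSpace X]
    [LocallyPathConnectedSpace X] {G : X → ℂ} (hG : Continuous G) (h0 : ∀ x, G x ≠ 0) :
    ∃ Λ : X → ℂ, Continuous Λ ∧ ∀ x, Complex.exp (Λ x) = G x := by
  obtain ⟨x₀⟩ := (inferInstance : Nonempty X)
  obtain ⟨Λ, ⟨-, hΛ⟩, -⟩ := Complex.isCoveringMapOn_exp.existsUnique_continuousMap_lifts
    ⟨G, hG⟩ (a₀ := x₀) (Complex.exp_log (h0 x₀)) h0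
  exact ⟨Λ, Λ.continuous, congrFun hΛ⟩

/-- The closed curve `c`, parametrized with period `T`, misses the origin and winds `n` times
around it. This is encoded by a continuous logarithm of `c` on the whole line which gains `2πi n`
over each period, so that it makes sense for curves which are merely continuous. -/
def HasWinding (c : ℝ → ℂ) (T : ℝ) (n : ℤ) : Prop :=
  ∃ Λ : ℝ → ℂ, Continuous Λ ∧ (∀ t, Complex.exp (Λ t) = c t) ∧
    ∀ t, Λ (t + T) = Λ t + n * (2 * π * I)

namespace HasWinding

variable {c d : ℝ → ℂ} {T : ℝ} {m n : ℤ}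

theorem continuous (hc : HasWinding c T n) : Continuous c := by
  obtain ⟨Λ, hΛ, hexp, -⟩ := hc
  simpa only [← funext hexp] using hΛ.cexp

theorem periodic (hc : HasWinding c T n) : Periodic c T := by
  obtain ⟨Λ, -, hexp, hadd⟩ := hc
  intro t
  rw [← hexp, hadd, (Complex.exp_periodic.int_mul n) (Λ t), hexp]

theorem ne_zero (hc : HasWinding c T n) (t : ℝ) : c t ≠ 0 := by
  obtain ⟨Λ, -, hexp, -⟩ := hc
  exact hexp t ▸ Complex.exp_ne_zero _

/-- The gain of a continuous logarithm over a period does not depend on the starting point. -/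
theorem of_exp_eq {Λ : ℝ → ℂ} (hΛ : Continuous Λ) (hexp : ∀ t, Complex.exp (Λ t) = c t)
    (hc : Periodic c T) {t₀ : ℝ} (h : Λ (t₀ + T) = Λ t₀ + n * (2 * π * I)) :
    HasWinding c T n := by
  refine ⟨Λ, hΛ, hexp, fun t ↦ ?_⟩
  have := sub_eq_sub_of_exp_eq (hΛ.comp (continuous_add_const T)) hΛ
    (fun s ↦ by rw [comp_apply, hexp, hexp, hc s]) t t₀
  simp only [comp_apply, h] at this
  linear_combination this

theorem mul (hc : HasWinding c T m) (hd : HasWinding d T n) :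
    HasWinding (fun t ↦ c t * d t) T (m + n) := by
  obtain ⟨Λ, hΛ, hΛexp, hΛadd⟩ := hc
  obtain ⟨M, hM, hMexp, hMadd⟩ := hd
  refine ⟨fun t ↦ Λ t + M t, hΛ.add hM, fun t ↦ by rw [Complex.exp_add, hΛexp, hMexp], fun t ↦ ?_⟩
  simp only [hΛadd, hMadd]
  push_cast
  ring

theorem inv (hc : HasWinding c T m) : HasWinding (fun t ↦ (c t)⁻¹) T (-m) := by
  obtain ⟨Λ, hΛ, hexp, hadd⟩ := hc
  refine ⟨fun t ↦ -Λ t, hΛ.neg, fun t ↦ by rw [Complex.exp_neg, hexp], fun t ↦ ?_⟩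
  simp only [hadd]
  push_cast
  ring

theorem comp {f : ℝ → ℝ} {S : ℝ} (hc : HasWinding c T n) (hf : Continuous f)
    (hfS : ∀ t, f (t + S) = f t + T) : HasWinding (fun t ↦ c (f t)) S n := by
  obtain ⟨Λ, hΛ, hexp, hadd⟩ := hc
  exact ⟨fun t ↦ Λ (f t), hΛ.comp hf, fun t ↦ hexp _, fun t ↦ by simp only [hfS, hadd]⟩

theorem unique (hc : HasWinding c T m) (hd : HasWinding c T n) : m = n := by
  obtain ⟨Λ, hΛ, hΛexp, hΛadd⟩ := hc
  obtain ⟨M, hM, hMexp, hMadd⟩ := hd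
  have := sub_eq_sub_of_exp_eq hΛ hM (fun t ↦ (hΛexp t).trans (hMexp t).symm) (0 + T) 0
  rw [hΛadd, hMadd] at this
  have key : (m : ℂ) * (2 * π * I) = n * (2 * π * I) := by linear_combination this
  exact_mod_cast mul_right_cancel₀ Complex.two_pi_I_ne_zero key

theorem const {a : ℂ} (ha : a ≠ 0) : HasWinding (fun _ ↦ a) T 0 :=
  ⟨fun _ ↦ Complex.log a, continuous_const, fun _ ↦ Complex.exp_log ha, by simp⟩

theorem of_mem_slitPlane (hc : Continuous c) (hT : Periodic c T)
    (h : ∀ t, c t ∈ Complex.slitPlane) : HasWinding c T 0 :=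
  ⟨fun t ↦ Complex.log (c t), hc.clog h,
    fun t ↦ Complex.exp_log (Complex.slitPlane_ne_zero (h t)), fun t ↦ by simp [hT t]⟩

theorem of_norm_sub_lt (hc : HasWinding c T n) (hd : Continuous d) (hT : Periodic d T)
    (h : ∀ t, ‖d t - c t‖ < ‖c t‖) : HasWinding d T n := by
  have hquot : HasWinding (fun t ↦ d t / c t) T 0 := by
    refine .of_mem_slitPlane (hd.div hc.continuous hc.ne_zero)
      (fun t ↦ by simp only [hT t, hc.periodic t]) fun t ↦ ?_
    have hlt : ‖(d t - c t) / c t‖ < 1 := by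
      rw [norm_div, div_lt_one (norm_pos_iff.2 (hc.ne_zero t))]
      exact h t
    simpa [sub_div, div_self (hc.ne_zero t)] using Complex.mem_slitPlane_of_norm_lt_one hlt
  simpa only [mul_div_cancel₀ _ (hc.ne_zero _), add_zero] using hc.mul hquot

theorem of_homotopy {H : ℝ → ℝ → ℂ} {a b : ℝ} (hab : a ≤ b)
    (hH : ContinuousOn (uncurry H) (Icc a b ×ˢ univ)) (h0 : ∀ ρ ∈ Icc a b, ∀ t, H ρ t ≠ 0)
    (hT : ∀ ρ ∈ Icc a b, Periodic (H ρ) T) (ha : HasWinding (H a) T n) :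
    HasWinding (H b) T n := by
  have hproj : Continuous fun x : ℝ × ℝ ↦ ((projIcc a b hab x.1 : ℝ), x.2) := by fun_prop
  obtain ⟨Λ, hΛ, hexp⟩ := exists_continuous_exp_eq
    (hH.comp_continuous hproj fun x ↦ ⟨Subtype.prop _, mem_univ _⟩)
    fun x ↦ h0 _ (Subtype.prop _) x.2
  have hshift (ρ t : ℝ) : Λ (ρ, t + T) - Λ (ρ, t) = n * (2 * π * I) := by
    obtain ⟨M, hM, hMexp, hMadd⟩ := ha
    have hΛM : Λ (a, 0 + T) - M (0 + T) = Λ (a, 0) - M 0 :=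
      sub_eq_sub_of_exp_eq (Λ := fun t ↦ Λ (a, t)) (by fun_prop) hM
        (fun t ↦ by rw [hexp, hMexp]; simp [uncurry]) _ _
    have := sub_eq_sub_of_exp_eq (Λ := fun x : ℝ × ℝ ↦ Λ (x.1, x.2 + T)) (by fun_prop) hΛ
      (fun x ↦ by rw [hexp, hexp]; exact hT _ (Subtype.prop _) _) (ρ, t) (a, 0)
    rw [hMadd] at hΛM
    linear_combination this + hΛM
  refine ⟨fun t ↦ Λ (b, t), by fun_prop, fun t ↦ ?_, fun t ↦ ?_⟩
  · rw [hexp]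
    simp [uncurry]
  · linear_combination hshift b t

end HasWinding

theorem hasWinding_circleMap_sub {c a : ℂ} {R : ℝ} (ha : a ∈ ball c R) :
    HasWinding (fun t ↦ circleMap c R t - a) (2 * π) 1 := by
  have hR : 0 < R := pos_of_mem_ball ha
  have hcenter : HasWinding (circleMap 0 R) (2 * π) 1 := by
    refine ⟨fun t ↦ Real.log R + t * I, by fun_prop, fun t ↦ ?_, fun t ↦ ?_⟩
    · rw [Complex.exp_add, ← Complex.ofReal_exp, Real.exp_log hR, circleMap_zero]
    · push_cast
      ring
  refine hcenter.of_norm_sub_lt (by fun_prop) (fun t ↦ by rw [periodic_circleMap c R t])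
    fun t ↦ ?_
  rw [norm_circleMap_zero, abs_of_pos hR, ← circleMap_sub_center, sub_sub_sub_cancel_left,
    norm_sub_rev, ← dist_eq_norm]
  exact ha

theorem hasWinding_zero_of_forall_mem_closedBall {W : ℂ → ℂ} {c : ℂ} {R : ℝ} (hR : 0 ≤ R)
    (hW : ContinuousOn W (closedBall c R)) (h0 : ∀ z ∈ closedBall c R, W z ≠ 0) :
    HasWinding (fun t ↦ W (circleMap c R t)) (2 * π) 0 := by
  have hmem {ρ : ℝ} (hρ : ρ ∈ Icc 0 R) (t : ℝ) : circleMap c ρ t ∈ closedBall c R :=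
    closedBall_subset_closedBall hρ.2 (circleMap_mem_closedBall c hρ.1 t)
  refine HasWinding.of_homotopy (H := fun ρ t ↦ W (circleMap c ρ t)) hR
    (hW.comp (Continuous.continuousOn ?_) fun x hx ↦ hmem hx.1 x.2) (fun ρ hρ t ↦ h0 _ (hmem hρ t))
    (fun ρ _ ↦ (periodic_circleMap c ρ).comp W) ?_
  · simp only [circleMap]
    fun_prop
  · simpa using HasWinding.const (h0 c (mem_closedBall_self hR))

/-! ### The argument principle for sense-preserving maps -/

/-- A real-linear map of the plane preserves orientation and is injective, expressed through its
Wirtinger coefficients `A = ∂L` and `B = ∂̄L`; equivalently, `|A|² - |B|² = det L > 0`. -/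
def IsSensePreserving (L : ℂ →L[ℝ] ℂ) : Prop :=
  ∃ A B : ℂ, ‖B‖ < ‖A‖ ∧ ∀ v, L v = A * v + B * conj v

namespace IsSensePreserving

variable {L : ℂ →L[ℝ] ℂ}

theorem const_smul (hL : IsSensePreserving L) {a : ℂ} (ha : a ≠ 0) :
    IsSensePreserving (a • L) := by
  obtain ⟨A, B, hAB, hLv⟩ := hL
  refine ⟨a * A, a * B, ?_, fun v ↦ ?_⟩
  · rw [norm_mul, norm_mul]
    exact mul_lt_mul_of_pos_left hAB (norm_pos_iff.2 ha)
  · rw [smul_apply, hLv, smul_eq_mul]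
    ring

theorem exists_antilipschitzWith (hL : IsSensePreserving L) : ∃ K, AntilipschitzWith K L := by
  obtain ⟨A, B, hAB, hLv⟩ := hL
  have hpos : 0 < ‖A‖ - ‖B‖ := sub_pos.2 hAB
  refine ⟨.mk (‖A‖ - ‖B‖)⁻¹ (inv_nonneg.2 hpos.le),
    AddMonoidHomClass.antilipschitz_of_bound L fun v ↦ ?_⟩
  have := norm_sub_le_norm_add (A * v) (B * conj v)
  rw [norm_mul, norm_mul, RCLike.norm_conj] at this
  rw [hLv, NNReal.coe_mk, ← div_eq_inv_mul, le_div_iff₀ hpos]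
  linarith

theorem injective (hL : IsSensePreserving L) : Injective L :=
  let ⟨_, hK⟩ := hL.exists_antilipschitzWith
  hK.injective

theorem map_ne_zero (hL : IsSensePreserving L) {v : ℂ} (hv : v ≠ 0) : L v ≠ 0 :=
  (map_ne_zero_iff L hL.injective).2 hv

theorem hasWinding (hL : IsSensePreserving L) {c a : ℂ} {R : ℝ} (ha : a ∈ ball c R) :
    HasWinding (fun t ↦ L (circleMap c R t - a)) (2 * π) 1 := by
  obtain ⟨A, B, hAB, hLv⟩ := hL
  have hA : A ≠ 0 := norm_pos_iff.1 ((norm_nonneg B).trans_lt hAB)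
  have hmain : HasWinding (fun t ↦ A * (circleMap c R t - a)) (2 * π) 1 := by
    simpa using (HasWinding.const hA).mul (hasWinding_circleMap_sub ha)
  refine hmain.of_norm_sub_lt (by fun_prop) (fun t ↦ by simp only [periodic_circleMap c R t])
    fun t ↦ ?_
  rw [hLv, add_sub_cancel_left, norm_mul, norm_mul, RCLike.norm_conj]
  exact mul_lt_mul_of_pos_right hAB
    (norm_pos_iff.2 (sub_ne_zero.2 (circleMap_ne_mem_ball ha t)))

end IsSensePreserving

section DivFDeriv

variable {W : ℂ → ℂ} {L : ℂ →L[ℝ] ℂ} {a : ℂ}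

theorem tendsto_div_fderiv (hW : HasFDerivAt W L a) (ha : W a = 0)
    (hL : ∃ K, AntilipschitzWith K L) : Tendsto (fun z ↦ W z / L (z - a)) (𝓝[≠] a) (𝓝 1) := by
  obtain ⟨K, hK⟩ := hL
  have hO : (fun z ↦ z - a) =O[𝓝[≠] a] fun z ↦ L (z - a) :=
    .of_bound K (.of_forall fun z ↦ by simpa using hK.le_mul_dist (z - a) 0)
  have ho := (hW.isLittleO.mono nhdsWithin_le_nhds).trans_isBigO hO
  rw [← zero_add (1 : ℂ)]
  refine (ho.tendsto_div_nhds_zero.add_const 1).congr' ?_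
  filter_upwards [self_mem_nhdsWithin] with z hz
  have : L (z - a) ≠ 0 := (map_ne_zero_iff L hK.injective).2 (sub_ne_zero.2 hz)
  rw [ha, sub_zero, sub_div, div_self this, sub_add_cancel]

theorem continuousOn_update_div_fderiv {s : Set ℂ} (hWs : ContinuousOn W s)
    (hW : HasFDerivAt W L a) (ha : W a = 0) (hL : ∃ K, AntilipschitzWith K L) :
    ContinuousOn (update (fun z ↦ W z / L (z - a)) a 1) s := by
  refine continuousOn_update_iff.2 ⟨?_, fun _ ↦ (tendsto_div_fderiv hW ha hL).mono_left
    (nhdsWithin_mono _ fun z hz ↦ hz.2)⟩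
  obtain ⟨K, hK⟩ := hL
  exact (hWs.mono sdiff_subset).div (by fun_prop) fun z hz ↦
    (map_ne_zero_iff L hK.injective).2 (sub_ne_zero.2 hz.2)

end DivFDeriv

section ArgumentPrinciple

variable {W : ℂ → ℂ} {c : ℂ} {R : ℝ}

theorem exists_sensePreserving_hasFDerivAt_update_div {a z : ℂ} {L M : ℂ →L[ℝ] ℂ}
    (hL : IsSensePreserving L) (hM : IsSensePreserving M) (hW : HasFDerivAt W M z) (h0 : W z = 0)
    (hza : z ≠ a) : ∃ N, IsSensePreserving N ∧
      HasFDerivAt (update (fun z ↦ W z / L (z - a)) a 1) N z := by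
  have hLz : L (z - a) ≠ 0 := hL.map_ne_zero (sub_ne_zero.2 hza)
  have hinv : DifferentiableAt ℝ (fun y ↦ (L (y - a))⁻¹) z := by fun_prop (disch := assumption)
  refine ⟨(L (z - a))⁻¹ • M, hM.const_smul (inv_ne_zero hLz), ?_⟩
  have := hW.mul hinv.hasFDerivAt
  rw [h0, zero_smul, zero_add] at this
  refine this.congr_of_eventuallyEq ?_
  filter_upwards [isOpen_ne.mem_nhds hza] with y hy
  rw [update_of_ne hy, div_eq_mul_inv, Pi.mul_apply]

/-- Zeros are divided out one at a time: dividing by the differential at a zero leaves a function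
of the same kind, and each such factor winds once around the origin. -/
theorem hasWinding_card_of_forall_mem_iff (hR : 0 ≤ R) (Z : Finset ℂ)
    (hW : ContinuousOn W (closedBall c R)) (hZ : ∀ z ∈ closedBall c R, W z = 0 ↔ z ∈ Z)
    (hZR : ∀ z ∈ Z, z ∈ ball c R)
    (hd : ∀ z ∈ Z, ∃ L, IsSensePreserving L ∧ HasFDerivAt W L z) :
    HasWinding (fun t ↦ W (circleMap c R t)) (2 * π) Z.card := by
  induction Z using Finset.induction_on generalizing W with
  | empty => exact hasWinding_zero_of_forall_mem_closedBall hR hW fun z hz ↦ by simp [hZ z hz]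
  | insert a Z ha ih =>
    simp only [Finset.forall_mem_insert] at hZR hd
    obtain ⟨⟨haR, hZR⟩, ⟨L, hL, hLW⟩, hd⟩ := hZR, hd
    have hWa : W a = 0 := (hZ a (ball_subset_closedBall haR)).2 (Finset.mem_insert_self a Z)
    have hzero (z : ℂ) (hz : z ∈ Z) : W z = 0 :=
      (hZ z (ball_subset_closedBall (hZR z hz))).2 (Finset.mem_insert_of_mem hz)
    have hquot := ih (W := update (fun z ↦ W z / L (z - a)) a 1)
      (continuousOn_update_div_fderiv hW hLW hWa hL.exists_antilipschitzWith) (fun z hz ↦ ?_) hZR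
      fun z hz ↦ ?_
    · have hcircle (t : ℝ) : circleMap c R t ≠ a := circleMap_ne_mem_ball haR t
      have := hquot.mul (hL.hasWinding haR)
      rw [Finset.card_insert_of_notMem ha]
      simpa [-map_sub, update_of_ne (hcircle _), hL.map_ne_zero (sub_ne_zero.2 (hcircle _))]
        using this
    · obtain rfl | hza := eq_or_ne z a
      · simp [ha]
      · simp [-map_sub, hL.map_ne_zero (sub_ne_zero.2 hza), hZ z hz, hza]
    · obtain ⟨M, hM, hMW⟩ := hd z hz
      exact exists_sensePreserving_hasFDerivAt_update_div hL hM hMW (hzero z hz)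
        (ne_of_mem_of_not_mem hz ha)

theorem finite_zeros_of_isCompact {E F : Type*} [NormedAddCommGroup E] [NormedSpace ℝ E]
    [NormedAddCommGroup F] [NormedSpace ℝ F] {W : E → F} {K : Set E} (hK : IsCompact K)
    (hW : ContinuousOn W K) (hd : ∀ z ∈ K, W z = 0 → ∃ L : E →L[ℝ] F,
      (∃ C, AntilipschitzWith C L) ∧ HasFDerivAt W L z) : {z ∈ K | W z = 0}.Finite := by
  by_contra hinf
  obtain ⟨z, hz, hacc⟩ :=
    Set.Infinite.exists_accPt_of_subset_isCompact hinf hK fun z hz ↦ hz.1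
  have hclosed : IsClosed {z ∈ K | W z = 0} := hW.preimage_isClosed_of_isClosed hK.isClosed
    isClosed_singleton
  obtain ⟨L, hL, hLW⟩ := hd z hz
    ((hclosed.closure_subset (mem_closure_iff_clusterPt.2 hacc.clusterPt)).2)
  obtain ⟨y, hy, hy0⟩ :=
    ((accPt_iff_frequently_nhdsNE.1 hacc).and_eventually (hLW.eventually_ne hL)).exists
  exact hy0 hy.2

theorem finite_zeros_and_hasWinding_ncard (hR : 0 ≤ R) (hW : ContinuousOn W (closedBall c R))
    (h0 : ∀ z ∈ sphere c R, W z ≠ 0)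
    (hd : ∀ z ∈ ball c R, W z = 0 → ∃ L, IsSensePreserving L ∧ HasFDerivAt W L z) :
    {z ∈ ball c R | W z = 0}.Finite ∧
      HasWinding (fun t ↦ W (circleMap c R t)) (2 * π) {z ∈ ball c R | W z = 0}.ncard := by
  have hball {z : ℂ} (hz : z ∈ closedBall c R) (hWz : W z = 0) : z ∈ ball c R :=
    (ball_union_sphere.ge hz).resolve_right fun h ↦ h0 z h hWz
  have hZ : {z ∈ ball c R | W z = 0} = {z ∈ closedBall c R | W z = 0} := by
    ext z
    exact ⟨fun hz ↦ ⟨ball_subset_closedBall hz.1, hz.2⟩, fun hz ↦ ⟨hball hz.1 hz.2, hz.2⟩⟩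
  have hfin : {z ∈ ball c R | W z = 0}.Finite :=
    hZ ▸ finite_zeros_of_isCompact (isCompact_closedBall c R) hW fun z hz hWz ↦
      let ⟨L, hL, hLW⟩ := hd z (hball hz hWz) hWz
      ⟨L, hL.exists_antilipschitzWith, hLW⟩
  refine ⟨hfin, ?_⟩
  rw [ncard_eq_toFinset_card _ hfin]
  refine hasWinding_card_of_forall_mem_iff hR _ hW (fun z hz ↦ ?_) (fun z hz ↦ ?_) fun z hz ↦ ?_
  all_goals simp only [Finite.mem_toFinset, mem_ofPred_eq] at *
  · exact ⟨fun h ↦ ⟨hball hz h, h⟩, And.right⟩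
  · exact hz.1
  · exact hd z hz.1 hz.2

end ArgumentPrinciple

/-! ### Holomorphic functions with boundary winding number zero -/

theorem fourier_coe_eq_circleMap_zpow (n : ℤ) (t : ℝ) :
    fourier n (t : AddCircle (2 * π)) = circleMap 0 1 t ^ n := by
  have hπ : (π : ℂ) ≠ 0 := by exact_mod_cast Real.pi_ne_zero
  rw [fourier_coe_apply, circleMap_zero, Complex.ofReal_one, one_mul, ← Complex.exp_int_mul]
  congr 1
  push_cast
  field_simp

theorem exists_differentiable_add_conj_of_mem_span_fourier {q : C(AddCircle (2 * π), ℂ)}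
    (hq : q ∈ Submodule.span ℂ (range (@fourier (2 * π)))) :
    ∃ a b : ℂ → ℂ, Differentiable ℂ a ∧ Differentiable ℂ b ∧
      ∀ t : ℝ, q t = a (circleMap 0 1 t) + conj (b (circleMap 0 1 t)) := by
  induction hq using Submodule.span_induction with
  | mem x hx =>
    obtain ⟨n, rfl⟩ := hx
    obtain ⟨k, rfl | rfl⟩ := n.eq_nat_or_neg
    · exact ⟨fun z ↦ z ^ k, fun _ ↦ 0, by fun_prop, by fun_prop, fun t ↦ by
        rw [fourier_coe_eq_circleMap_zpow]; simp⟩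
    · refine ⟨fun _ ↦ 0, fun z ↦ z ^ k, by fun_prop, by fun_prop, fun t ↦ ?_⟩
      have hinv : (circleMap 0 1 t)⁻¹ = conj (circleMap 0 1 t) :=
        Complex.inv_eq_conj (by simp)
      rw [fourier_coe_eq_circleMap_zpow, zpow_neg, zpow_natCast, ← inv_pow, hinv, map_pow, zero_add]
  | zero => exact ⟨0, 0, differentiable_const 0, differentiable_const 0, fun t ↦ by simp⟩
  | add x y _ _ hx hy =>
    obtain ⟨a, b, ha, hb, hx⟩ := hx
    obtain ⟨a', b', ha', hb', hy⟩ := hy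
    refine ⟨a + a', b + b', ha.add ha', hb.add hb', fun t ↦ ?_⟩
    simp only [ContinuousMap.add_apply, hx, hy, Pi.add_apply, map_add]
    ring
  | smul μ x _ hx =>
    obtain ⟨a, b, ha, hb, hx⟩ := hx
    refine ⟨fun z ↦ μ * a z, fun z ↦ conj μ * b z, by fun_prop, by fun_prop, fun t ↦ ?_⟩
    simp only [ContinuousMap.smul_apply, hx, smul_eq_mul, map_mul, Complex.conj_conj]
    ring

theorem exists_differentiable_abs_sub_re_lt {ψ : ℝ → ℝ} (hψ : Continuous ψ)
    (hper : Periodic ψ (2 * π)) {ε : ℝ} (hε : 0 < ε) :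
    ∃ p : ℂ → ℂ, Differentiable ℂ p ∧ ∀ t : ℝ, |ψ t - (p (circleMap 0 1 t)).re| < ε := by
  have : Fact (0 < 2 * π) := ⟨Real.two_pi_pos⟩
  have hperC : Periodic (fun t ↦ (ψ t : ℂ)) (2 * π) := hper.comp Complex.ofReal
  let Ψ : C(AddCircle (2 * π), ℂ) :=
    ⟨hperC.lift, continuous_coinduced_dom.2 (Complex.continuous_ofReal.comp hψ)⟩
  have hmem : Ψ ∈ (Submodule.span ℂ (range (@fourier (2 * π)))).topologicalClosure :=
    span_fourier_closure_eq_top (T := 2 * π) ▸ Submodule.mem_top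
  obtain ⟨q, hq, hqε⟩ := Metric.mem_closure_iff.1 hmem ε hε
  obtain ⟨a, b, ha, hb, hab⟩ := exists_differentiable_add_conj_of_mem_span_fourier hq
  refine ⟨a + b, ha.add hb, fun t ↦ ?_⟩
  have hlt : ‖(Ψ - q) t‖ < ε := ((Ψ - q).norm_coe_le_norm t).trans_lt (by rwa [← dist_eq_norm])
  have hre : ((Ψ - q) t).re = ψ t - ((a + b) (circleMap 0 1 t)).re := by
    rw [ContinuousMap.sub_apply, hab, show Ψ t = (ψ t : ℂ) from rfl]
    simp
  exact hre ▸ (Complex.abs_re_le_norm _).trans_lt hlt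

theorem le_re_of_forall_mem_frontier_le_re {U : Set ℂ} (hU : Bornology.IsBounded U) {H : ℂ → ℂ}
    (hH : DiffContOnCl ℂ H U) {m : ℝ} (hm : ∀ z ∈ frontier U, m ≤ (H z).re) {z : ℂ}
    (hz : z ∈ closure U) : m ≤ (H z).re := by
  have hexp : DiffContOnCl ℂ (fun z ↦ Complex.exp (-H z)) U :=
    Complex.differentiable_exp.comp_diffContOnCl hH.neg
  have := Complex.norm_le_of_forall_mem_frontier_norm_le hU hexp (C := Real.exp (-m))
    (fun y hy ↦ by simpa [Complex.norm_exp] using hm y hy) hz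
  simpa [Complex.norm_exp] using this

theorem ne_zero_of_re_pos_on_frontier {U : Set ℂ} (hU : Bornology.IsBounded U) {H : ℂ → ℂ}
    (hH : DiffContOnCl ℂ H U) (hpos : ∀ z ∈ frontier U, 0 < (H z).re) {z : ℂ}
    (hz : z ∈ closure U) : H z ≠ 0 := by
  intro h0
  obtain hempty | hne := (frontier U).eq_empty_or_nonempty
  · have := le_re_of_forall_mem_frontier_le_re hU hH (m := 1) (by simp [hempty]) hz
    norm_num [h0] at this
  obtain ⟨z₀, hz₀, hmin⟩ := (hU.isCompact_closure.of_isClosed_subset isClosed_frontier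
    frontier_subset_closure).exists_isMinOn hne (f := fun z ↦ (H z).re)
    (Complex.continuous_re.comp_continuousOn (hH.continuousOn.mono frontier_subset_closure))
  have := le_re_of_forall_mem_frontier_le_re hU hH (fun y hy ↦ hmin hy) hz
  rw [h0] at this
  exact this.not_gt (hpos z₀ hz₀)

/-- If `ψ` is the imaginary part of a logarithm of `H` on the circle and `Re p` approximates `ψ`,
then `H * exp (-i p)` has positive real part on the circle, hence no zeros inside. -/
theorem ne_zero_of_hasWinding_zero {H : ℂ → ℂ} {c : ℂ} {R : ℝ} (hR : 0 < R)
    (hH : DiffContOnCl ℂ H (ball c R))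
    (hw : HasWinding (fun t ↦ H (circleMap c R t)) (2 * π) 0) {z : ℂ} (hz : z ∈ closedBall c R) :
    H z ≠ 0 := by
  obtain ⟨Λ, hΛ, hexp, hper⟩ := hw
  obtain ⟨p, hp, happ⟩ := exists_differentiable_abs_sub_re_lt (ψ := fun t ↦ (Λ t).im)
    (by fun_prop) (fun t ↦ by simp [hper]) Real.pi_div_two_pos
  have hG : DiffContOnCl ℂ (fun z ↦ Complex.exp (-(I * p ((z - c) / R)))) (ball c R) :=
    Differentiable.diffContOnCl (by fun_prop)
  refine left_ne_zero_of_mul (ne_zero_of_re_pos_on_frontier isBounded_ball (hH.smul hG)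
    (fun y hy ↦ ?_) (by rwa [closure_ball _ hR.ne']))
  rw [frontier_ball _ hR.ne', ← abs_of_pos hR, ← range_circleMap] at hy
  obtain ⟨t, rfl⟩ := hy
  have hlog : H (circleMap c R t) = Complex.exp (Λ t) := (hexp t).symm
  have hcircle : (circleMap c R t - c) / R = circleMap 0 1 t := by
    have : (R : ℂ) ≠ 0 := by exact_mod_cast hR.ne'
    simp [circleMap, this]
  rw [smul_eq_mul, hlog, hcircle, ← Complex.exp_add, Complex.exp_re]
  refine mul_pos (Real.exp_pos _) (Real.cos_pos_of_mem_Ioo ?_)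
  have := abs_lt.1 (happ t)
  simp only [Complex.add_im, Complex.neg_im, Complex.mul_im, Complex.I_re, Complex.I_im, zero_mul,
    one_mul, zero_add]
  constructor <;> linarith [this.1, this.2]

/-! ### Jordan curves parametrized by arc length -/

/-- `g` is the arc-length parametrization, with period `l`, of a Jordan curve of class `C¹`. -/
structure IsUnitSpeedJordan (g : ℝ → ℂ) (l : ℝ) : Prop where
  pos : 0 < l
  contDiff : ContDiff ℝ 1 g
  periodic : Periodic g l
  norm_deriv : ∀ s, ‖deriv g s‖ = 1
  injOn : InjOn g (Ico 0 l)

/-- `g s₀` is a lowest point of the curve `g`, which is traversed there in the direction `1`. For a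
Jordan curve of unit speed this is a normalization of the positive orientation. -/
structure IsLowestPoint (g : ℝ → ℂ) (s₀ : ℝ) : Prop where
  im_le : ∀ s, (g s₀).im ≤ (g s).im
  deriv_eq_one : deriv g s₀ = 1

/-- The mean of `g'` over the segment from `s` to `s + h`, which extends the difference quotient
`(g (s + h) - g s) / h` continuously to `h = 0`. -/
noncomputable def avgDeriv (g : ℝ → ℂ) (s h : ℝ) : ℂ := ∫ x in (0 : ℝ)..1, deriv g (s + h * x)

/-- For a curve `g` of period `l` this is the chord from `g s` to `g (s + h)`, scaled by the factor
`l / (h (l - h))`; it extends continuously to `h = 0` and `h = l`. -/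
noncomputable def scaledChord (g : ℝ → ℂ) (l s h : ℝ) : ℂ := avgDeriv g s h - avgDeriv g s (h - l)

/-- The point at signed distance `ε` from `g s` on the normal line of the unit speed curve `g`;
positive `ε` lie to the left of the curve. -/
noncomputable def normalPoint (g : ℝ → ℂ) (s ε : ℝ) : ℂ := g s + ε * I * deriv g s

/-- No normal segment of `g` of length `ε₀`, on either side, returns to the curve. -/
structure IsCollarWidth (g : ℝ → ℂ) (ε₀ : ℝ) : Prop where
  pos : 0 < ε₀
  normalPoint_notMem_range : ∀ s ε, ε ≠ 0 → |ε| ≤ ε₀ → normalPoint g s ε ∉ range g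

namespace IsUnitSpeedJordan

variable {g : ℝ → ℂ} {l : ℝ}

theorem continuous (hg : IsUnitSpeedJordan g l) : Continuous g := hg.contDiff.continuous

theorem continuous_deriv (hg : IsUnitSpeedJordan g l) : Continuous (deriv g) :=
  hg.contDiff.continuous_deriv le_rfl

theorem hasDerivAt (hg : IsUnitSpeedJordan g l) (s : ℝ) : HasDerivAt g (deriv g s) s :=
  (hg.contDiff.differentiable one_ne_zero s).hasDerivAt

theorem deriv_ne_zero (hg : IsUnitSpeedJordan g l) (s : ℝ) : deriv g s ≠ 0 :=
  norm_ne_zero_iff.1 (hg.norm_deriv s ▸ one_ne_zero)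

theorem periodic_deriv (hg : IsUnitSpeedJordan g l) : Periodic (deriv g) l := fun s ↦ by
  rw [← deriv_comp_add_const, funext hg.periodic]

theorem exists_add_zsmul_eq (hg : IsUnitSpeedJordan g l) {s t : ℝ} (h : g s = g t) :
    ∃ n : ℤ, t = s + n • l := by
  have hmod (s : ℝ) : g (toIcoMod hg.pos 0 s) = g s := by
    rw [← self_sub_toIcoDiv_zsmul]
    exact hg.periodic.sub_zsmul_eq _
  have hmem (s : ℝ) : toIcoMod hg.pos 0 s ∈ Ico 0 l := by simpa using toIcoMod_mem_Ico hg.pos 0 s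
  obtain ⟨n, hn⟩ := (toIcoMod_eq_toIcoMod hg.pos).1
    (hg.injOn (hmem s) (hmem t) (by rw [hmod, hmod, h]))
  exact ⟨n, by rw [← hn, add_sub_cancel]⟩

theorem add_ne (hg : IsUnitSpeedJordan g l) (s : ℝ) {h : ℝ} (hh : h ∈ Ioo 0 l) :
    g (s + h) ≠ g s := by
  intro he
  obtain ⟨n, hn⟩ := hg.exists_add_zsmul_eq he.symm
  rw [add_right_inj, zsmul_eq_mul] at hn
  have h0 : (0 : ℝ) < n := pos_of_mul_pos_left (hn ▸ hh.1) hg.pos.le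
  have h1 : (n : ℝ) < 1 := by
    have := hn ▸ hh.2
    rwa [mul_lt_iff_lt_one_left hg.pos] at this
  norm_cast at h0 h1
  lia

theorem continuous_avgDeriv (hg : IsUnitSpeedJordan g l) : Continuous (uncurry (avgDeriv g)) := by
  have := hg.continuous_deriv
  exact intervalIntegral.continuous_parametric_intervalIntegral_of_continuous'
    (f := fun (p : ℝ × ℝ) x ↦ deriv g (p.1 + p.2 * x)) (by fun_prop) 0 1

theorem mul_avgDeriv (hg : IsUnitSpeedJordan g l) (s h : ℝ) :
    (h : ℂ) * avgDeriv g s h = g (s + h) - g s := by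
  rw [avgDeriv, ← Complex.real_smul, intervalIntegral.smul_integral_comp_add_mul,
    intervalIntegral.integral_deriv_eq_sub (fun x _ ↦ (hg.hasDerivAt x).differentiableAt)
      (hg.continuous_deriv.intervalIntegrable _ _), mul_zero, add_zero, mul_one]

theorem avgDeriv_zero (g : ℝ → ℂ) (s : ℝ) : avgDeriv g s 0 = deriv g s := by simp [avgDeriv]

theorem continuous_scaledChord (hg : IsUnitSpeedJordan g l) :
    Continuous (uncurry (scaledChord g l)) :=
  hg.continuous_avgDeriv.sub
    (hg.continuous_avgDeriv.comp (g := uncurry (avgDeriv g))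
      (f := fun p : ℝ × ℝ ↦ (p.1, p.2 - l)) (by fun_prop))

theorem mul_scaledChord (hg : IsUnitSpeedJordan g l) (s h : ℝ) :
    (h : ℂ) * (l - h) * scaledChord g l s h = l * (g (s + h) - g s) := by
  have h₁ := hg.mul_avgDeriv s h
  have h₂ := hg.mul_avgDeriv s (h - l)
  rw [← add_sub_assoc, hg.periodic.sub_eq] at h₂
  push_cast at h₂
  rw [scaledChord]
  linear_combination ((l : ℂ) - h) * h₁ + h * h₂

theorem avgDeriv_period (hg : IsUnitSpeedJordan g l) (s : ℝ) : avgDeriv g s l = 0 := by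
  have := hg.mul_avgDeriv s l
  rw [hg.periodic, sub_self] at this
  exact (mul_eq_zero_iff_left (by exact_mod_cast hg.pos.ne')).1 this

theorem avgDeriv_neg_period (hg : IsUnitSpeedJordan g l) (s : ℝ) : avgDeriv g s (-l) = 0 := by
  have := hg.mul_avgDeriv s (-l)
  rw [← sub_eq_add_neg, hg.periodic.sub_eq, sub_self] at this
  exact (mul_eq_zero_iff_left (by exact_mod_cast neg_ne_zero.2 hg.pos.ne')).1 this

theorem scaledChord_zero (hg : IsUnitSpeedJordan g l) (s : ℝ) :
    scaledChord g l s 0 = deriv g s := by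
  rw [scaledChord, avgDeriv_zero, zero_sub, hg.avgDeriv_neg_period, sub_zero]

theorem scaledChord_period (hg : IsUnitSpeedJordan g l) (s : ℝ) :
    scaledChord g l s l = -deriv g s := by
  rw [scaledChord, sub_self, avgDeriv_zero, hg.avgDeriv_period, zero_sub]

theorem periodic_scaledChord (hg : IsUnitSpeedJordan g l) (h : ℝ) :
    Periodic (fun s ↦ scaledChord g l s h) l := fun s ↦ by
  simp only [scaledChord, avgDeriv, add_right_comm s l, hg.periodic_deriv _]

theorem scaledChord_ne_zero (hg : IsUnitSpeedJordan g l) (s : ℝ) {h : ℝ} (hh : h ∈ Icc 0 l) :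
    scaledChord g l s h ≠ 0 := by
  obtain rfl | rfl | hh := eq_endpoints_or_mem_Ioo_of_mem_Icc hh
  · exact hg.scaledChord_zero s ▸ hg.deriv_ne_zero s
  · exact hg.scaledChord_period s ▸ neg_ne_zero.2 (hg.deriv_ne_zero s)
  · have : (l : ℂ) * (g (s + h) - g s) ≠ 0 :=
      mul_ne_zero (by exact_mod_cast hg.pos.ne') (sub_ne_zero.2 (hg.add_ne s hh))
    rw [← hg.mul_scaledChord] at this
    exact right_ne_zero_of_mul this

theorem scaledChord_add_sub (hg : IsUnitSpeedJordan g l) (s : ℝ) {h : ℝ} (hh : h ∈ Icc 0 l) :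
    scaledChord g l (s + h) (l - h) = -scaledChord g l s h := by
  obtain rfl | rfl | hh := eq_endpoints_or_mem_Ioo_of_mem_Icc hh
  · simp [hg.scaledChord_zero, hg.scaledChord_period]
  · simp [hg.scaledChord_zero, hg.scaledChord_period, hg.periodic_deriv s]
  have h₁ := hg.mul_scaledChord s h
  have h₂ := hg.mul_scaledChord (s + h) (l - h)
  rw [add_add_sub_cancel, hg.periodic] at h₂
  push_cast at h₂
  have hne : (h : ℂ) * (l - h) ≠ 0 := by
    exact_mod_cast mul_ne_zero hh.1.ne' (sub_pos.2 hh.2).ne'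
  refine mul_left_cancel₀ hne ?_
  linear_combination h₂ + h₁

end IsUnitSpeedJordan

/-! ### The Umlaufsatz -/

theorem neg_I_mul_mem_slitPlane {w : ℂ} (hw : w ≠ 0) (him : 0 ≤ w.im) :
    -I * w ∈ Complex.slitPlane := by
  simp only [Complex.mem_slitPlane_iff, neg_mul, Complex.neg_re, Complex.neg_im, Complex.I_mul_re,
    Complex.I_mul_im, neg_neg, neg_ne_zero]
  by_contra! h
  exact hw (Complex.ext h.2 (h.1.antisymm him))

theorem exists_forall_sub_mul_mem_slitPlane {X : Type*} [TopologicalSpace X] [T2Space X] {K : Set X}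
    (hK : IsCompact K) {u : X → ℝ} {v : X → ℂ} (hu : ContinuousOn u K) (hv : ContinuousOn v K)
    (h : ∀ x ∈ K, (v x).re = 0 → 0 < u x) :
    ∃ ε₀ > (0 : ℝ), ∀ ε ≠ 0, |ε| ≤ ε₀ → ∀ x ∈ K, u x - ε * I * v x ∈ Complex.slitPlane := by
  obtain ⟨C, hC⟩ := hK.exists_bound_of_continuousOn hv
  have hK₀ : IsCompact {x ∈ K | (v x).re = 0} :=
    hK.of_isClosed_subset (ContinuousOn.preimage_isClosed_of_isClosed (f := fun x ↦ (v x).re)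
      (by fun_prop) hK.isClosed isClosed_singleton) (sep_subset _ _)
  obtain ⟨σ, hσ, hσu⟩ := hK₀.exists_forall_le' (hu.mono (sep_subset _ _))
    (fun x hx ↦ h x hx.1 hx.2)
  refine ⟨σ / (|C| + 1), by positivity, fun ε hε₀ hε x hx ↦ ?_⟩
  simp only [Complex.mem_slitPlane_iff, mul_assoc, Complex.sub_re, Complex.sub_im,
    Complex.ofReal_re, Complex.ofReal_im, Complex.re_ofReal_mul, Complex.im_ofReal_mul,
    Complex.I_mul_re, Complex.I_mul_im, zero_sub, neg_ne_zero]
  obtain hre | hre := eq_or_ne (v x).re 0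
  · left
    have him : |(v x).im| < |C| + 1 :=
      ((Complex.abs_im_le_norm (v x)).trans ((hC x hx).trans (le_abs_self C))).trans_lt
        (lt_add_one _)
    have hlt : |ε * (v x).im| < σ := by
      rw [abs_mul]
      exact (mul_lt_mul_of_pos_left him (abs_pos.2 hε₀)).trans_le
        ((le_div_iff₀ (by positivity)).1 hε)
    linarith [hσu x ⟨hx, hre⟩, neg_lt_of_abs_lt hlt]
  · exact .inr (mul_ne_zero hε₀ hre)

namespace IsUnitSpeedJordan

variable {g : ℝ → ℂ} {l s₀ : ℝ}

theorem neg_I_mul_scaledChord_mem_slitPlane (hg : IsUnitSpeedJordan g l) (hs₀ : IsLowestPoint g s₀)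
    {h : ℝ} (hh : h ∈ Icc 0 l) : -I * scaledChord g l s₀ h ∈ Complex.slitPlane := by
  refine neg_I_mul_mem_slitPlane (hg.scaledChord_ne_zero s₀ hh) ?_
  obtain rfl | rfl | hh := eq_endpoints_or_mem_Ioo_of_mem_Icc hh
  · simp [hg.scaledChord_zero, hs₀.deriv_eq_one]
  · simp [hg.scaledChord_period, hs₀.deriv_eq_one]
  have him : h * (l - h) * (scaledChord g l s₀ h).im = l * ((g (s₀ + h)).im - (g s₀).im) := by
    have := congrArg Complex.im (hg.mul_scaledChord s₀ h)
    rwa [← Complex.ofReal_sub, ← Complex.ofReal_mul, Complex.im_ofReal_mul, Complex.im_ofReal_mul,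
      Complex.sub_im] at this
  have : 0 ≤ h * (l - h) * (scaledChord g l s₀ h).im :=
    him ▸ mul_nonneg hg.pos.le (sub_nonneg.2 (hs₀.im_le _))
  exact nonneg_of_mul_nonneg_right this (mul_pos hh.1 (sub_pos.2 hh.2))

/-- The argument of the chord from `s₀` to `s₀ + h` increases by `π` as `h` runs from `0` to `l`,
since the curve stays above `g s₀`; by symmetry so does that of the chord from `s₀ + h` to
`s₀ + l`. Both together are homotopic to the tangent. -/
theorem hasWinding_deriv (hg : IsUnitSpeedJordan g l) (hs₀ : IsLowestPoint g s₀) :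
    HasWinding (deriv g) l 1 := by
  have hl := hg.pos.le
  have hchord := hg.continuous_scaledChord
  have h0 : (0 : ℝ) ∈ Icc 0 l := left_mem_Icc.2 hl
  have hend : l ∈ Icc 0 l := right_mem_Icc.2 hl
  obtain ⟨Λ, hΛ, hexp'⟩ := exists_continuous_exp_eq
    (G := fun p : ℝ × ℝ ↦ scaledChord g l p.1 (projIcc 0 l hl p.2))
    (hchord.comp (f := fun p : ℝ × ℝ ↦ (p.1, (projIcc 0 l hl p.2 : ℝ))) (by fun_prop))
    fun p ↦ hg.scaledChord_ne_zero p.1 (projIcc 0 l hl p.2).2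
  have hexp (s : ℝ) {h : ℝ} (hh : h ∈ Icc 0 l) :
      Complex.exp (Λ (s, h)) = scaledChord g l s h := by
    rw [hexp', projIcc_of_mem hl hh]
  have hfirst : Λ (s₀, l) - Λ (s₀, 0) = π * I := by
    have hlog : ContinuousOn (fun h ↦ Complex.log (-I * scaledChord g l s₀ h)) (Icc 0 l) :=
      ContinuousOn.clog (by fun_prop) fun h ↦ hg.neg_I_mul_scaledChord_mem_slitPlane hs₀
    have := sub_eq_sub_of_exp_eqOn (Λ := fun h ↦ Λ (s₀, h)) 
      (M := fun h ↦ Complex.log I + Complex.log (-I * scaledChord g l s₀ h)) isPreconnected_Icc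
      (by fun_prop) (continuousOn_const.add hlog) (fun h hh ↦ ?_) h0 hend
    · simp only [hg.scaledChord_zero, hg.scaledChord_period, hs₀.deriv_eq_one, mul_one, mul_neg,
        neg_neg, Complex.log_I, Complex.log_neg_I] at this
      linear_combination -this
    · have := hg.scaledChord_ne_zero s₀ hh
      rw [Complex.exp_add, Complex.exp_log Complex.I_ne_zero, Complex.exp_log (by simpa), hexp _ hh,
        ← mul_assoc, mul_neg, Complex.I_mul_I, neg_neg, one_mul]
  have hsecond : Λ (s₀ + l, 0) - Λ (s₀, l) = Λ (s₀, l) - Λ (s₀, 0) := by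
    have := sub_eq_sub_of_exp_eqOn (Λ := fun h ↦ Λ (s₀ + h, l - h))
      (M := fun h ↦ Λ (s₀, h) + π * I) isPreconnected_Icc (by fun_prop) (by fun_prop)
      (fun h hh ↦ by
        rw [Complex.exp_add, Complex.exp_pi_mul_I, hexp _ hh, mul_neg_one,
          hexp _ ⟨sub_nonneg.2 hh.2, sub_le_self _ hh.1⟩, hg.scaledChord_add_sub s₀ hh])
      hend h0
    rw [sub_self, add_zero, sub_zero] at this
    linear_combination this
  refine HasWinding.of_exp_eq (Λ := fun s ↦ Λ (s, 0)) (by fun_prop)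
    (fun s ↦ by rw [hexp _ h0, hg.scaledChord_zero]) hg.periodic_deriv (t₀ := s₀) ?_
  push_cast
  linear_combination hsecond + 2 * hfirst

theorem sub_normalPoint_eq (hg : IsUnitSpeedJordan g l) (s ε : ℝ) {h : ℝ} (hh : h ∈ Icc 0 l) :
    g (s + h) - normalPoint g s ε = I * (-I * scaledChord g l s h) *
      ((h * (l - h) / l : ℝ) - ε * I * (deriv g s / scaledChord g l s h)) := by
  have hne := hg.scaledChord_ne_zero s hh
  have hl : (l : ℂ) ≠ 0 := by exact_mod_cast hg.pos.ne'
  have hI : I * (-I * scaledChord g l s h) = scaledChord g l s h := by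
    linear_combination -scaledChord g l s h * Complex.I_mul_I
  push_cast
  rw [hI, normalPoint]
  field_simp
  linear_combination -hg.mul_scaledChord s h

theorem exists_forall_normalPoint_factor_mem_slitPlane (hg : IsUnitSpeedJordan g l) :
    ∃ ε₀ > (0 : ℝ), ∀ ε ≠ 0, |ε| ≤ ε₀ → ∀ s, ∀ h ∈ Icc 0 l,
      (h * (l - h) / l : ℝ) - ε * I * (deriv g s / scaledChord g l s h) ∈ Complex.slitPlane := by
  have hderiv := hg.continuous_deriv
  have hchord := hg.continuous_scaledChord
  have hquot : ContinuousOn (fun p : ℝ × ℝ ↦ deriv g p.1 / scaledChord g l p.1 p.2)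
      (Icc 0 l ×ˢ Icc 0 l) :=
    ContinuousOn.div (by fun_prop) hchord.continuousOn fun p hp ↦ hg.scaledChord_ne_zero p.1 hp.2
  obtain ⟨ε₀, hε₀, hslit⟩ := exists_forall_sub_mul_mem_slitPlane
    (isCompact_Icc.prod isCompact_Icc) (u := fun p ↦ p.2 * (l - p.2) / l) (by fun_prop) hquot
    fun ⟨s, h⟩ hp hre ↦ by
      obtain rfl | rfl | hh := eq_endpoints_or_mem_Ioo_of_mem_Icc hp.2
      · simp [hg.scaledChord_zero, hg.deriv_ne_zero] at hre
      · simp [hg.scaledChord_period, hg.deriv_ne_zero] at hre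
      · exact div_pos (mul_pos hh.1 (sub_pos.2 hh.2)) hg.pos
  refine ⟨ε₀, hε₀, fun ε hne hε s h hh ↦ ?_⟩
  have hper : Periodic (fun s ↦ deriv g s / scaledChord g l s h) l :=
    hg.periodic_deriv.div (hg.periodic_scaledChord h)
  obtain ⟨t, ht, he⟩ := hper.exists_mem_Ico₀ hg.pos s
  exact he ▸ hslit ε hne hε (t, h) ⟨Ico_subset_Icc_self ht, hh⟩

theorem normalPoint_notMem_range (hg : IsUnitSpeedJordan g l) {s ε : ℝ}
    (hslit : ∀ h ∈ Icc 0 l,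
      (h * (l - h) / l : ℝ) - ε * I * (deriv g s / scaledChord g l s h) ∈ Complex.slitPlane) :
    normalPoint g s ε ∉ range g := by
  rintro ⟨s', hs'⟩
  obtain ⟨t, ht, he⟩ := hg.periodic.exists_mem_Ico hg.pos s' s
  have hh : t - s ∈ Icc 0 l := ⟨sub_nonneg.2 ht.1, by linarith [ht.2]⟩
  have := hg.sub_normalPoint_eq s ε hh
  rw [add_sub_cancel, ← he, hs', sub_self] at this
  refine mul_ne_zero (mul_ne_zero Complex.I_ne_zero ?_)
    (Complex.slitPlane_ne_zero (hslit _ hh)) this.symm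
  simpa using hg.scaledChord_ne_zero s hh

theorem exists_isCollarWidth (hg : IsUnitSpeedJordan g l) : ∃ ε₀, IsCollarWidth g ε₀ :=
  let ⟨ε₀, hε₀, hslit⟩ := hg.exists_forall_normalPoint_factor_mem_slitPlane
  ⟨ε₀, hε₀, fun s ε hne hε ↦ hg.normalPoint_notMem_range (hslit ε hne hε s)⟩

theorem exists_hasWinding_sub_normalPoint (hg : IsUnitSpeedJordan g l) (hs₀ : IsLowestPoint g s₀) :
    ∃ ε₀ > (0 : ℝ), ∀ ε ∈ Ioc 0 ε₀, HasWinding (fun s ↦ g s - normalPoint g s₀ ε) l 1 := by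
  have hchord := hg.continuous_scaledChord
  have hchord_slit {h : ℝ} (hh : h ∈ Icc 0 l) := hg.neg_I_mul_scaledChord_mem_slitPlane hs₀ hh
  obtain ⟨ε₀, hε₀, hslit⟩ := hg.exists_forall_normalPoint_factor_mem_slitPlane
  refine ⟨ε₀, hε₀, fun ε hε ↦ ?_⟩
  replace hslit := hslit ε hε.1.ne' ((abs_of_pos hε.1).trans_le hε.2) s₀
  obtain ⟨Λ, hΛ, hexp⟩ : ∃ Λ : ℝ → ℂ, Continuous Λ ∧
      ∀ s, Complex.exp (Λ s) = g s - normalPoint g s₀ ε :=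
    exists_continuous_exp_eq (hg.continuous.sub continuous_const)
      fun s ↦ sub_ne_zero.2 fun h ↦ hg.normalPoint_notMem_range hslit ⟨s, h⟩
  refine .of_exp_eq hΛ hexp (hg.periodic.comp (· - normalPoint g s₀ ε)) (t₀ := s₀) ?_
  have := sub_eq_sub_of_exp_eqOn (Λ := fun h ↦ Λ (s₀ + h))
    (M := fun h ↦ Complex.log I + Complex.log (-I * scaledChord g l s₀ h) +
      Complex.log ((h * (l - h) / l : ℝ) - ε * I * (deriv g s₀ / scaledChord g l s₀ h)))
    isPreconnected_Icc (by fun_prop)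
    ((continuousOn_const.add (ContinuousOn.clog (by fun_prop) fun h ↦ hchord_slit)).add
      (ContinuousOn.clog (.sub (by fun_prop) (.mul (by fun_prop) (.div (by fun_prop) (by fun_prop)
        fun h ↦ hg.scaledChord_ne_zero s₀))) hslit))
    (fun h hh ↦ by
      rw [hexp, hg.sub_normalPoint_eq s₀ ε hh, Complex.exp_add, Complex.exp_add,
        Complex.exp_log Complex.I_ne_zero,
        Complex.exp_log (Complex.slitPlane_ne_zero (hchord_slit hh)),
        Complex.exp_log (Complex.slitPlane_ne_zero (hslit h hh))])
    (left_mem_Icc.2 hg.pos.le) (right_mem_Icc.2 hg.pos.le)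
  simp only [hg.scaledChord_zero, hg.scaledChord_period, hs₀.deriv_eq_one, mul_one, mul_neg,
    neg_neg, Complex.log_I, Complex.log_neg_I, add_zero, sub_self, mul_zero, zero_mul, zero_div,
    Complex.ofReal_zero, one_div, inv_one, zero_sub, inv_neg] at this
  rw [← mul_neg, Complex.log_ofReal_mul hε.1 (by simp), Complex.log_ofReal_mul hε.1 (by simp),
    Complex.log_I, Complex.log_neg_I] at this
  push_cast
  linear_combination -this

end IsUnitSpeedJordan

/-! ### The interior domain of a Jordan curve -/

/-- `U` is a bounded domain whose boundary lies on the curve `g`. A Jordan curve `g` has at most one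
such domain. -/
structure IsInteriorDomain (g : ℝ → ℂ) (U : Set ℂ) : Prop where
  isOpen : IsOpen U
  isBounded : Bornology.IsBounded U
  isConnected : IsConnected U
  frontier_subset : frontier U ⊆ range g

theorem subset_of_isPreconnected_of_disjoint_frontier {X : Type*} [TopologicalSpace X]
    {N U : Set X} (hN : IsPreconnected N) (hU : IsOpen U) (hne : (N ∩ U).Nonempty)
    (hd : Disjoint (frontier U) N) : N ⊆ U := by
  refine hN.subset_of_closure_inter_subset hU hne fun p ⟨hp, hpN⟩ ↦ ?_
  by_contra hpU
  exact disjoint_left.1 hd (hU.frontier_eq ▸ ⟨hp, hpU⟩) hpN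

theorem hasWinding_sub_of_mem_of_mem {U : Set ℂ} (hU : IsOpen U) (hUc : IsConnected U) {c : ℝ → ℂ}
    {T : ℝ} {n : ℤ} (hc : Continuous c) (hT : Periodic c T) (hcU : ∀ t, c t ∉ U) {p q : ℂ}
    (hp : p ∈ U) (hq : q ∈ U) (h : HasWinding (fun t ↦ c t - p) T n) :
    HasWinding (fun t ↦ c t - q) T n := by
  obtain ⟨γ, hγ⟩ := (hU.isConnected_iff_isPathConnected.1 hUc).joinedIn p hp q hq
  have hγU (ρ : ℝ) : γ.extend ρ ∈ U := hγ _
  have hcont : Continuous (uncurry fun ρ t ↦ c t - γ.extend ρ) := by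
    have := γ.continuous_extend
    fun_prop
  simpa using HasWinding.of_homotopy (H := fun ρ t ↦ c t - γ.extend ρ) zero_le_one
    hcont.continuousOn (fun ρ _ t ↦ sub_ne_zero.2 fun h ↦ hcU t (h ▸ hγU ρ))
    (fun ρ _ ↦ hT.comp (· - γ.extend ρ)) (by simpa using h)

namespace IsUnitSpeedJordan

variable {g : ℝ → ℂ} {l s₀ : ℝ}

theorem exists_forall_norm_sub_le (hg : IsUnitSpeedJordan g l) (p : ℂ) :
    ∃ s, ∀ s', ‖p - g s‖ ≤ ‖p - g s'‖ := by
  obtain ⟨_, ⟨s, rfl⟩, hs⟩ :=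
    (hg.periodic.compact_of_continuous hg.pos.ne' hg.continuous).exists_isMinOn (range_nonempty g)
      (f := fun z ↦ ‖p - z‖) (by fun_prop)
  exact ⟨s, fun s' ↦ hs (mem_range_self s')⟩

theorem deriv_mul_conj (hg : IsUnitSpeedJordan g l) (s : ℝ) : deriv g s * conj (deriv g s) = 1 := by
  simp [Complex.mul_conj', hg.norm_deriv]

theorem exists_normalPoint_eq (hg : IsUnitSpeedJordan g l) (p : ℂ) :
    ∃ s ε, normalPoint g s ε = p ∧ ∀ s', |ε| ≤ ‖p - g s'‖ := by
  obtain ⟨s, hs⟩ := hg.exists_forall_norm_sub_le p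
  have hmin : IsLocalMin (fun t ↦ ‖p - g t‖ ^ 2) s := .of_forall fun t ↦ by
    exact pow_le_pow_left₀ (norm_nonneg _) (hs t) 2
  have horth := hmin.hasDerivAt_eq_zero ((hg.hasDerivAt s).const_sub p).norm_sq
  have hre : ((p - g s) * conj (deriv g s)).re = 0 := by
    rw [Complex.inner] at horth
    simp at horth ⊢
    linarith
  have hmul : (((p - g s) * conj (deriv g s)).im : ℂ) * I = (p - g s) * conj (deriv g s) := by
    rw [← Complex.re_add_im ((p - g s) * conj (deriv g s)), hre]
    simp
  refine ⟨s, ((p - g s) * conj (deriv g s)).im, ?_, fun s' ↦ (hs s').trans' (le_of_eq ?_)⟩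
  · rw [normalPoint]
    linear_combination deriv g s * hmul + (p - g s) * hg.deriv_mul_conj s
  · have := congrArg norm hmul
    rwa [norm_mul, norm_mul, Complex.norm_I, mul_one, RCLike.norm_conj, hg.norm_deriv, mul_one,
      Complex.norm_real, Real.norm_eq_abs] at this

end IsUnitSpeedJordan

theorem IsCollarWidth.normalPoint_mem {g : ℝ → ℂ} {l : ℝ} (hg : IsUnitSpeedJordan g l) {ε₀ : ℝ}
    (hε₀ : IsCollarWidth g ε₀) {U : Set ℂ} (hU : IsInteriorDomain g U) {s s' ε ε' : ℝ}
    (hε : |ε| ≤ ε₀) (hε' : |ε'| ≤ ε₀) (hsign : 0 < ε * ε') (h : normalPoint g s ε ∈ U) :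
    normalPoint g s' ε' ∈ U := by
  have hcont : Continuous (uncurry (normalPoint g)) := by
    have := hg.continuous
    have := hg.continuous_deriv
    unfold normalPoint
    fun_prop
  refine subset_of_isPreconnected_of_disjoint_frontier
    ((isPreconnected_univ.prod isPreconnected_uIcc).image _ hcont.continuousOn) hU.isOpen
    ⟨_, ⟨(s, ε), ⟨mem_univ s, left_mem_uIcc⟩, rfl⟩, h⟩ (disjoint_left.2 ?_)
    ⟨(s', ε'), ⟨mem_univ s', right_mem_uIcc⟩, rfl⟩
  rintro _ hfr ⟨⟨t, δ⟩, ⟨-, hδ⟩, rfl⟩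
  refine hε₀.normalPoint_notMem_range t δ ?_ ?_ (hU.frontier_subset hfr)
  · rintro rfl
    obtain ⟨h₁, h₂⟩ | ⟨h₁, h₂⟩ := mem_uIcc.1 hδ <;> nlinarith
  · obtain ⟨h₁, h₂⟩ | ⟨h₁, h₂⟩ := mem_uIcc.1 hδ
    · exact (abs_le_max_abs_abs h₁ h₂).trans (max_le hε hε')
    · exact (abs_le_max_abs_abs h₁ h₂).trans (max_le hε' hε)

namespace IsInteriorDomain

variable {g : ℝ → ℂ} {l s₀ ε₀ : ℝ} {U V : Set ℂ}

theorem im_le (hU : IsInteriorDomain g U) (hs₀ : IsLowestPoint g s₀) {p : ℂ} (hp : p ∈ U) :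
    (g s₀).im ≤ p.im := by
  have := le_re_of_forall_mem_frontier_le_re hU.isBounded (H := fun z ↦ -I * z)
    (m := (g s₀).im) (Differentiable.diffContOnCl (by fun_prop)) (fun z hz ↦ ?_) (subset_closure hp)
  · simpa using this
  · obtain ⟨s, rfl⟩ := hU.frontier_subset hz
    simpa using hs₀.im_le s

theorem normalPoint_notMem (hU : IsInteriorDomain g U) (hg : IsUnitSpeedJordan g l)
    (hs₀ : IsLowestPoint g s₀) (hε₀ : IsCollarWidth g ε₀) {ε : ℝ} (hε : ε ∈ Ico (-ε₀) 0) (s : ℝ) :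
    normalPoint g s ε ∉ U := by
  intro h
  have habs : |ε| ≤ ε₀ := abs_le.2 ⟨hε.1, hε.2.le.trans hε₀.pos.le⟩
  have := hU.im_le hs₀
    (hε₀.normalPoint_mem hg hU habs habs (mul_pos_of_neg_of_neg hε.2 hε.2) h (s' := s₀))
  simp [normalPoint, hs₀.deriv_eq_one] at this
  exact this.not_gt hε.2

theorem notMem (hU : IsInteriorDomain g U) (hg : IsUnitSpeedJordan g l) (hs₀ : IsLowestPoint g s₀)
    (s : ℝ) : g s ∉ U := by
  intro hs
  obtain ⟨ε₀, hε₀⟩ := hg.exists_isCollarWidth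
  have hcont : Continuous (normalPoint g s) := by
    unfold normalPoint
    fun_prop
  have hev : ∀ᶠ ε in 𝓝[<] 0, normalPoint g s ε ∈ U := nhdsWithin_le_nhds <|
    hcont.continuousAt.eventually_mem (hU.isOpen.mem_nhds (by simpa [normalPoint] using hs))
  obtain ⟨ε, hεU, hε⟩ := (hev.and (Ico_mem_nhdsLT (neg_lt_zero.2 hε₀.pos))).exists
  exact hU.normalPoint_notMem hg hs₀ hε₀ hε s hεU

theorem nonempty_frontier (hU : IsInteriorDomain g U) : (frontier U).Nonempty :=
  nonempty_frontier_iff.2 ⟨hU.isConnected.nonempty, fun h ↦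
    NormedSpace.unbounded_univ ℝ ℂ (h ▸ hU.isBounded)⟩

theorem normalPoint_mem (hU : IsInteriorDomain g U) (hg : IsUnitSpeedJordan g l)
    (hs₀ : IsLowestPoint g s₀) (hε₀ : IsCollarWidth g ε₀) {ε : ℝ} (hε : ε ∈ Ioc 0 ε₀) (s : ℝ) :
    normalPoint g s ε ∈ U := by
  obtain ⟨q, hq⟩ := hU.nonempty_frontier
  obtain ⟨t, rfl⟩ := hU.frontier_subset hq
  obtain ⟨p, hpU, hp⟩ := Metric.mem_closure_iff.1 (frontier_subset_closure hq) ε₀ hε₀.pos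
  obtain ⟨s', δ, rfl, hδ⟩ := hg.exists_normalPoint_eq p
  have habs : |δ| ≤ ε₀ := (hδ t).trans (by rw [← dist_eq_norm, dist_comm]; exact hp.le)
  obtain hneg | rfl | hpos := lt_trichotomy δ 0
  · exact absurd hpU (hU.normalPoint_notMem hg hs₀ hε₀ ⟨neg_le_of_abs_le habs, hneg⟩ s')
  · exact absurd hpU (by simpa [normalPoint] using hU.notMem hg hs₀ s')
  · exact hε₀.normalPoint_mem hg hU habs ((abs_of_pos hε.1).trans_le hε.2) (mul_pos hpos hε.1) hpU

theorem subset_of_nonempty_inter (hU : IsInteriorDomain g U) (hg : IsUnitSpeedJordan g l)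
    (hs₀ : IsLowestPoint g s₀) (hV : IsInteriorDomain g V) (h : (U ∩ V).Nonempty) : U ⊆ V := by
  refine subset_of_isPreconnected_of_disjoint_frontier hU.isConnected.isPreconnected hV.isOpen h
    (disjoint_left.2 fun q hq hqU ↦ ?_)
  obtain ⟨s, rfl⟩ := hV.frontier_subset hq
  exact hU.notMem hg hs₀ s hqU

protected theorem unique (hU : IsInteriorDomain g U) (hg : IsUnitSpeedJordan g l)
    (hs₀ : IsLowestPoint g s₀) (hV : IsInteriorDomain g V) : U = V := by
  obtain ⟨ε₀, hε₀⟩ := hg.exists_isCollarWidth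
  have hε : ε₀ ∈ Ioc 0 ε₀ := right_mem_Ioc.2 hε₀.pos
  have h : (U ∩ V).Nonempty := ⟨_, hU.normalPoint_mem hg hs₀ hε₀ hε s₀,
    hV.normalPoint_mem hg hs₀ hε₀ hε s₀⟩
  exact (hU.subset_of_nonempty_inter hg hs₀ hV h).antisymm
    (hV.subset_of_nonempty_inter hg hs₀ hU (inter_comm U V ▸ h))

theorem hasWinding_sub (hU : IsInteriorDomain g U) (hg : IsUnitSpeedJordan g l)
    (hs₀ : IsLowestPoint g s₀) {p : ℂ} (hp : p ∈ U) : HasWinding (fun s ↦ g s - p) l 1 := by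
  obtain ⟨ε₀, hε₀⟩ := hg.exists_isCollarWidth
  obtain ⟨ε₁, hε₁, hwind⟩ := hg.exists_hasWinding_sub_normalPoint hs₀
  have hpos : 0 < min ε₀ ε₁ := lt_min hε₀.pos hε₁
  exact hasWinding_sub_of_mem_of_mem hU.isOpen hU.isConnected hg.continuous hg.periodic
    (hU.notMem hg hs₀) (hU.normalPoint_mem hg hs₀ hε₀ ⟨hpos, min_le_left _ _⟩ s₀) hp
    (hwind _ ⟨hpos, min_le_right _ _⟩)

end IsInteriorDomain

section ImageOfBall

variable {W : ℂ → ℂ} {c : ℂ} {R : ℝ}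

theorem isOpen_image_of_hasStrictFDerivAt {s : Set ℂ} (hs : IsOpen s)
    (hd : ∀ z ∈ s, ∃ L, IsSensePreserving L ∧ HasStrictFDerivAt W L z) : IsOpen (W '' s) := by
  rw [isOpen_iff_mem_nhds]
  rintro _ ⟨z, hz, rfl⟩
  obtain ⟨L, hL, hW⟩ := hd z hz
  have hrange : L.range = ⊤ :=
    LinearMap.range_eq_top.2 (LinearMap.injective_iff_surjective.1 hL.injective)
  rw [← hW.map_nhds_eq_of_surj hrange]
  exact image_mem_map (hs.mem_nhds hz)

theorem isInteriorDomain_image_ball {g : ℝ → ℂ} (hR : 0 < R) (hW : ContinuousOn W (closedBall c R))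
    (hb : MapsTo W (sphere c R) (range g)) (ho : IsOpen (W '' ball c R)) :
    IsInteriorDomain g (W '' ball c R) where
  isOpen := ho
  isBounded := ((isCompact_closedBall c R).image_of_continuousOn hW).isBounded.subset
    (image_mono ball_subset_closedBall)
  isConnected := ((convex_ball c R).isConnected ⟨c, mem_ball_self hR⟩).image _
    (hW.mono ball_subset_closedBall)
  frontier_subset p hp := by
    rw [ho.frontier_eq] at hp
    obtain ⟨z, hz, rfl⟩ := closure_minimal (image_mono ball_subset_closedBall)
      ((isCompact_closedBall c R).image_of_continuousOn hW).isClosed hp.1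
    exact hb ((ball_union_sphere.ge hz).resolve_left fun h ↦ hp.2 ⟨z, h, rfl⟩)

theorem bijOn_ball_of_boundary_eq {g : ℝ → ℂ} {l s₀ : ℝ} (hg : IsUnitSpeedJordan g l)
    (hs₀ : IsLowestPoint g s₀) {D : Set ℂ} (hD : IsInteriorDomain g D) {f : ℝ → ℝ}
    (hf : Continuous f) (hfl : ∀ t, f (t + 2 * π) = f t + l) (hR : 0 < R)
    (hW : ContinuousOn W (closedBall c R)) (hb : ∀ t, W (circleMap c R t) = g (f t))
    (hd : ∀ z ∈ ball c R, ∃ L, IsSensePreserving L ∧ HasStrictFDerivAt W L z) :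
    BijOn W (ball c R) D := by
  have hsphere : MapsTo W (sphere c R) (range g) := by
    rw [← abs_of_pos hR, ← range_circleMap]
    rintro _ ⟨t, rfl⟩
    exact ⟨f t, (hb t).symm⟩
  have hΩ := isInteriorDomain_image_ball hR hW hsphere
    (isOpen_image_of_hasStrictFDerivAt isOpen_ball hd)
  rw [← hΩ.unique hg hs₀ hD]
  refine InjOn.bijOn_image fun z hz z' hz' he ↦ ?_
  have hWz : W z ∈ W '' ball c R := mem_image_of_mem W hz
  have hcount := (finite_zeros_and_hasWinding_ncard (W := fun x ↦ W x - W z) hR.le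
    (hW.sub continuousOn_const)
    (fun x hx h ↦ ?_) fun x hx _ ↦ ?_).2.unique
      (n := 1) (by simpa only [hb] using (hΩ.hasWinding_sub hg hs₀ hWz).comp hf hfl)
  · obtain ⟨a, ha⟩ := ncard_eq_one.1 (by exact_mod_cast hcount)
    have hza : z ∈ ({a} : Set ℂ) := ha ▸ ⟨hz, sub_self _⟩
    have hza' : z' ∈ ({a} : Set ℂ) := ha ▸ ⟨hz', sub_eq_zero.2 he.symm⟩
    exact hza.trans hza'.symm
  · obtain ⟨s, hs⟩ := hsphere hx
    exact hΩ.notMem hg hs₀ s (hs ▸ sub_eq_zero.1 h ▸ hWz)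
  · obtain ⟨L, hL, hWL⟩ := hd x hx
    exact ⟨L, hL, hWL.hasFDerivAt.sub_const (W z)⟩

end ImageOfBall

/-! ### The Poisson kernel -/

theorem apply_arg_circleMap {E : Type*} {F : ℝ → E} (hF : Periodic F (2 * π)) (t : ℝ) :
    F (Complex.arg (circleMap 0 1 t)) = F t := by
  rw [circleMap_zero, Complex.ofReal_one, one_mul, Complex.arg_exp_mul_I,
    ← self_sub_toIocDiv_zsmul]
  exact hF.sub_zsmul_eq _

theorem integral_zero_two_pi_eq_integral_neg_pi_pi {E : Type*} [NormedAddCommGroup E]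
    [NormedSpace ℝ E] {G : ℝ → E} (hG : Periodic G (2 * π)) (τ : ℝ) :
    ∫ t in (0 : ℝ)..(2 * π), G t = ∫ u in (-π)..π, G (τ + u) := by
  have h := hG.intervalIntegral_add_eq 0 (τ + -π)
  rw [intervalIntegral.integral_comp_add_left, ← zero_add (2 * π), h]
  congr 1
  ring

theorem circleMap_mem_ball {r : ℝ} (hr : r ∈ Ico (0 : ℝ) 1) (τ : ℝ) :
    circleMap 0 r τ ∈ ball (0 : ℂ) 1 := by
  simpa [abs_of_nonneg hr.1] using hr.2

theorem circleMap_sub_ne_zero {z : ℂ} (hz : z ∈ ball (0 : ℂ) 1) (t : ℝ) :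
    circleMap 0 1 t - z ≠ 0 := by
  rintro h
  rw [sub_eq_zero] at h
  simp [← h] at hz

theorem normSq_circleMap_sub (r t τ : ℝ) :
    Complex.normSq (circleMap 0 1 t - circleMap 0 r τ) = 1 - 2 * r * cos (t - τ) + r ^ 2 := by
  have ht := sin_sq_add_cos_sq t
  have hτ := sin_sq_add_cos_sq τ
  simp only [circleMap_zero, Complex.normSq_apply, Complex.sub_re, Complex.sub_im,
    Complex.re_ofReal_mul, Complex.im_ofReal_mul, Complex.exp_ofReal_mul_I_re,
    Complex.exp_ofReal_mul_I_im, cos_sub]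
  linear_combination ht + r ^ 2 * hτ

theorem poissonKer_sub (r t τ : ℝ) : poissonKer r (t - τ) =
    (1 - r ^ 2) / (2 * π * Complex.normSq (circleMap 0 1 t - circleMap 0 r τ)) := by
  rw [poissonKer, normSq_circleMap_sub]

theorem poissonKer_norm_sub_arg (z : ℂ) (t : ℝ) : poissonKer ‖z‖ (t - Complex.arg z) =
    (1 - ‖z‖ ^ 2) / (2 * π * Complex.normSq (circleMap 0 1 t - z)) := by
  rw [poissonKer_sub, circleMap_zero ‖z‖, Complex.norm_mul_exp_arg_mul_I]

theorem poissonExt_circleMap {F : ℝ → ℂ} (hF : Periodic F (2 * π)) {r : ℝ} (hr : 0 ≤ r)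
    (τ : ℝ) :
    poissonExt F (circleMap 0 r τ) = ∫ u in (-π)..π, (poissonKer r u : ℂ) * F (τ + u) := by
  have h_norm : ‖circleMap 0 r τ‖ = r := by rw [norm_circleMap_zero, abs_of_nonneg hr]
  have h_ker : ∀ t, poissonKer ‖circleMap 0 r τ‖ (t - Complex.arg (circleMap 0 r τ)) =
      poissonKer r (t - τ) := fun t ↦ by rw [poissonKer_norm_sub_arg, poissonKer_sub, h_norm]
  simp only [poissonExt, h_ker]
  rw [integral_zero_two_pi_eq_integral_neg_pi_pi _ τ]
  · simp only [add_sub_cancel_left]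
  · intro t
    simp only [hF t, poissonKer]
    rw [add_sub_right_comm, cos_add_two_pi]

theorem poissonExt_of_differentiable {φ : ℂ → ℂ} (hφ : Differentiable ℂ φ) {z : ℂ}
    (hz : z ∈ ball (0 : ℂ) 1) : poissonExt (fun t ↦ φ (circleMap 0 1 t)) z = φ z := by
  have h := hφ.diffContOnCl.circleAverage_poissonKernel_smul hz
  rw [← h, circleAverage_def, poissonExt, Complex.real_smul,
    ← intervalIntegral.integral_const_mul]
  refine intervalIntegral.integral_congr fun t _ ↦ ?_
  have := norm_pos_iff.2 (circleMap_sub_ne_zero hz t)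
  simp only [Pi.smul_apply', poissonKernel_def, sub_zero, norm_circleMap_zero, abs_one,
    Complex.real_smul, poissonKer_norm_sub_arg, Complex.normSq_eq_norm_sq]
  push_cast
  field_simp

section KernelAverages

variable {r : ℝ}

theorem one_sub_two_mul_cos_add_sq_pos (hr : r ∈ Ico (0 : ℝ) 1) (u : ℝ) :
    0 < 1 - 2 * r * cos u + r ^ 2 := by
  have h := normSq_circleMap_sub r u 0
  rw [sub_zero] at h
  rw [← h]
  exact Complex.normSq_pos.2 (circleMap_sub_ne_zero (circleMap_mem_ball hr 0) u)

theorem poissonKer_nonneg (hr : r ∈ Ico (0 : ℝ) 1) (u : ℝ) : 0 ≤ poissonKer r u := by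
  have h_den := one_sub_two_mul_cos_add_sq_pos hr u
  have h_num : 0 ≤ 1 - r ^ 2 := by nlinarith [hr.1, hr.2]
  unfold poissonKer
  positivity

theorem continuous_poissonKer (hr : r ∈ Ico (0 : ℝ) 1) : Continuous (poissonKer r) := by
  unfold poissonKer
  refine Continuous.div (by fun_prop) (by fun_prop) fun u ↦ ?_
  have h_den := one_sub_two_mul_cos_add_sq_pos hr u
  positivity

theorem integral_poissonKer (hr : r ∈ Ico (0 : ℝ) 1) : ∫ u in (-π)..π, poissonKer r u = 1 := by
  have h := poissonExt_of_differentiable (φ := fun _ ↦ 1) (by fun_prop) (circleMap_mem_ball hr 0)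
  rw [poissonExt_circleMap (fun _ ↦ rfl) hr.1] at h
  simp only [mul_one, intervalIntegral.integral_ofReal] at h
  exact_mod_cast h

theorem integral_poissonKer_mul_cos (hr : r ∈ Ico (0 : ℝ) 1) :
    ∫ u in (-π)..π, poissonKer r u * cos u = r := by
  have hP := continuous_poissonKer hr
  have h := poissonExt_of_differentiable (φ := id) differentiable_id (circleMap_mem_ball hr 0)
  simp only [id, poissonExt_circleMap (periodic_circleMap 0 1) hr.1] at h
  have h_re := Complex.reCLM.intervalIntegral_comp_comm
    (show IntervalIntegrable (fun u : ℝ ↦ (poissonKer r u : ℂ) * circleMap 0 1 (0 + u)) volume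
      (-π) π from Continuous.intervalIntegrable (by fun_prop) _ _)
  rw [h] at h_re
  simpa [circleMap_zero, Complex.exp_ofReal_mul_I_re] using h_re

theorem integral_poissonKer_mul_affine (hr : r ∈ Ico (0 : ℝ) 1) (a b : ℝ) :
    ∫ u in (-π)..π, poissonKer r u * (a + b * (1 - cos u)) = a + b * (1 - r) := by
  have hP := continuous_poissonKer hr
  have h_split : ∀ u, poissonKer r u * (a + b * (1 - cos u)) =
      (a + b) * poissonKer r u - b * (poissonKer r u * cos u) := fun u ↦ by ring
  simp only [h_split]
  rw [intervalIntegral.integral_sub (Continuous.intervalIntegrable (by fun_prop) _ _)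
    (Continuous.intervalIntegrable (by fun_prop) _ _), intervalIntegral.integral_const_mul,
    intervalIntegral.integral_const_mul, integral_poissonKer hr, integral_poissonKer_mul_cos hr]
  ring

theorem norm_integral_poissonKer_mul_le (hr : r ∈ Ico (0 : ℝ) 1) {a b : ℝ} {G : ℝ → ℂ}
    (h : ∀ u, |u| ≤ π → ‖G u‖ ≤ a + b * (1 - cos u)) :
    ‖∫ u in (-π)..π, (poissonKer r u : ℂ) * G u‖ ≤ a + b * (1 - r) := by
  have hP := continuous_poissonKer hr
  rw [← integral_poissonKer_mul_affine hr]
  refine intervalIntegral.norm_integral_le_of_norm_le (by linarith [pi_pos])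
    (Eventually.of_forall fun u hu ↦ ?_) (Continuous.intervalIntegrable (by fun_prop) _ _)
  rw [norm_mul, Complex.norm_real, norm_of_nonneg (poissonKer_nonneg hr u)]
  exact mul_le_mul_of_nonneg_left (h u (abs_le.2 ⟨hu.1.le, hu.2⟩)) (poissonKer_nonneg hr u)

theorem sq_le_mul_one_sub_cos {u : ℝ} (hu : |u| ≤ π) : u ^ 2 ≤ π ^ 2 / 2 * (1 - cos u) := by
  have h : 2 / π ^ 2 * u ^ 2 ≤ 1 - cos u := by linarith [cos_le_one_sub_mul_cos_sq hu]
  calc u ^ 2 = π ^ 2 / 2 * (2 / π ^ 2 * u ^ 2) := by field_simp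
    _ ≤ π ^ 2 / 2 * (1 - cos u) := by gcongr

end KernelAverages

/-! ### The Herglotz decomposition of the Poisson extension -/

/-- The holomorphic half of the Poisson extension: `poissonExt F` is `herglotzExt F` plus the
conjugate of `herglotzExt (conj ∘ F)`. -/
noncomputable def herglotzExt (F : ℝ → ℂ) (z : ℂ) : ℂ :=
  2⁻¹ * circleAverage (fun ζ ↦ herglotzRieszKernel 0 z ζ • F (Complex.arg ζ)) 0 1

/-- The derivative of `herglotzExt F`. -/
noncomputable def herglotzDeriv (F : ℝ → ℂ) (z : ℂ) : ℂ :=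
  (2 * π)⁻¹ * ∫ t in (0 : ℝ)..(2 * π), circleMap 0 1 t / (circleMap 0 1 t - z) ^ 2 * F t

/-- The derivative of the holomorphic function whose conjugate is the antiholomorphic half of the
Poisson extension. -/
noncomputable def conjHerglotzDeriv (F : ℝ → ℂ) : ℂ → ℂ :=
  herglotzDeriv fun t ↦ conj (F t)

section Herglotz

variable {F : ℝ → ℂ} {z : ℂ}

theorem periodic_conj {α : Type*} [Add α] {G : α → ℂ} {c : α} (hG : Periodic G c) :
    Periodic (fun t ↦ conj (G t)) c :=
  hG.comp conj

theorem hasDerivAt_herglotzExt (hc : Continuous F) (hF : Periodic F (2 * π))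
    (hz : z ∈ ball (0 : ℂ) 1) : HasDerivAt (herglotzExt F) (herglotzDeriv F z) z := by
  have h_int : CircleIntegrable (fun ζ ↦ F (Complex.arg ζ)) 0 1 := by
    simpa only [CircleIntegrable, apply_arg_circleMap hF] using hc.intervalIntegrable _ _
  refine ((hasDerivAt_circleAverage_herglotzRieszKernel_smul h_int hz).const_mul
    (2 : ℂ)⁻¹).congr_deriv ?_
  simp only [herglotzDeriv, circleAverage_def, apply_arg_circleMap hF, smul_eq_mul,
    Complex.real_smul, ← intervalIntegral.integral_const_mul]
  refine intervalIntegral.integral_congr fun t _ ↦ ?_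
  push_cast
  ring

theorem poissonKer_eq_herglotzRieszKernel_add_conj (hz : z ∈ ball (0 : ℂ) 1) (t : ℝ) :
    (poissonKer ‖z‖ (t - Complex.arg z) : ℂ) =
      2⁻¹ * (2 * π)⁻¹ * (herglotzRieszKernel 0 z (circleMap 0 1 t) +
        conj (herglotzRieszKernel 0 z (circleMap 0 1 t))) := by
  have h_ne := circleMap_sub_ne_zero hz t
  have h_norm : ‖circleMap 0 1 t‖ = 1 := by simp
  simp only [poissonKer_norm_sub_arg, herglotzRieszKernel_def, sub_zero]
  set E := circleMap 0 1 t
  have h_num : ((1 - ‖z‖ ^ 2 : ℝ) : ℂ) = E * conj E - z * conj z := by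
    rw [Complex.mul_conj', Complex.mul_conj', h_norm]
    push_cast
    ring
  have h_ne' : conj (E - z) ≠ 0 := (map_ne_zero _).2 h_ne
  rw [Complex.ofReal_div, Complex.ofReal_mul, h_num, ← Complex.mul_conj, map_div₀]
  simp only [map_sub, map_add] at h_ne' ⊢
  push_cast
  have hpi : (π : ℂ) ≠ 0 := by exact_mod_cast pi_ne_zero
  field_simp
  ring

theorem poissonExt_eq_herglotzExt_add_conj (hc : Continuous F) (hF : Periodic F (2 * π))
    (hz : z ∈ ball (0 : ℂ) 1) :
    poissonExt F z = herglotzExt F z + conj (herglotzExt (fun t ↦ conj (F t)) z) := by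
  have h_ker : Continuous fun t : ℝ ↦ herglotzRieszKernel 0 z (circleMap 0 1 t) := by
    simp only [herglotzRieszKernel_def, sub_zero]
    exact Continuous.div (by fun_prop) (by fun_prop) (circleMap_sub_ne_zero hz)
  simp only [herglotzExt, circleAverage_def, poissonExt, apply_arg_circleMap hF, smul_eq_mul,
    Complex.real_smul, map_mul, Complex.conj_ofReal]
  rw [← intervalIntegral.intervalIntegral_conj]
  simp only [← intervalIntegral.integral_const_mul]
  rw [← intervalIntegral.integral_add (Continuous.intervalIntegrable (by fun_prop) _ _)
    (Continuous.intervalIntegrable (by fun_prop) _ _)]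
  refine intervalIntegral.integral_congr fun t _ ↦ ?_
  simp only [map_mul, map_inv₀, map_ofNat, Complex.conj_conj,
    poissonKer_eq_herglotzRieszKernel_add_conj hz]
  push_cast
  ring

/-- The tangential derivative `∂w/∂τ` at `r e^{iτ}` of the Poisson extension `w`. -/
noncomputable def angularDeriv (F : ℝ → ℂ) (z : ℂ) : ℂ :=
  I * (z * herglotzDeriv F z - conj (z * conjHerglotzDeriv F z))

/-- The normal derivative `r ∂w/∂r` at `r e^{iτ}` of the Poisson extension `w`. -/
noncomputable def radialDeriv (F : ℝ → ℂ) (z : ℂ) : ℂ :=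
  z * herglotzDeriv F z + conj (z * conjHerglotzDeriv F z)

theorem hasDerivAt_poissonExt_circleMap (hc : Continuous F) (hF : Periodic F (2 * π))
    {r : ℝ} (hr : r ∈ Ico (0 : ℝ) 1) (τ : ℝ) :
    HasDerivAt (fun t ↦ poissonExt F (circleMap 0 r t)) (angularDeriv F (circleMap 0 r τ)) τ := by
  have h_half : ∀ G : ℝ → ℂ, Continuous G → Periodic G (2 * π) →
      HasDerivAt (fun t ↦ herglotzExt G (circleMap 0 r t))
        (herglotzDeriv G (circleMap 0 r τ) * (circleMap 0 r τ * I)) τ := fun G hG hGp ↦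
    (hasDerivAt_herglotzExt hG hGp (circleMap_mem_ball hr τ)).comp τ (hasDerivAt_circleMap 0 r τ)
  have h := (h_half F hc hF).add (Complex.conjCLE.hasFDerivAt.comp_hasDerivAt τ
    (h_half _ (Complex.continuous_conj.comp hc) (periodic_conj hF)))
  refine (h.congr_of_eventuallyEq (Eventually.of_forall fun t ↦ ?_)).congr_deriv ?_
  · exact poissonExt_eq_herglotzExt_add_conj hc hF (circleMap_mem_ball hr t)
  · simp only [angularDeriv, conjHerglotzDeriv, ContinuousLinearEquiv.coe_coe,
      Complex.conjCLE_apply, map_mul, Complex.conj_I]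
    simp only [comp_def]
    ring

end Herglotz

/-- The kernel `r ∂P/∂r` of the normal derivative of the Poisson extension. -/
noncomputable def radialKer (r u : ℝ) : ℝ :=
  r * ((1 + r ^ 2) * cos u - 2 * r) / (π * (1 - 2 * r * cos u + r ^ 2) ^ 2)

theorem integral_circleMap_div_sq (z : ℂ) :
    ∫ t in (0 : ℝ)..(2 * π), circleMap 0 1 t / (circleMap 0 1 t - z) ^ 2 = 0 := by
  have h := circleIntegral.integral_sub_zpow_of_ne (n := -2) (by norm_num) 0 z 1
  have h_integrand : ∀ t : ℝ, deriv (circleMap 0 1) t • (circleMap 0 1 t - z) ^ (-2 : ℤ) =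
      I * (circleMap 0 1 t / (circleMap 0 1 t - z) ^ 2) := fun t ↦ by
    rw [deriv_circleMap, smul_eq_mul, zpow_neg, zpow_ofNat]
    ring
  simp only [circleIntegral, h_integrand] at h
  rwa [intervalIntegral.integral_const_mul, mul_eq_zero, or_iff_right Complex.I_ne_zero] at h

theorem circleMap_sub_ofReal_ne_zero {r : ℝ} (hr : r ∈ Ico (0 : ℝ) 1) (u : ℝ) :
    circleMap 0 1 u - r ≠ 0 := by
  have h := circleMap_sub_ne_zero (circleMap_mem_ball hr 0) u
  rwa [circleMap_zero r, Complex.ofReal_zero, zero_mul, Complex.exp_zero, mul_one] at h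

theorem radialKer_eq {r : ℝ} (hr : r ∈ Ico (0 : ℝ) 1) (u : ℝ) :
    (radialKer r u : ℂ) = (2 * π)⁻¹ * (r * (circleMap 0 1 u / (circleMap 0 1 u - r) ^ 2) +
      conj (r * (circleMap 0 1 u / (circleMap 0 1 u - r) ^ 2))) := by
  have h_ne := circleMap_sub_ofReal_ne_zero hr u
  have h_den : ((1 - 2 * r * cos u + r ^ 2 : ℝ) : ℂ) =
      (circleMap 0 1 u - r) * conj (circleMap 0 1 u - r) := by
    have h := normSq_circleMap_sub r u 0
    rw [circleMap_zero r, Complex.ofReal_zero, zero_mul, Complex.exp_zero, mul_one, sub_zero]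
      at h
    rw [Complex.mul_conj, h]
  have h_cos : Complex.cos u = (circleMap 0 1 u + conj (circleMap 0 1 u)) / 2 := by
    rw [← Complex.ofReal_cos, Complex.add_conj, circleMap_zero, Complex.re_ofReal_mul,
      Complex.exp_ofReal_mul_I_re]
    push_cast
    ring
  have h_unit : circleMap 0 1 u * conj (circleMap 0 1 u) = 1 := by
    simp [Complex.mul_conj']
  have h_ne' := (map_ne_zero conj).2 h_ne
  have hpi : (π : ℂ) ≠ 0 := by exact_mod_cast pi_ne_zero
  rw [radialKer, Complex.ofReal_div, Complex.ofReal_mul π, Complex.ofReal_pow, h_den]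
  push_cast
  rw [h_cos]
  simp only [map_mul, map_div₀, map_pow, map_sub, Complex.conj_ofReal] at h_ne' ⊢
  set E := circleMap 0 1 u
  field_simp
  linear_combination (-r * (E + conj E) + 4 * r ^ 2) * h_unit

theorem radialKer_eq_of_circleMap {r : ℝ} (hr : r ∈ Ico (0 : ℝ) 1) (τ u : ℝ) {z E : ℂ}
    (hz : z = circleMap 0 r τ) (hE : E = circleMap 0 1 (τ + u)) :
    (radialKer r u : ℂ) =
      (2 * π)⁻¹ * (z * (E / (E - z) ^ 2) + conj (z * (E / (E - z) ^ 2))) := by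
  have h_rot : z * (E / (E - z) ^ 2) =
      r * (circleMap 0 1 u / (circleMap 0 1 u - r) ^ 2) := by
    have h_ne := circleMap_sub_ofReal_ne_zero hr u
    have h_exp := Complex.exp_ne_zero (τ * I)
    have hz' : z = Complex.exp (τ * I) * r := by rw [hz, circleMap_zero, mul_comm]
    have hE' : E = Complex.exp (τ * I) * circleMap 0 1 u := by
      simp only [hE, circleMap_zero, Complex.ofReal_one, one_mul, Complex.ofReal_add, add_mul,
        Complex.exp_add]
    rw [hz', hE', ← mul_sub]
    field_simp
  rw [radialKer_eq hr, h_rot]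

theorem herglotzDeriv_eq_integral_sub {G : ℝ → ℂ} (hG : Continuous G) {z : ℂ}
    (hz : z ∈ ball (0 : ℂ) 1) (a : ℂ) :
    herglotzDeriv G z = (2 * π)⁻¹ *
      ∫ t in (0 : ℝ)..(2 * π), circleMap 0 1 t / (circleMap 0 1 t - z) ^ 2 * (G t - a) := by
  have h_ker : Continuous fun t ↦ circleMap 0 1 t / (circleMap 0 1 t - z) ^ 2 :=
    Continuous.div (by fun_prop) (by fun_prop) fun t ↦ pow_ne_zero 2 (circleMap_sub_ne_zero hz t)
  simp only [mul_sub]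
  rw [intervalIntegral.integral_sub (Continuous.intervalIntegrable (by fun_prop) _ _)
    (Continuous.intervalIntegrable (by fun_prop) _ _), intervalIntegral.integral_mul_const,
    integral_circleMap_div_sq z, zero_mul, sub_zero, herglotzDeriv]

theorem radialDeriv_circleMap {F : ℝ → ℂ} (hc : Continuous F) (hF : Periodic F (2 * π))
    {r : ℝ} (hr : r ∈ Ico (0 : ℝ) 1) (τ : ℝ) :
    radialDeriv F (circleMap 0 r τ) =
      ∫ u in (-π)..π, (radialKer r u : ℂ) * (F (τ + u) - F τ) := by
  have hz := circleMap_mem_ball hr τ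
  have hcc : Continuous fun t ↦ conj (F t) := Complex.continuous_conj.comp hc
  have h_ker : Continuous fun t ↦ circleMap 0 1 t / (circleMap 0 1 t - circleMap 0 r τ) ^ 2 :=
    Continuous.div (by fun_prop) (by fun_prop) fun t ↦ pow_ne_zero 2 (circleMap_sub_ne_zero hz t)
  rw [radialDeriv, conjHerglotzDeriv, herglotzDeriv_eq_integral_sub hc hz (F τ),
    herglotzDeriv_eq_integral_sub hcc hz (conj (F τ)), map_mul, map_mul,
    ← intervalIntegral.intervalIntegral_conj]
  simp only [← intervalIntegral.integral_const_mul]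
  rw [← intervalIntegral.integral_add (Continuous.intervalIntegrable (by fun_prop) _ _)
    (Continuous.intervalIntegrable (by fun_prop) _ _),
    integral_zero_two_pi_eq_integral_neg_pi_pi _ τ]
  · refine intervalIntegral.integral_congr fun u _ ↦ ?_
    simp only [radialKer_eq_of_circleMap hr τ u rfl rfl, map_mul, map_sub, Complex.conj_conj,
      Complex.conj_ofReal]
    ring
  · intro t
    simp only [hF t, periodic_circleMap 0 1 t]

/-! ### The angular derivative near the circle -/

/-- The lift `f` of a weak homeomorphism of the circle `ℝ / 2πℤ` onto the circle `ℝ / lℤ`, with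
Lipschitz constant `L`. -/
structure IsLipschitzWeakHomeo (f : ℝ → ℝ) (L : NNReal) (l : ℝ) : Prop where
  monotone : Monotone f
  lipschitz : LipschitzWith L f
  add_two_pi : ∀ t, f (t + 2 * π) = f t + l

theorem norm_sub_sub_smul_le {E : Type*} [NormedAddCommGroup E] [NormedSpace ℝ E] {g : ℝ → E}
    (hg : Differentiable ℝ g) {a b M : ℝ} {e : E} (h : ∀ s ∈ uIcc a b, ‖deriv g s - e‖ ≤ M) :
    ‖g b - g a - (b - a) • e‖ ≤ M * |b - a| := by
  have hderiv : ∀ s ∈ uIcc a b,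
      HasDerivWithinAt (fun s ↦ g s - s • e) (deriv g s - e) (uIcc a b) s := fun s _ ↦ by
    have h := (hg s).hasDerivAt.sub ((hasDerivAt_id' s).smul_const e)
    rw [one_smul] at h
    exact h.hasDerivWithinAt
  have h_lip := (convex_uIcc a b).norm_image_sub_le_of_norm_hasDerivWithin_le hderiv h
    left_mem_uIcc right_mem_uIcc
  rwa [show g b - b • e - (g a - a • e) = g b - g a - (b - a) • e by module, norm_eq_abs]
    at h_lip

namespace IsLipschitzWeakHomeo

variable {f : ℝ → ℝ} {L : NNReal} {l : ℝ}

theorem continuous (hf : IsLipschitzWeakHomeo f L l) : Continuous f := hf.lipschitz.continuous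

theorem abs_sub_le (hf : IsLipschitzWeakHomeo f L l) (s t : ℝ) : |f s - f t| ≤ L * |s - t| := by
  simpa [dist_eq] using hf.lipschitz.dist_le_mul s t

theorem pos (hf : IsLipschitzWeakHomeo f L l) (hl : 0 < l) : 0 < (L : ℝ) := by
  have h := hf.abs_sub_le (0 + 2 * π) 0
  rw [hf.add_two_pi, add_sub_cancel_left, abs_of_pos hl] at h
  exact pos_of_mul_pos_left (hl.trans_le h) (abs_nonneg _)

theorem surjective (hf : IsLipschitzWeakHomeo f L l) (hl : 0 < l) : Surjective f := by
  have h_add (n : ℕ) : ∀ t, f (t + n * (2 * π)) = f t + n * l := by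
    induction n with
    | zero => simp
    | succ n ih =>
      intro t
      rw [Nat.cast_succ, add_one_mul, ← add_assoc, hf.add_two_pi, ih, add_one_mul, add_assoc]
  have h_large (b : ℝ) : ∃ n : ℕ, b ≤ n * l := by
    obtain ⟨n, hn⟩ := exists_nat_ge (b / l)
    exact ⟨n, (div_le_iff₀ hl).1 hn⟩
  refine hf.continuous.surjective (tendsto_atTop_atTop_of_monotone hf.monotone fun b ↦ ?_)
    (tendsto_atBot_atBot_of_monotone hf.monotone fun b ↦ ?_)
  · obtain ⟨n, hn⟩ := h_large (b - f 0)
    exact ⟨0 + n * (2 * π), by rw [h_add]; linarith⟩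
  · obtain ⟨n, hn⟩ := h_large (f 0 - b)
    have h := h_add n (0 - n * (2 * π))
    rw [sub_add_cancel] at h
    exact ⟨0 - n * (2 * π), by linarith⟩

end IsLipschitzWeakHomeo

namespace IsUnitSpeedJordan

variable {g : ℝ → ℂ} {l : ℝ} {f : ℝ → ℝ} {L : NNReal}

theorem lipschitzWith (hg : IsUnitSpeedJordan g l) : LipschitzWith 1 g :=
  lipschitzWith_of_nnnorm_deriv_le (hg.contDiff.differentiable one_ne_zero)
    fun s ↦ (NNReal.coe_le_coe.1 (hg.norm_deriv s).le)

theorem lipschitzWith_comp (hg : IsUnitSpeedJordan g l) (hf : IsLipschitzWeakHomeo f L l) :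
    LipschitzWith L (g ∘ f) := by
  simpa using hg.lipschitzWith.comp hf.lipschitz

theorem continuous_comp (hg : IsUnitSpeedJordan g l) (hf : IsLipschitzWeakHomeo f L l) :
    Continuous (g ∘ f) :=
  hg.continuous.comp hf.continuous

theorem periodic_comp (hg : IsUnitSpeedJordan g l) (hf : IsLipschitzWeakHomeo f L l) :
    Periodic (g ∘ f) (2 * π) := fun t ↦ by
  rw [comp_apply, hf.add_two_pi, hg.periodic, comp_apply]

theorem norm_deriv_sub_le_two (hg : IsUnitSpeedJordan g l) (s t : ℝ) :
    ‖deriv g t - deriv g s‖ ≤ 2 := by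
  have h := norm_sub_le (deriv g t) (deriv g s)
  rw [hg.norm_deriv, hg.norm_deriv] at h
  linarith

theorem uniformContinuous_deriv (hg : IsUnitSpeedJordan g l) : UniformContinuous (deriv g) := by
  have : Fact (0 < l) := ⟨hg.pos⟩
  have h_lift : Continuous (hg.periodic_deriv.lift : AddCircle l → ℂ) :=
    hg.continuous_deriv.quotient_liftOn' _
  have h_mk : UniformContinuous fun x : ℝ ↦ (x : AddCircle l) :=
    uniformContinuous_of_continuousAt_zero (QuotientAddGroup.mk' (AddSubgroup.zmultiples l))
      (AddCircle.continuous_mk' l).continuousAt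
  exact (CompactSpace.uniformContinuous_of_continuous h_lift).comp h_mk

theorem exists_norm_deriv_sub_le (hg : IsUnitSpeedJordan g l) {η : ℝ} (hη : 0 < η) :
    ∃ C ≥ (0 : ℝ), ∀ s t, ‖deriv g t - deriv g s‖ ≤ η + C * (t - s) ^ 2 := by
  obtain ⟨δ, hδ, h⟩ := Metric.uniformContinuous_iff.1 hg.uniformContinuous_deriv η hη
  refine ⟨2 / δ ^ 2, by positivity, fun s t ↦ ?_⟩
  rcases lt_or_ge |t - s| δ with hst | hst
  · have h_near := h (a := t) (b := s) (by rwa [dist_eq])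
    rw [dist_eq_norm] at h_near
    exact h_near.le.trans (le_add_of_nonneg_right (by positivity))
  · have h_far : 2 ≤ 2 / δ ^ 2 * (t - s) ^ 2 := by
      rw [div_mul_eq_mul_div, le_div_iff₀ (by positivity), ← sq_abs (t - s)]
      gcongr
    linarith [hg.norm_deriv_sub_le_two s t]

theorem norm_comp_sub_sub_le (hg : IsUnitSpeedJordan g l) (hf : IsLipschitzWeakHomeo f L l)
    {η C : ℝ} (hη : 0 ≤ η) (hC : 0 ≤ C)
    (hd : ∀ s t, ‖deriv g t - deriv g s‖ ≤ η + C * (t - s) ^ 2) (τ u : ℝ) {δ : ℝ} (hδ : 0 < δ) :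
    ‖g (f (τ + δ + u)) - g (f (τ + u)) -
        (f (τ + δ + u) - f (τ + u)) • deriv g (f τ)‖ ≤
      (η + C * (L * (|u| + δ)) ^ 2) * (L * δ) := by
  have h_end : ∀ v, |v| ≤ |u| + δ → |f (τ + v) - f τ| ≤ L * (|u| + δ) := fun v hv ↦ by
    refine (hf.abs_sub_le _ _).trans ?_
    rw [add_sub_cancel_left]
    gcongr
  have h_dist : ∀ s ∈ uIcc (f (τ + u)) (f (τ + δ + u)), |s - f τ| ≤ L * (|u| + δ) := by
    intro s hs
    have h₁ := abs_le.1 (h_end u (by linarith))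
    have h₂ := abs_le.1 (h_end (δ + u) ((abs_add_le _ _).trans (by rw [abs_of_pos hδ, add_comm])))
    rw [← add_assoc] at h₂
    rw [uIcc_of_le (hf.monotone (by linarith))] at hs
    exact abs_le.2 ⟨by linarith [hs.1], by linarith [hs.2]⟩
  refine (norm_sub_sub_smul_le (hg.contDiff.differentiable one_ne_zero) fun s hs ↦
    (hd _ _).trans (add_le_add_right (mul_le_mul_of_nonneg_left
      (sq_le_sq' (abs_le.1 (h_dist s hs)).1 (abs_le.1 (h_dist s hs)).2) hC) _)).trans ?_
  have h_lip := hf.abs_sub_le (τ + δ + u) (τ + u)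
  rw [add_sub_add_right_eq_sub, add_sub_cancel_left, abs_of_pos hδ] at h_lip
  gcongr

theorem conj_mul_slope_poissonExt_sub_eq (hg : IsUnitSpeedJordan g l)
    (hf : IsLipschitzWeakHomeo f L l) {r : ℝ} (hr : r ∈ Ico (0 : ℝ) 1) (τ δ : ℝ) :
    conj (deriv g (f τ)) * (δ⁻¹ • (poissonExt (g ∘ f) (circleMap 0 r (τ + δ)) -
        poissonExt (g ∘ f) (circleMap 0 r τ))) -
      ((∫ u in (-π)..π, poissonKer r u * (δ⁻¹ * (f (τ + δ + u) - f (τ + u))) : ℝ) : ℂ) =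
    ∫ u in (-π)..π, (poissonKer r u : ℂ) * ((δ : ℂ)⁻¹ * (conj (deriv g (f τ)) *
      (g (f (τ + δ + u)) - g (f (τ + u)) - (f (τ + δ + u) - f (τ + u)) • deriv g (f τ)))) := by
  have hP := continuous_poissonKer hr
  have hgc := hg.continuous
  have hfc := hf.continuous
  rw [poissonExt_circleMap (hg.periodic_comp hf) hr.1,
    poissonExt_circleMap (hg.periodic_comp hf) hr.1]
  simp only [comp_apply]
  rw [← intervalIntegral.integral_sub (Continuous.intervalIntegrable (by fun_prop) _ _)
      (Continuous.intervalIntegrable (by fun_prop) _ _),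
    ← intervalIntegral.integral_ofReal, ← intervalIntegral.integral_smul,
    ← intervalIntegral.integral_const_mul,
    ← intervalIntegral.integral_sub (Continuous.intervalIntegrable (by fun_prop) _ _)
      (Continuous.intervalIntegrable (by fun_prop) _ _)]
  refine intervalIntegral.integral_congr fun u _ ↦ ?_
  simp only [Complex.real_smul]
  push_cast
  linear_combination ((poissonKer r u : ℂ) * (δ : ℂ)⁻¹ *
    ((f (τ + δ + u) : ℂ) - f (τ + u))) * hg.deriv_mul_conj (f τ)

theorem exists_nonneg_norm_slope_poissonExt_sub_le (hg : IsUnitSpeedJordan g l)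
    (hf : IsLipschitzWeakHomeo f L l) {η C : ℝ} (hη : 0 ≤ η) (hC : 0 ≤ C)
    (hd : ∀ s t, ‖deriv g t - deriv g s‖ ≤ η + C * (t - s) ^ 2) {r : ℝ} (hr : r ∈ Ico (0 : ℝ) 1)
    (τ : ℝ) {δ : ℝ} (hδ : 0 < δ) :
    ∃ x : ℝ, 0 ≤ x ∧ ‖conj (deriv g (f τ)) * (δ⁻¹ • (poissonExt (g ∘ f) (circleMap 0 r (τ + δ)) -
        poissonExt (g ∘ f) (circleMap 0 r τ))) - x‖ ≤
      L * η + 2 * C * L ^ 3 * δ ^ 2 + C * L ^ 3 * π ^ 2 * (1 - r) := by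
  refine ⟨∫ u in (-π)..π, poissonKer r u * (δ⁻¹ * (f (τ + δ + u) - f (τ + u))), ?_, ?_⟩
  · refine intervalIntegral.integral_nonneg (by linarith [pi_pos]) fun u _ ↦ ?_
    have h_mono := hf.monotone (show τ + u ≤ τ + δ + u by linarith)
    exact mul_nonneg (poissonKer_nonneg hr u) (mul_nonneg (by positivity) (sub_nonneg.2 h_mono))
  · rw [hg.conj_mul_slope_poissonExt_sub_eq hf hr]
    refine norm_integral_poissonKer_mul_le hr fun u hu ↦ ?_
    have h_sq : (|u| + δ) ^ 2 ≤ 2 * δ ^ 2 + π ^ 2 * (1 - cos u) := by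
      nlinarith [sq_le_mul_one_sub_cos hu, sq_abs u, sq_nonneg (|u| - δ)]
    rw [norm_mul, norm_mul, Complex.norm_conj, hg.norm_deriv, one_mul, norm_inv,
      Complex.norm_real, norm_of_nonneg hδ.le]
    calc δ⁻¹ * _ ≤ δ⁻¹ * ((η + C * (L * (|u| + δ)) ^ 2) * (L * δ)) := by
          gcongr
          exact hg.norm_comp_sub_sub_le hf hη hC hd τ u hδ
      _ = L * η + C * L ^ 3 * (|u| + δ) ^ 2 := by field_simp
      _ ≤ L * η + C * L ^ 3 * (2 * δ ^ 2 + π ^ 2 * (1 - cos u)) := by gcongr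
      _ = _ := by ring

theorem neg_le_re_and_abs_im_conj_mul_angularDeriv_le (hg : IsUnitSpeedJordan g l)
    (hf : IsLipschitzWeakHomeo f L l) {η C : ℝ} (hη : 0 ≤ η) (hC : 0 ≤ C)
    (hd : ∀ s t, ‖deriv g t - deriv g s‖ ≤ η + C * (t - s) ^ 2) {r : ℝ} (hr : r ∈ Ico (0 : ℝ) 1)
    (τ : ℝ) :
    -(L * η + C * L ^ 3 * π ^ 2 * (1 - r)) ≤
        (conj (deriv g (f τ)) * angularDeriv (g ∘ f) (circleMap 0 r τ)).re ∧
      |(conj (deriv g (f τ)) * angularDeriv (g ∘ f) (circleMap 0 r τ)).im| ≤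
        L * η + C * L ^ 3 * π ^ 2 * (1 - r) := by
  set Q : ℝ → ℂ := fun δ ↦ conj (deriv g (f τ)) * (δ⁻¹ •
    (poissonExt (g ∘ f) (circleMap 0 r (τ + δ)) - poissonExt (g ∘ f) (circleMap 0 r τ)))
  set M : ℝ → ℝ := fun δ ↦ L * η + 2 * C * L ^ 3 * δ ^ 2 + C * L ^ 3 * π ^ 2 * (1 - r)
  have hQ : Tendsto Q (𝓝[>] 0)
      (𝓝 (conj (deriv g (f τ)) * angularDeriv (g ∘ f) (circleMap 0 r τ))) :=
    (hasDerivAt_poissonExt_circleMap (hg.continuous_comp hf) (hg.periodic_comp hf) hr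
      τ).tendsto_slope_zero_right.const_mul _
  have hM : Tendsto M (𝓝[>] 0) (𝓝 (L * η + C * L ^ 3 * π ^ 2 * (1 - r))) := by
    have h_cont : Continuous M := by fun_prop
    simpa [M] using (h_cont.tendsto 0).mono_left nhdsWithin_le_nhds
  have h_bound : ∀ᶠ δ in 𝓝[>] (0 : ℝ), -M δ ≤ (Q δ).re ∧ |(Q δ).im| ≤ M δ := by
    filter_upwards [self_mem_nhdsWithin] with δ hδ
    obtain ⟨x, hx, hQx⟩ := hg.exists_nonneg_norm_slope_poissonExt_sub_le hf hη hC hd hr τ hδ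
    have h_re := (Complex.abs_re_le_norm _).trans hQx
    have h_im := (Complex.abs_im_le_norm _).trans hQx
    rw [Complex.sub_re, Complex.ofReal_re, abs_le] at h_re
    rw [Complex.sub_im, Complex.ofReal_im, sub_zero] at h_im
    exact ⟨by linarith [h_re.1], h_im⟩
  exact ⟨le_of_tendsto_of_tendsto hM.neg ((Complex.continuous_re.tendsto _).comp hQ)
      (h_bound.mono fun _ h ↦ h.1),
    le_of_tendsto_of_tendsto ((Complex.continuous_im.tendsto _).comp hQ).abs hM
      (h_bound.mono fun _ h ↦ h.2)⟩

theorem eventually_neg_le_re_and_abs_im_conj_mul_angularDeriv_le (hg : IsUnitSpeedJordan g l)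
    (hf : IsLipschitzWeakHomeo f L l) {η : ℝ} (hη : 0 < η) :
    ∀ᶠ r in 𝓝[<] (1 : ℝ), ∀ τ,
      -η ≤ (conj (deriv g (f τ)) * angularDeriv (g ∘ f) (circleMap 0 r τ)).re ∧
        |(conj (deriv g (f τ)) * angularDeriv (g ∘ f) (circleMap 0 r τ)).im| ≤ η := by
  have hL : (0 : ℝ) < L := hf.pos hg.pos
  obtain ⟨C, hC, hd⟩ := hg.exists_norm_deriv_sub_le (η := η / (2 * L)) (by positivity)
  have hlim : Tendsto (fun r ↦ L * (η / (2 * L)) + C * L ^ 3 * π ^ 2 * (1 - r)) (𝓝[<] 1)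
      (𝓝 (L * (η / (2 * L)) + C * L ^ 3 * π ^ 2 * (1 - 1))) :=
    (Continuous.tendsto (by fun_prop) 1).mono_left nhdsWithin_le_nhds
  have hlt : L * (η / (2 * L)) + C * L ^ 3 * π ^ 2 * (1 - 1) < η := by
    field_simp
    linarith
  filter_upwards [hlim.eventually_lt_const hlt, Ico_mem_nhdsLT one_pos] with r hrη hr τ
  obtain ⟨h_re, h_im⟩ :=
    hg.neg_le_re_and_abs_im_conj_mul_angularDeriv_le hf (by positivity) hC hd hr τ
  exact ⟨by linarith, by linarith⟩

end IsUnitSpeedJordan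

/-! ### Continuity of the Poisson extension up to the boundary -/

/-- The Poisson extension on the open unit disk, extended radially by its boundary values. -/
noncomputable def poissonExtClosed (F : ℝ → ℂ) (z : ℂ) : ℂ :=
  open Classical in if ‖z‖ < 1 then poissonExt F z else F (Complex.arg z)

section Boundary

variable {F : ℝ → ℂ} {K : NNReal}

theorem eqOn_poissonExtClosed_ball (F : ℝ → ℂ) :
    EqOn (poissonExtClosed F) (poissonExt F) (ball 0 1) :=
  fun _ hz ↦ if_pos (mem_ball_zero_iff.1 hz)

theorem poissonExtClosed_circleMap (hF : Periodic F (2 * π)) (t : ℝ) :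
    poissonExtClosed F (circleMap 0 1 t) = F t := by
  rw [poissonExtClosed, if_neg (by simp), apply_arg_circleMap hF]

theorem continuousAt_comp_arg (hF : Periodic F (2 * π)) (hc : Continuous F) {z : ℂ}
    (hz : z ≠ 0) : ContinuousAt (fun z ↦ F (Complex.arg z)) z :=
  have h_lift : Continuous (hF.lift : AddCircle (2 * π) → ℂ) := hc.quotient_liftOn' _
  ContinuousAt.comp (f := fun z : ℂ ↦ ((Complex.arg z : ℝ) : Real.Angle)) (g := hF.lift)
    h_lift.continuousAt (Complex.continuousAt_arg_coe_angle hz)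

theorem norm_poissonExt_circleMap_sub_le (hF : Periodic F (2 * π))
    (hK : LipschitzWith K F) {η : ℝ} (hη : 0 < η) {r : ℝ} (hr : r ∈ Ico (0 : ℝ) 1) (τ : ℝ) :
    ‖poissonExt F (circleMap 0 r τ) - F τ‖ ≤ η + K ^ 2 / (4 * η) * (π ^ 2 / 2) * (1 - r) := by
  have hc := hK.continuous
  have hP := continuous_poissonKer hr
  have h_const : F τ = ∫ u in (-π)..π, (poissonKer r u : ℂ) * F τ := by
    rw [intervalIntegral.integral_mul_const, intervalIntegral.integral_ofReal,
      integral_poissonKer hr, Complex.ofReal_one, one_mul]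
  rw [poissonExt_circleMap hF hr.1, h_const,
    ← intervalIntegral.integral_sub (Continuous.intervalIntegrable (by fun_prop) _ _)
      (Continuous.intervalIntegrable (by fun_prop) _ _)]
  simp only [← mul_sub]
  refine norm_integral_poissonKer_mul_le hr fun u hu ↦ ?_
  have h_young : K * |u| ≤ η + K ^ 2 / (4 * η) * u ^ 2 := by
    have h_sq : η + K ^ 2 / (4 * η) * u ^ 2 - K * |u| = (η - K * |u| / 2) ^ 2 / η := by
      rw [← sq_abs u]
      field_simp
      ring
    linarith [show 0 ≤ (η - K * |u| / 2) ^ 2 / η by positivity]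
  calc ‖F (τ + u) - F τ‖ ≤ K * |u| := by simpa [dist_eq_norm] using hK.dist_le_mul (τ + u) τ
    _ ≤ η + K ^ 2 / (4 * η) * u ^ 2 := h_young
    _ ≤ η + K ^ 2 / (4 * η) * (π ^ 2 / 2 * (1 - cos u)) := by
      gcongr
      exact sq_le_mul_one_sub_cos hu
    _ = _ := by ring

theorem norm_poissonExtClosed_sub_le (hF : Periodic F (2 * π)) (hK : LipschitzWith K F)
    {η : ℝ} (hη : 0 < η) {z : ℂ} (hz : z ∈ closedBall (0 : ℂ) 1) :
    ‖poissonExtClosed F z - F (Complex.arg z)‖ ≤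
      η + K ^ 2 / (4 * η) * (π ^ 2 / 2) * (1 - ‖z‖) := by
  rcases lt_or_ge ‖z‖ 1 with h | h
  · have h_sub := norm_poissonExt_circleMap_sub_le hF hK hη ⟨norm_nonneg z, h⟩ (Complex.arg z)
    rwa [circleMap_zero, Complex.norm_mul_exp_arg_mul_I,
      ← eqOn_poissonExtClosed_ball F (mem_ball_zero_iff.2 h)] at h_sub
  · have h_norm := sub_nonneg.2 (mem_closedBall_zero_iff.1 hz)
    rw [poissonExtClosed, if_neg h.not_gt, sub_self, norm_zero]
    positivity

theorem continuousOn_poissonExt (hc : Continuous F) (hF : Periodic F (2 * π)) :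
    ContinuousOn (poissonExt F) (ball 0 1) := by
  refine ContinuousOn.congr (fun z hz ↦ ?_)
    fun z hz ↦ poissonExt_eq_herglotzExt_add_conj hc hF hz
  exact ((hasDerivAt_herglotzExt hc hF hz).continuousAt.add
    (Complex.continuous_conj.continuousAt.comp (hasDerivAt_herglotzExt
      (Complex.continuous_conj.comp hc) (periodic_conj hF) hz).continuousAt)).continuousWithinAt

theorem tendsto_poissonExtClosed_sub (hF : Periodic F (2 * π)) (hK : LipschitzWith K F)
    {z : ℂ} (hz : ‖z‖ = 1) :
    Tendsto (fun y ↦ poissonExtClosed F y - F (Complex.arg y)) (𝓝[closedBall 0 1] z) (𝓝 0) := by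
  rw [Metric.tendsto_nhds]
  intro ε hε
  have hlim : Tendsto (fun y : ℂ ↦ ε / 2 + K ^ 2 / (4 * (ε / 2)) * (π ^ 2 / 2) * (1 - ‖y‖))
      (𝓝[closedBall 0 1] z) (𝓝 (ε / 2 + K ^ 2 / (4 * (ε / 2)) * (π ^ 2 / 2) * (1 - ‖z‖))) :=
    (Continuous.tendsto (by fun_prop) z).mono_left nhdsWithin_le_nhds
  rw [hz, sub_self, mul_zero, add_zero] at hlim
  filter_upwards [hlim.eventually_lt_const (half_lt_self hε), self_mem_nhdsWithin] with y hyε hy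
  rw [dist_zero_right]
  exact (norm_poissonExtClosed_sub_le hF hK (half_pos hε) hy).trans_lt hyε

theorem continuousOn_poissonExtClosed (hF : Periodic F (2 * π)) (hK : LipschitzWith K F) :
    ContinuousOn (poissonExtClosed F) (closedBall 0 1) := by
  intro z hz
  rcases (mem_closedBall_zero_iff.1 hz).lt_or_eq with h_lt | h_eq
  · have h_ball := isOpen_ball.mem_nhds (mem_ball_zero_iff.2 h_lt)
    exact (((continuousOn_poissonExt hK.continuous hF).continuousAt h_ball).congr
      ((eqOn_poissonExtClosed_ball F).eventuallyEq_of_mem h_ball).symm).continuousWithinAt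
  · have hz_ne : z ≠ 0 := norm_ne_zero_iff.1 (h_eq ▸ one_ne_zero)
    have h_add := (tendsto_poissonExtClosed_sub hF hK h_eq).add
      (continuousAt_comp_arg hF hK.continuous hz_ne).continuousWithinAt.tendsto
    simp only [sub_add_cancel, zero_add] at h_add
    rwa [ContinuousWithinAt, poissonExtClosed, if_neg h_eq.not_lt]

end Boundary

/-! ### The radial derivative near the circle -/

theorem abs_radialKer_le {r u : ℝ} (hr : r ∈ Icc (1 / 2 : ℝ) 1) (hu : |u| ≤ π) (hu0 : u ≠ 0) :
    |radialKer r u| ≤ π / u ^ 2 := by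
  obtain ⟨hr, hr1⟩ := hr
  have hs := sq_le_mul_one_sub_cos hu
  set s := 1 - cos u with hs_def
  have hs0 : 0 < s := pos_of_mul_pos_right ((sq_pos_of_ne_zero hu0).trans_le hs) (by positivity)
  have hc : cos u = 1 - s := by rw [hs_def]; ring
  set Δ := (1 - r) ^ 2 + 2 * r * s
  have h_le : 2 * r * s ≤ Δ := le_add_of_nonneg_left (sq_nonneg _)
  have hΔ : 0 < Δ := lt_of_lt_of_le (by positivity) h_le
  have h_num : |(1 - r) ^ 2 - (1 + r ^ 2) * s| ≤ 5 / 4 * Δ := by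
    have h_up : (1 + r ^ 2) * s ≤ 5 / 2 * r * s := by gcongr; nlinarith
    have h_lo : 0 ≤ (1 + r ^ 2) * s := by positivity
    rw [abs_le]
    constructor <;> nlinarith [sq_nonneg (1 - r)]
  rw [radialKer, hc, show 1 - 2 * r * (1 - s) + r ^ 2 = Δ by ring,
    show (1 + r ^ 2) * (1 - s) - 2 * r = (1 - r) ^ 2 - (1 + r ^ 2) * s by ring, abs_div, abs_mul,
    abs_of_pos (show 0 < r by linarith), abs_of_pos (show 0 < π * Δ ^ 2 by positivity),
    div_le_div_iff₀ (by positivity) (by positivity)]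
  calc r * |(1 - r) ^ 2 - (1 + r ^ 2) * s| * u ^ 2
      ≤ r * (5 / 4 * Δ) * (π ^ 2 / 2 * s) := by gcongr
    _ = 5 / 16 * (π ^ 2 * Δ) * (2 * r * s) := by ring
    _ ≤ 5 / 16 * (π ^ 2 * Δ) * Δ := by gcongr
    _ ≤ π * (π * Δ ^ 2) := by nlinarith [show 0 < π ^ 2 * Δ ^ 2 by positivity]

theorem radialKer_one (u : ℝ) : radialKer 1 u = -(1 / (2 * π)) * (2 * sin (u / 2) ^ 2)⁻¹ := by
  have h_cos : cos u = 1 - 2 * sin (u / 2) ^ 2 := by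
    rw [show u = 2 * (u / 2) by ring, cos_two_mul, cos_sq']
    ring_nf
  rw [radialKer, h_cos,
    show 1 - 2 * 1 * (1 - 2 * sin (u / 2) ^ 2) + 1 ^ 2 = 4 * sin (u / 2) ^ 2 by ring]
  rcases eq_or_ne (sin (u / 2)) 0 with h0 | h0
  · simp [h0]
  · field_simp
    ring

theorem measurable_radialKer (r : ℝ) : Measurable (radialKer r) := by
  unfold radialKer
  fun_prop

theorem continuous_radialKer {r : ℝ} (hr : r ∈ Ico (0 : ℝ) 1) : Continuous (radialKer r) := by
  unfold radialKer
  refine Continuous.div (by fun_prop) (by fun_prop) fun u ↦ ?_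
  have h_den := one_sub_two_mul_cos_add_sq_pos hr u
  positivity

theorem continuousAt_radialKer {r u : ℝ} (hr : 0 < r) (hu : |u| ≤ π) (hu0 : u ≠ 0) :
    ContinuousAt (fun r ↦ radialKer r u) r := by
  have hs : 0 < 1 - cos u := pos_of_mul_pos_right
    ((sq_pos_of_ne_zero hu0).trans_le (sq_le_mul_one_sub_cos hu)) (by positivity)
  have h_den : 0 < 1 - 2 * r * cos u + r ^ 2 := by nlinarith [sq_nonneg (1 - r), mul_pos hr hs]
  unfold radialKer
  exact ContinuousAt.div (by fun_prop) (by fun_prop) (by positivity)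

theorem Kker_eq (g : ℝ → ℂ) (s t : ℝ) : Kker g s t = (conj (deriv g s) * (g t - g s)).im := by
  simp only [Kker, Complex.mul_re, Complex.mul_im, Complex.conj_re, Complex.conj_im,
    Complex.I_re, Complex.I_im]
  ring

/-- Dini continuity of `deriv g`, with a (not necessarily monotone) modulus of continuity `ω`. -/
structure HasDiniModulus (g : ℝ → ℂ) (ω : ℝ → ℝ) : Prop where
  norm_le : ∀ δ ≥ 0, ∀ x y, |x - y| ≤ δ → ‖deriv g x - deriv g y‖ ≤ ω δ
  exists_integrableOn : ∃ k > 0, IntegrableOn (fun t ↦ ω t / t) (Ioc 0 k)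

theorem HasDiniModulus.nonneg {g : ℝ → ℂ} {ω : ℝ → ℝ} (hω : HasDiniModulus g ω) {δ : ℝ}
    (hδ : 0 ≤ δ) : 0 ≤ ω δ :=
  (norm_nonneg _).trans (hω.norm_le δ hδ 0 0 (by simpa using hδ))

/-- The radial counterpart of `Topf / (2 * π)`: the integral of `Kker` against `-radialKer`, as a
function of the pair `(r, τ)`. -/
noncomputable def radialTop (g : ℝ → ℂ) (f : ℝ → ℝ) (p : ℝ × ℝ) : ℝ :=
  ∫ u in (-π)..π, -radialKer p.1 u * Kker g (f p.2) (f (p.2 + u))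

namespace IsUnitSpeedJordan

variable {g : ℝ → ℂ} {l : ℝ} {f : ℝ → ℝ} {L : NNReal} {ω : ℝ → ℝ}

theorem abs_Kker_le (hg : IsUnitSpeedJordan g l) {a b M : ℝ}
    (h : ∀ s ∈ uIcc a b, ‖deriv g s - deriv g a‖ ≤ M) : |Kker g a b| ≤ M * |b - a| := by
  have h_eq : Kker g a b = (conj (deriv g a) * (g b - g a - (b - a) • deriv g a)).im := by
    rw [Kker_eq, mul_sub _ (g b - g a), mul_smul_comm, mul_comm _ (deriv g a), hg.deriv_mul_conj]
    simp
  calc |Kker g a b| ≤ ‖conj (deriv g a) * (g b - g a - (b - a) • deriv g a)‖ :=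
        h_eq ▸ Complex.abs_im_le_norm _
    _ = ‖g b - g a - (b - a) • deriv g a‖ := by
      rw [norm_mul, Complex.norm_conj, hg.norm_deriv, one_mul]
    _ ≤ M * |b - a| := norm_sub_sub_smul_le (hg.contDiff.differentiable one_ne_zero) h

theorem Kker_add_period (hg : IsUnitSpeedJordan g l) (s t : ℝ) :
    Kker g (s + l) (t + l) = Kker g s t := by
  simp only [Kker, hg.periodic s, hg.periodic t, hg.periodic_deriv s]

theorem continuous_Kker (hg : IsUnitSpeedJordan g l) :
    Continuous fun p : ℝ × ℝ ↦ Kker g p.1 p.2 := by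
  have h_deriv := hg.continuous_deriv
  have h_cont := hg.continuous
  unfold Kker
  fun_prop

theorem abs_Kker_comp_le_mul_of_norm_deriv_le (hg : IsUnitSpeedJordan g l)
    (hf : IsLipschitzWeakHomeo f L l) {τ u M : ℝ}
    (h : ∀ x y, |x - y| ≤ L * |u| → ‖deriv g x - deriv g y‖ ≤ M) :
    |Kker g (f τ) (f (τ + u))| ≤ M * (L * |u|) := by
  have h_lip : |f (τ + u) - f τ| ≤ L * |u| := by simpa using hf.abs_sub_le (τ + u) τ
  have hM : 0 ≤ M := (norm_nonneg _).trans (h 0 0 (by rw [sub_self, abs_zero]; positivity))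
  refine (hg.abs_Kker_le fun s hs ↦ ?_).trans (mul_le_mul_of_nonneg_left h_lip hM)
  exact h _ _ ((abs_sub_left_of_mem_uIcc hs).trans h_lip)

theorem abs_Kker_comp_le_indicator_add (hg : IsUnitSpeedJordan g l)
    (hf : IsLipschitzWeakHomeo f L l) (hω : HasDiniModulus g ω) {k : ℝ} (hk : 0 < k) (τ u : ℝ) :
    |Kker g (f τ) (f (τ + u))| ≤
      L ^ 2 * ((Ioc 0 k).indicator (fun t ↦ ω t / t) (L * |u|) + 2 / k) * u ^ 2 := by
  rcases eq_or_ne u 0 with rfl | hu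
  · simp [Kker]
  have hL := hf.pos hg.pos
  have := abs_pos.2 hu
  rw [← sq_abs u]
  rcases le_or_gt (L * |u|) k with h_le | h_gt
  · rw [indicator_of_mem (show L * |u| ∈ Ioc 0 k from ⟨by positivity, h_le⟩)]
    calc |Kker g (f τ) (f (τ + u))| ≤ ω (L * |u|) * (L * |u|) :=
          hg.abs_Kker_comp_le_mul_of_norm_deriv_le hf (hω.norm_le _ (by positivity))
      _ = L ^ 2 * (ω (L * |u|) / (L * |u|)) * |u| ^ 2 := by field_simp
      _ ≤ L ^ 2 * (ω (L * |u|) / (L * |u|) + 2 / k) * |u| ^ 2 := by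
        gcongr
        exact le_add_of_nonneg_right (by positivity)
  · rw [indicator_of_notMem fun h ↦ h_gt.not_ge h.2, zero_add]
    calc |Kker g (f τ) (f (τ + u))| ≤ 2 * (L * |u|) :=
          hg.abs_Kker_comp_le_mul_of_norm_deriv_le hf fun x y _ ↦ hg.norm_deriv_sub_le_two y x
      _ ≤ 2 * (L * |u|) * (L * |u| / k) :=
        le_mul_of_one_le_right (by positivity) ((one_le_div₀ hk).2 h_gt.le)
      _ = L ^ 2 * (2 / k) * |u| ^ 2 := by ring

theorem exists_Kker_majorant (hg : IsUnitSpeedJordan g l) (hf : IsLipschitzWeakHomeo f L l)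
    (hω : HasDiniModulus g ω) :
    ∃ θ : ℝ → ℝ, IntervalIntegrable θ volume (-π) π ∧
      ∀ τ u, |Kker g (f τ) (f (τ + u))| ≤ θ u * u ^ 2 := by
  obtain ⟨k, hk, h_int⟩ := hω.exists_integrableOn
  have hL := hf.pos hg.pos
  set φ : ℝ → ℝ := (Ioc 0 k).indicator fun t ↦ ω t / t
  have hφi : Integrable φ := h_int.integrable_indicator measurableSet_Ioc
  have hφ0 (t : ℝ) : 0 ≤ φ t :=
    indicator_nonneg (fun s hs ↦ div_nonneg (hω.nonneg hs.1.le) hs.1.le) t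
  refine ⟨fun u ↦ L ^ 2 * (φ (L * u) + φ (-L * u) + 2 / k), ?_, fun τ u ↦ ?_⟩
  · exact (((hφi.comp_mul_left' hL.ne').intervalIntegrable.add
      (hφi.comp_mul_left' (neg_ne_zero.2 hL.ne')).intervalIntegrable).add
        intervalIntegrable_const).const_mul _
  · have h_abs : φ (L * |u|) ≤ φ (L * u) + φ (-L * u) := by
      rcases abs_choice u with h | h <;> rw [h]
      · exact le_add_of_nonneg_right (hφ0 _)
      · rw [mul_neg, ← neg_mul]
        exact le_add_of_nonneg_left (hφ0 _)
    calc |Kker g (f τ) (f (τ + u))| ≤ L ^ 2 * (φ (L * |u|) + 2 / k) * u ^ 2 :=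
          hg.abs_Kker_comp_le_indicator_add hf hω hk τ u
      _ ≤ L ^ 2 * (φ (L * u) + φ (-L * u) + 2 / k) * u ^ 2 := by gcongr

theorem periodic_radialTop (hg : IsUnitSpeedJordan g l) (hf : IsLipschitzWeakHomeo f L l) (r : ℝ) :
    Periodic (fun τ ↦ radialTop g f (r, τ)) (2 * π) := fun τ ↦ by
  have h_shift (u : ℝ) : f (τ + 2 * π + u) = f (τ + u) + l := by
    rw [add_right_comm, hf.add_two_pi]
  simp only [radialTop, hf.add_two_pi, h_shift, hg.Kker_add_period]

theorem radialTop_one (hg : IsUnitSpeedJordan g l) (hf : IsLipschitzWeakHomeo f L l) (τ : ℝ) :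
    radialTop g f (1, τ) = 1 / (2 * π) * Topf g f τ := by
  have hper : Periodic (fun t ↦ Kker g (f τ) (f t) / (2 * sin ((t - τ) / 2) ^ 2)) (2 * π) := by
    intro t
    have h_Kker : Kker g (f τ) (f t + l) = Kker g (f τ) (f t) := by
      simp only [Kker, hg.periodic (f t)]
    have h_sin : sin ((t + 2 * π - τ) / 2) = -sin ((t - τ) / 2) := by
      rw [← sin_add_pi]
      congr 1
      ring
    simp only [hf.add_two_pi, h_Kker, h_sin, neg_sq]
  rw [Topf, integral_zero_two_pi_eq_integral_neg_pi_pi hper τ, radialTop,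
    ← intervalIntegral.integral_const_mul]
  refine intervalIntegral.integral_congr fun u _ ↦ ?_
  simp only [radialKer_one, add_sub_cancel_left]
  ring

theorem continuousOn_radialTop (hg : IsUnitSpeedJordan g l) (hf : IsLipschitzWeakHomeo f L l)
    (hω : HasDiniModulus g ω) :
    ContinuousOn (radialTop g f) (Icc (1 / 2) 1 ×ˢ univ) := by
  obtain ⟨θ, hθ, h_bound⟩ := hg.exists_Kker_majorant hf hω
  have hfc := hf.continuous
  have hae : ∀ᵐ u : ℝ, u ∈ uIoc (-π) π → |u| ≤ π ∧ u ≠ 0 := by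
    filter_upwards [(by simp [ae_iff] : ∀ᵐ u : ℝ, u ≠ 0)] with u hu hmem
    rw [uIoc_of_le (by linarith [pi_pos])] at hmem
    exact ⟨abs_le.2 ⟨hmem.1.le, hmem.2⟩, hu⟩
  intro p hp
  refine intervalIntegral.continuousWithinAt_of_dominated_interval (bound := fun u ↦ π * θ u)
    (Eventually.of_forall fun q ↦ ?_) ?_ (hθ.const_mul _) ?_
  · have h_cont : Continuous fun u ↦ Kker g (f q.2) (f (q.2 + u)) :=
      hg.continuous_Kker.comp (continuous_const.prodMk (by fun_prop))
    exact ((measurable_radialKer _).neg.mul h_cont.measurable).aestronglyMeasurable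
  · filter_upwards [self_mem_nhdsWithin] with q hq
    filter_upwards [hae] with u hu hmem
    obtain ⟨hu_le, hu0⟩ := hu hmem
    rw [norm_eq_abs, abs_mul, abs_neg]
    calc |radialKer q.1 u| * |Kker g (f q.2) (f (q.2 + u))|
        ≤ π / u ^ 2 * (θ u * u ^ 2) :=
          mul_le_mul (abs_radialKer_le hq.1 hu_le hu0) (h_bound _ _) (abs_nonneg _) (by positivity)
      _ = π * θ u := by field_simp
  · filter_upwards [hae] with u hu hmem
    obtain ⟨hu_le, hu0⟩ := hu hmem
    have h_radialKer : ContinuousAt (fun q : ℝ × ℝ ↦ radialKer q.1 u) p :=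
      (continuousAt_radialKer (by linarith [hp.1.1]) hu_le hu0).comp (f := Prod.fst)
        continuousAt_fst
    have h_Kker : Continuous fun q : ℝ × ℝ ↦ Kker g (f q.2) (f (q.2 + u)) :=
      hg.continuous_Kker.comp (Continuous.prodMk (by fun_prop) (by fun_prop))
    exact (h_radialKer.neg.mul h_Kker.continuousAt).continuousWithinAt

theorem exists_eventually_le_radialTop (hg : IsUnitSpeedJordan g l)
    (hf : IsLipschitzWeakHomeo f L l) (hω : HasDiniModulus g ω) (hT : ∀ τ, 0 < Topf g f τ) :
    ∃ c > 0, ∀ᶠ r in 𝓝[<] (1 : ℝ), ∀ τ, c ≤ radialTop g f (r, τ) := by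
  have := pi_pos
  have hcont := hg.continuousOn_radialTop hf hω
  have hcont_one : ContinuousOn (fun τ ↦ radialTop g f (1, τ)) (Icc 0 (2 * π)) :=
    hcont.comp (f := fun τ : ℝ ↦ ((1 : ℝ), τ)) (by fun_prop)
      fun τ _ ↦ ⟨⟨by norm_num, le_rfl⟩, mem_univ _⟩
  obtain ⟨τ₀, -, h_min⟩ := isCompact_Icc.exists_isMinOn (nonempty_Icc.2 (by positivity)) hcont_one
  set m := radialTop g f (1, τ₀) with hm
  have hm_pos : 0 < m := by
    have := hT τ₀
    rw [hm, hg.radialTop_one hf]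
    positivity
  obtain ⟨δ, hδ, h_unif⟩ := Metric.uniformContinuousOn_iff.1
    ((isCompact_Icc.prod isCompact_Icc).uniformContinuousOn_of_continuous
      (hcont.mono (prod_mono_right (subset_univ (Icc 0 (2 * π)))))) (m / 2) (by positivity)
  refine ⟨m / 2, by positivity, ?_⟩
  filter_upwards [Ioo_mem_nhdsLT (show max (1 / 2) (1 - δ) < 1 from
    max_lt (by norm_num) (by linarith))] with r hr τ
  obtain ⟨hr_half, hrδ⟩ := max_lt_iff.1 hr.1
  obtain ⟨y, hy, hτy⟩ := (hg.periodic_radialTop hf r).exists_mem_Ico₀ (by positivity) τ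
  have hy' := Ico_subset_Icc_self hy
  have h_dist := h_unif (r, y) ⟨⟨hr_half.le, hr.2.le⟩, hy'⟩ (1, y) ⟨⟨by norm_num, le_rfl⟩, hy'⟩ (by
    rw [Prod.dist_eq, dist_self, dist_eq, abs_of_neg (by linarith [hr.2])]
    exact max_lt (by linarith) hδ)
  have h_ge : m ≤ radialTop g f (1, y) := h_min hy'
  rw [dist_eq, abs_lt] at h_dist
  rw [hτy]
  linarith [h_dist.1]

theorem im_conj_mul_radialDeriv (hg : IsUnitSpeedJordan g l) (hf : IsLipschitzWeakHomeo f L l)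
    {r : ℝ} (hr : r ∈ Ico (0 : ℝ) 1) (τ : ℝ) :
    (conj (deriv g (f τ)) * radialDeriv (g ∘ f) (circleMap 0 r τ)).im =
      -radialTop g f (r, τ) := by
  have hc := hg.continuous_comp hf
  have hR := continuous_radialKer hr
  have h_im := Complex.imCLM.intervalIntegral_comp_comm (μ := volume) (a := -π) (b := π)
    (f := fun u ↦ conj (deriv g (f τ)) * ((radialKer r u : ℂ) * ((g ∘ f) (τ + u) - (g ∘ f) τ)))
    (Continuous.intervalIntegrable (continuous_const.mul ((Complex.continuous_ofReal.comp hR).mul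
      ((hc.comp (continuous_const_add τ)).sub continuous_const))) _ _)
  simp only [Complex.imCLM_apply] at h_im
  rw [radialDeriv_circleMap hc (hg.periodic_comp hf) hr, ← intervalIntegral.integral_const_mul,
    ← h_im, radialTop, ← intervalIntegral.integral_neg]
  refine intervalIntegral.integral_congr fun u _ ↦ ?_
  simp only [Kker_eq, comp_apply]
  rw [mul_left_comm, Complex.im_ofReal_mul, neg_mul, neg_neg]

end IsUnitSpeedJordan

/-! ### The dilatation of the Poisson extension -/

theorem im_neg_and_sq_norm_le {p q : ℂ} {c η : ℝ} (hc : 0 < c) (hη : η ≤ c / 2)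
    (h_add : (p + q).im ≤ -c) (h_re : -η ≤ (I * (p - q)).re) (h_im : |(I * (p - q)).im| ≤ η) :
    p.im < 0 ∧ ‖q‖ ^ 2 ≤ (1 + 32 * η / c) * ‖p‖ ^ 2 := by
  rw [Complex.I_mul_re, Complex.sub_im] at h_re
  rw [Complex.I_mul_im, Complex.sub_re] at h_im
  rw [Complex.add_im] at h_add
  set T := -(p.im + q.im) with hT
  have hη0 : 0 ≤ η := (abs_nonneg _).trans h_im
  have : T ≤ -4 * p.im := by linarith
  have hT_le : T ≤ 4 * ‖p‖ := by linarith [neg_le_abs p.im, Complex.abs_im_le_norm p]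
  have ha_le : |p.re + q.re| ≤ 4 * ‖p‖ := by
    calc |p.re + q.re| = |2 * p.re - (p.re - q.re)| := by ring_nf
      _ ≤ |2 * p.re| + |p.re - q.re| := abs_sub _ _
      _ ≤ 4 * ‖p‖ := by
        rw [abs_mul, abs_two]
        linarith [Complex.abs_re_le_norm p]
  have h_polar : ‖q‖ ^ 2 = ‖p‖ ^ 2 - (p.re + q.re) * (p.re - q.re) - T * (q.im - p.im) := by
    rw [Complex.sq_norm, Complex.sq_norm, Complex.normSq_apply, Complex.normSq_apply, hT]
    ring
  refine ⟨by linarith, ?_⟩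
  calc ‖q‖ ^ 2 ≤ ‖p‖ ^ 2 + |p.re + q.re| * η + T * η := by
        have h_prod : -((p.re + q.re) * (p.re - q.re)) ≤ |p.re + q.re| * η :=
          (neg_le_abs _).trans ((abs_mul _ _).trans_le (by gcongr))
        nlinarith
    _ ≤ ‖p‖ ^ 2 + 4 * ‖p‖ * η + 4 * ‖p‖ * η := by gcongr
    _ = ‖p‖ ^ 2 + 8 * η / c * ‖p‖ * c := by field_simp; ring
    _ ≤ ‖p‖ ^ 2 + 8 * η / c * ‖p‖ * (4 * ‖p‖) := by gcongr; linarith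
    _ = (1 + 32 * η / c) * ‖p‖ ^ 2 := by ring

theorem norm_le_of_eventually_norm_circleMap_le {E : Type*} [NormedAddCommGroup E]
    [NormedSpace ℂ E] {u : ℂ → E} {c z : ℂ} {R C : ℝ} (hu : DifferentiableOn ℂ u (ball c R))
    (h : ∀ M > C, ∀ᶠ r in 𝓝[<] R, ∀ t, ‖u (circleMap c r t)‖ ≤ M) (hz : z ∈ ball c R) :
    ‖u z‖ ≤ C := by
  refine le_of_forall_gt_imp_ge_of_dense fun M hM ↦ ?_
  obtain ⟨r, hr_le, hzr, hrR⟩ := ((h M hM).and (Ioo_mem_nhdsLT hz)).exists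
  have hr : 0 < r := dist_nonneg.trans_lt hzr
  refine Complex.norm_le_of_forall_mem_frontier_norm_le isBounded_ball
    (hu.diffContOnCl_ball (closedBall_subset_ball hrR)) (fun y hy ↦ ?_)
    (subset_closure (mem_ball.2 hzr))
  rw [frontier_ball _ hr.ne', ← abs_of_pos hr, ← range_circleMap] at hy
  obtain ⟨t, rfl⟩ := hy
  exact hr_le t

section Differential

variable {F : ℝ → ℂ}

theorem differentiableOn_herglotzExt (hc : Continuous F) (hF : Periodic F (2 * π)) :
    DifferentiableOn ℂ (herglotzExt F) (ball 0 1) := fun _ hz ↦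
  (hasDerivAt_herglotzExt hc hF hz).differentiableAt.differentiableWithinAt

theorem differentiableOn_herglotzDeriv (hc : Continuous F) (hF : Periodic F (2 * π)) :
    DifferentiableOn ℂ (herglotzDeriv F) (ball 0 1) :=
  ((differentiableOn_herglotzExt hc hF).deriv isOpen_ball).congr fun _ hz ↦
    (hasDerivAt_herglotzExt hc hF hz).deriv.symm

theorem differentiableOn_conjHerglotzDeriv (hc : Continuous F) (hF : Periodic F (2 * π)) :
    DifferentiableOn ℂ (conjHerglotzDeriv F) (ball 0 1) :=
  differentiableOn_herglotzDeriv (Complex.continuous_conj.comp hc) (periodic_conj hF)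

theorem hasStrictDerivAt_herglotzExt (hc : Continuous F) (hF : Periodic F (2 * π)) {z : ℂ}
    (hz : z ∈ ball (0 : ℂ) 1) : HasStrictDerivAt (herglotzExt F) (herglotzDeriv F z) z :=
  (hasDerivAt_herglotzExt hc hF hz).deriv ▸ ((differentiableOn_herglotzExt hc hF).analyticAt
    (isOpen_ball.mem_nhds hz)).hasStrictDerivAt

theorem exists_sensePreserving_hasStrictFDerivAt_poissonExt (hc : Continuous F)
    (hF : Periodic F (2 * π)) {z : ℂ} (hz : z ∈ ball (0 : ℂ) 1)
    (h_lt : ‖conjHerglotzDeriv F z‖ < ‖herglotzDeriv F z‖) :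
    ∃ L, IsSensePreserving L ∧ HasStrictFDerivAt (poissonExt F) L z := by
  have h_hol := (hasStrictDerivAt_herglotzExt hc hF hz).hasStrictFDerivAt.restrictScalars ℝ
  have h_conj := (hasStrictDerivAt_herglotzExt (Complex.continuous_conj.comp hc)
    (periodic_conj hF) hz).hasStrictFDerivAt.restrictScalars ℝ
  have h_add := h_hol.add
    ((Complex.conjCLE.toContinuousLinearMap.hasStrictFDerivAt).comp z h_conj)
  refine ⟨_, ⟨herglotzDeriv F z, conj (conjHerglotzDeriv F z), by rwa [Complex.norm_conj],
    fun v ↦ ?_⟩, h_add.congr_of_eventuallyEq ?_⟩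
  · simp [conjHerglotzDeriv, comp_def, mul_comm]
  · filter_upwards [isOpen_ball.mem_nhds hz] with y hy
      using (poissonExt_eq_herglotzExt_add_conj hc hF hy).symm

theorem contDiffOn_poissonExt (hc : Continuous F) (hF : Periodic F (2 * π)) :
    ContDiffOn ℝ (⊤ : ℕ∞) (poissonExt F) (ball 0 1) := by
  have h_half (G : ℝ → ℂ) (hG : Continuous G) (hGp : Periodic G (2 * π)) :
      ContDiffOn ℝ (⊤ : ℕ∞) (herglotzExt G) (ball 0 1) :=
    ((differentiableOn_herglotzExt hG hGp).contDiffOn isOpen_ball).restrict_scalars ℝ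
  exact ((h_half F hc hF).add (Complex.conjCLE.contDiff.comp_contDiffOn
    (h_half _ (Complex.continuous_conj.comp hc) (periodic_conj hF)))).congr
      fun z hz ↦ poissonExt_eq_herglotzExt_add_conj hc hF hz

theorem Jac_ne_zero_of_hasFDerivAt {w : ℂ → ℂ} {L : ℂ →L[ℝ] ℂ} {z : ℂ} (hL : IsSensePreserving L)
    (hw : HasFDerivAt w L z) : Jac w z ≠ 0 := by
  rw [Jac, hw.fderiv]
  exact fun h_det ↦ (LinearMap.bot_lt_ker_of_det_eq_zero h_det).ne'
    (LinearMap.ker_eq_bot.2 hL.injective)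

theorem exists_eqOn_herglotzExt_conj (hc : Continuous F) (hF : Periodic F (2 * π)) {q : ℂ}
    (h_deriv : EqOn (conjHerglotzDeriv F) (fun z ↦ q * herglotzDeriv F z) (ball 0 1)) :
    ∃ a, EqOn (herglotzExt fun t ↦ conj (F t)) (fun z ↦ q * herglotzExt F z + a) (ball 0 1) := by
  have hc' : Continuous fun t ↦ conj (F t) := Complex.continuous_conj.comp hc
  refine isOpen_ball.exists_eq_add_of_deriv_eq (convex_ball (0 : ℂ) 1).isPreconnected
    (differentiableOn_herglotzExt hc' (periodic_conj hF))
    ((differentiableOn_herglotzExt hc hF).const_mul q) fun y hy ↦ ?_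
  rw [(hasDerivAt_herglotzExt hc' (periodic_conj hF) hy).deriv,
    ((hasDerivAt_herglotzExt hc hF hy).const_mul q).deriv]
  exact h_deriv hy

/-- The antiholomorphic half `conj k` of the Poisson extension `h + conj k` satisfies
`k = ν ^ 2 * h + const`, so `ν * (h + conj k)` is `2 * Re (ν * h)` up to an additive constant. -/
theorem exists_forall_im_mul_eq (hF : Periodic F (2 * π)) {K : NNReal} (hK : LipschitzWith K F)
    {q : ℂ} (hq : ‖q‖ = 1)
    (h_deriv : EqOn (conjHerglotzDeriv F) (fun z ↦ q * herglotzDeriv F z) (ball 0 1)) :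
    ∃ ν : ℂ, ‖ν‖ = 1 ∧ ∃ m : ℝ, ∀ t, (ν * F t).im = m := by
  have hc := hK.continuous
  obtain ⟨a, ha⟩ := exists_eqOn_herglotzExt_conj hc hF h_deriv
  obtain ⟨ν, hν⟩ := IsAlgClosed.exists_eq_mul_self q
  have hν_norm : ‖ν‖ = 1 := by
    rw [hν, norm_mul, ← sq] at hq
    exact (pow_eq_one_iff_of_nonneg (norm_nonneg _) two_ne_zero).1 hq
  have hν_conj : ν * conj ν = 1 := by simp [Complex.mul_conj', hν_norm]
  refine ⟨ν, hν_norm, (ν * conj a).im, fun t ↦ ?_⟩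
  have h_ball : EqOn (fun y ↦ (ν * poissonExtClosed F y).im)
      (fun _ ↦ (ν * conj a).im) (ball 0 1) := fun y hy ↦ by
    have h_eq : ν * poissonExtClosed F y =
        (ν * herglotzExt F y + conj (ν * herglotzExt F y)) + ν * conj a := by
      rw [eqOn_poissonExtClosed_ball F hy, poissonExt_eq_herglotzExt_add_conj hc hF hy,
        ha hy, hν]
      simp only [map_add, map_mul]
      linear_combination (conj (herglotzExt F y) * conj ν) * hν_conj
    simp only [h_eq, Complex.add_conj, Complex.add_im, Complex.ofReal_im, zero_add]
  have h_closed := h_ball.of_subset_closure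
    (Complex.continuous_im.comp_continuousOn
      (continuousOn_const.mul (continuousOn_poissonExtClosed hF hK)))
    continuousOn_const ball_subset_closedBall (closure_ball (0 : ℂ) one_ne_zero).ge
  simpa only [poissonExtClosed_circleMap hF] using
    h_closed (circleMap_mem_closedBall 0 zero_le_one t)

end Differential

namespace IsUnitSpeedJordan

variable {g : ℝ → ℂ} {l : ℝ} {f : ℝ → ℝ} {L : NNReal} {ω : ℝ → ℝ}

theorem eventually_im_neg_and_sq_norm_conjHerglotzDeriv_le (hg : IsUnitSpeedJordan g l)
    (hf : IsLipschitzWeakHomeo f L l) (hω : HasDiniModulus g ω) (hT : ∀ τ, 0 < Topf g f τ)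
    {M : ℝ} (hM : 1 < M) :
    ∀ᶠ r in 𝓝[<] (1 : ℝ), ∀ τ,
      (conj (deriv g (f τ)) *
        (circleMap 0 r τ * herglotzDeriv (g ∘ f) (circleMap 0 r τ))).im < 0 ∧
      ‖conjHerglotzDeriv (g ∘ f) (circleMap 0 r τ)‖ ^ 2 ≤
        M * ‖herglotzDeriv (g ∘ f) (circleMap 0 r τ)‖ ^ 2 := by
  obtain ⟨c, hc, h_radial⟩ := hg.exists_eventually_le_radialTop hf hω hT
  set η := min (c / 2) (c * (M - 1) / 32)
  have hη : 0 < η := lt_min (by positivity) (by have := sub_pos.2 hM; positivity)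
  have hηM : 1 + 32 * η / c ≤ M := by
    have := min_le_right (c / 2) (c * (M - 1) / 32)
    rw [← le_sub_iff_add_le', div_le_iff₀ hc]
    linarith
  filter_upwards [h_radial, hg.eventually_neg_le_re_and_abs_im_conj_mul_angularDeriv_le hf hη,
    Ioo_mem_nhdsLT one_pos] with r hr_radial hr_angular hr τ
  obtain ⟨h_re, h_im⟩ := hr_angular τ
  have h_normal := hg.im_conj_mul_radialDeriv hf (Ioo_subset_Ico_self hr) τ
  rw [radialDeriv, mul_add] at h_normal
  rw [angularDeriv, mul_left_comm, mul_sub] at h_re h_im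
  obtain ⟨h_neg, h_sq⟩ := im_neg_and_sq_norm_le hc (min_le_left _ _)
    (by linarith [hr_radial τ]) h_re h_im
  refine ⟨h_neg, ?_⟩
  simp only [norm_mul, Complex.norm_conj, hg.norm_deriv, one_mul, mul_pow] at h_sq
  rw [mul_left_comm] at h_sq
  have hz : 0 < ‖circleMap 0 r τ‖ := by simpa using hr.1.ne'
  exact (le_of_mul_le_mul_left h_sq (by positivity)).trans (by gcongr)

theorem exists_isLowestPoint (hg : IsUnitSpeedJordan g l) (hf : Surjective f)
    (hT : ∀ τ, 0 < Topf g f τ) : ∃ s₀, IsLowestPoint g s₀ := by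
  obtain ⟨s₀, -, hs₀⟩ := isCompact_Icc.exists_isMinOn (nonempty_Icc.2 hg.pos.le)
    (f := fun s ↦ (g s).im) (Complex.continuous_im.comp hg.continuous).continuousOn
  have h_min (s : ℝ) : (g s₀).im ≤ (g s).im := by
    obtain ⟨y, hy, hsy⟩ := hg.periodic.exists_mem_Ico₀ hg.pos s
    rw [hsy]
    exact hs₀ (Ico_subset_Icc_self hy)
  have h_im : (deriv g s₀).im = 0 := IsLocalMin.hasDerivAt_eq_zero (.of_forall h_min)
    (Complex.imCLM.hasFDerivAt.comp_hasDerivAt s₀ (hg.hasDerivAt s₀))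
  have h_re : |(deriv g s₀).re| = 1 := by
    rw [Complex.abs_re_eq_norm.2 h_im, hg.norm_deriv]
  rcases eq_or_eq_neg_of_abs_eq h_re with h | h
  · exact ⟨s₀, h_min, Complex.ext h h_im⟩
  -- Traversed in the direction `-1`, the curve lies on the wrong side of its lowest tangent.
  · obtain ⟨τ, hτ⟩ := hf s₀
    refine absurd (hT τ) (not_lt.2 ?_)
    rw [Topf, intervalIntegral.integral_of_le (by positivity)]
    refine integral_nonpos fun t ↦ div_nonpos_of_nonpos_of_nonneg ?_ (by positivity)
    rw [Kker_eq, hτ, Complex.mul_im, Complex.conj_re, Complex.conj_im, h, h_im, Complex.sub_im]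
    linarith [h_min (f t)]

theorem hasWinding_of_im_conj_deriv_mul_neg (hg : IsUnitSpeedJordan g l)
    (hf : IsLipschitzWeakHomeo f L l) {s₀ : ℝ} (hs₀ : IsLowestPoint g s₀) {H : ℂ → ℂ} {r : ℝ}
    (hr : 0 < r) (hH : Continuous fun t ↦ H (circleMap 0 r t))
    (h_neg : ∀ t, (conj (deriv g (f t)) * (circleMap 0 r t * H (circleMap 0 r t))).im < 0) :
    HasWinding (fun t ↦ H (circleMap 0 r t)) (2 * π) 0 := by
  have h_tangent := (hg.hasWinding_deriv hs₀).comp hf.continuous hf.add_two_pi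
  have h_circle := hasWinding_circleMap_sub (mem_ball_self hr : (0 : ℂ) ∈ ball 0 r)
  simp only [sub_zero] at h_circle
  have h_tangent_cont := h_tangent.continuous
  have h_half_plane : HasWinding
      (fun t ↦ I * (conj (deriv g (f t)) * (circleMap 0 r t * H (circleMap 0 r t)))) (2 * π) 0 := by
    refine HasWinding.of_mem_slitPlane ?_ (fun t ↦ ?_) fun t ↦ .inl ?_
    · exact continuous_const.mul ((Complex.continuous_conj.comp h_tangent_cont).mul
        ((continuous_circleMap 0 r).mul hH))
    · simp only [periodic_circleMap 0 r t, h_tangent.periodic t]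
    · simpa only [Complex.I_mul_re, neg_pos] using h_neg t
  have h_prod := ((h_half_plane.mul h_tangent).mul h_circle.inv).mul
    (HasWinding.const (inv_ne_zero Complex.I_ne_zero))
  simp only [zero_add, add_neg_cancel] at h_prod
  convert h_prod using 2 with t
  have h_circle_ne := h_circle.ne_zero t
  have h_unit := hg.deriv_mul_conj (f t)
  have := Complex.I_ne_zero
  generalize H (circleMap 0 r t) = h
  field_simp
  linear_combination (-h) * h_unit

theorem herglotzDeriv_ne_zero (hg : IsUnitSpeedJordan g l) (hf : IsLipschitzWeakHomeo f L l)
    (hω : HasDiniModulus g ω) (hT : ∀ τ, 0 < Topf g f τ) {z : ℂ} (hz : z ∈ ball (0 : ℂ) 1) :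
    herglotzDeriv (g ∘ f) z ≠ 0 := by
  have hd := differentiableOn_herglotzDeriv (hg.continuous_comp hf) (hg.periodic_comp hf)
  obtain ⟨s₀, hs₀⟩ := hg.exists_isLowestPoint (hf.surjective hg.pos) hT
  obtain ⟨r, h_est, hzr, hr1⟩ :=
    ((hg.eventually_im_neg_and_sq_norm_conjHerglotzDeriv_le hf hω hT one_lt_two).and
      (Ioo_mem_nhdsLT (mem_ball_zero_iff.1 hz))).exists
  have hr : 0 < r := (norm_nonneg z).trans_lt hzr
  have h_cont : Continuous fun t ↦ herglotzDeriv (g ∘ f) (circleMap 0 r t) :=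
    hd.continuousOn.comp_continuous (continuous_circleMap 0 r) fun t ↦
      circleMap_mem_ball ⟨hr.le, hr1⟩ t
  exact ne_zero_of_hasWinding_zero hr (hd.diffContOnCl_ball (closedBall_subset_ball hr1))
    (hg.hasWinding_of_im_conj_deriv_mul_neg hf hs₀ hr h_cont fun t ↦ (h_est t).1)
    (mem_closedBall_zero_iff.2 hzr.le)

theorem norm_conjHerglotzDeriv_div_le_one (hg : IsUnitSpeedJordan g l)
    (hf : IsLipschitzWeakHomeo f L l) (hω : HasDiniModulus g ω) (hT : ∀ τ, 0 < Topf g f τ)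
    {z : ℂ} (hz : z ∈ ball (0 : ℂ) 1) :
    ‖conjHerglotzDeriv (g ∘ f) z / herglotzDeriv (g ∘ f) z‖ ≤ 1 := by
  have hc := hg.continuous_comp hf
  have hF := hg.periodic_comp hf
  have hne : ∀ z ∈ ball (0 : ℂ) 1, herglotzDeriv (g ∘ f) z ≠ 0 := fun _ ↦
    hg.herglotzDeriv_ne_zero hf hω hT
  have h_sq := norm_le_of_eventually_norm_circleMap_le (C := 1)
    (((differentiableOn_conjHerglotzDeriv hc hF).div
      (differentiableOn_herglotzDeriv hc hF) hne).pow 2) (fun M hM ↦ ?_) hz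
  · rwa [Pi.pow_apply, norm_pow, sq_le_one_iff₀ (norm_nonneg _)] at h_sq
  · filter_upwards [hg.eventually_im_neg_and_sq_norm_conjHerglotzDeriv_le hf hω hT hM,
      Ioo_mem_nhdsLT one_pos] with r h_est hr t
    have h_pos := norm_pos_iff.2 (hne _ (circleMap_mem_ball (Ioo_subset_Ico_self hr) t))
    rw [Pi.pow_apply, norm_pow, Pi.div_apply, norm_div, div_pow, div_le_iff₀ (by positivity)]
    exact (h_est t).2

theorem Kker_eq_zero_of_im_mul_eq (hg : IsUnitSpeedJordan g l) {ν : ℂ} (hν : ‖ν‖ = 1) {m : ℝ}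
    (hm : ∀ s, (ν * g s).im = m) (s t : ℝ) : Kker g s t = 0 := by
  have hν_conj : ν * conj ν = 1 := by simp [Complex.mul_conj', hν]
  have h_deriv : (ν * deriv g s).im = 0 := by
    have h := Complex.imCLM.hasFDerivAt.comp_hasDerivAt s ((hg.hasDerivAt s).const_mul ν)
    simp only [comp_def, Complex.imCLM_apply, hm] at h
    exact h.unique (hasDerivAt_const s m)
  have h_rot : conj (deriv g s) * (g t - g s) = conj (ν * deriv g s) * (ν * g t - ν * g s) := by
    rw [map_mul]
    linear_combination (-conj (deriv g s) * (g t - g s)) * hν_conj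
  rw [Kker_eq, h_rot, Complex.mul_im, Complex.conj_im, h_deriv, Complex.sub_im, hm, hm]
  simp

theorem norm_conjHerglotzDeriv_lt (hg : IsUnitSpeedJordan g l) (hf : IsLipschitzWeakHomeo f L l)
    (hω : HasDiniModulus g ω) (hT : ∀ τ, 0 < Topf g f τ) {z : ℂ} (hz : z ∈ ball (0 : ℂ) 1) :
    ‖conjHerglotzDeriv (g ∘ f) z‖ < ‖herglotzDeriv (g ∘ f) z‖ := by
  have hc := hg.continuous_comp hf
  have hF := hg.periodic_comp hf
  have hne : ∀ z ∈ ball (0 : ℂ) 1, herglotzDeriv (g ∘ f) z ≠ 0 := fun _ ↦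
    hg.herglotzDeriv_ne_zero hf hω hT
  have hle : ∀ z ∈ ball (0 : ℂ) 1,
      ‖conjHerglotzDeriv (g ∘ f) z / herglotzDeriv (g ∘ f) z‖ ≤ 1 := fun _ ↦
    hg.norm_conjHerglotzDeriv_div_le_one hf hω hT
  by_contra! h_ge
  set q := conjHerglotzDeriv (g ∘ f) z / herglotzDeriv (g ∘ f) z
  have hq : ‖q‖ = 1 := by
    refine (hle z hz).antisymm ?_
    rwa [norm_div, one_le_div₀ (norm_pos_iff.2 (hne z hz))]
  have h_const := Complex.eqOn_of_isPreconnected_of_isMaxOn_norm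
    (convex_ball (0 : ℂ) 1).isPreconnected isOpen_ball
    ((differentiableOn_conjHerglotzDeriv hc hF).div (differentiableOn_herglotzDeriv hc hF) hne) hz
    fun y hy ↦ (hle y hy).trans hq.ge
  obtain ⟨ν, hν, m, hm⟩ := exists_forall_im_mul_eq hF (hg.lipschitzWith_comp hf) hq
    fun y hy ↦ (div_eq_iff (hne y hy)).1 (h_const hy)
  have h_line : ∀ s, (ν * g s).im = m := (hf.surjective hg.pos).forall.2 hm
  have h_Topf : Topf g f 0 = 0 := by simp [Topf, hg.Kker_eq_zero_of_im_mul_eq hν h_line]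
  exact (hT 0).ne' h_Topf

theorem exists_sensePreserving_hasStrictFDerivAt (hg : IsUnitSpeedJordan g l)
    (hf : IsLipschitzWeakHomeo f L l) (hω : HasDiniModulus g ω) (hT : ∀ τ, 0 < Topf g f τ)
    {z : ℂ} (hz : z ∈ ball (0 : ℂ) 1) :
    ∃ L, IsSensePreserving L ∧ HasStrictFDerivAt (poissonExt (g ∘ f)) L z :=
  exists_sensePreserving_hasStrictFDerivAt_poissonExt (hg.continuous_comp hf) (hg.periodic_comp hf)
    hz (hg.norm_conjHerglotzDeriv_lt hf hω hT hz)

theorem bijOn_poissonExt (hg : IsUnitSpeedJordan g l) (hf : IsLipschitzWeakHomeo f L l)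
    (hω : HasDiniModulus g ω) (hT : ∀ τ, 0 < Topf g f τ) {D : Set ℂ} (hD : IsInteriorDomain g D) :
    BijOn (poissonExt (g ∘ f)) (ball 0 1) D := by
  have hF := hg.periodic_comp hf
  obtain ⟨s₀, hs₀⟩ := hg.exists_isLowestPoint (hf.surjective hg.pos) hT
  refine BijOn.congr (bijOn_ball_of_boundary_eq hg hs₀ hD hf.continuous hf.add_two_pi one_pos
    (continuousOn_poissonExtClosed hF (hg.lipschitzWith_comp hf))
    (poissonExtClosed_circleMap hF) fun z hz ↦ ?_) (eqOn_poissonExtClosed_ball _)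
  obtain ⟨M, hM, h_deriv⟩ := hg.exists_sensePreserving_hasStrictFDerivAt hf hω hT hz
  exact ⟨M, hM, h_deriv.congr_of_eventuallyEq
    ((eqOn_poissonExtClosed_ball _).eventuallyEq_of_mem (isOpen_ball.mem_nhds hz)).symm⟩

end IsUnitSpeedJordan

/-- Main theorem: if `F = g∘f` is an orientation-preserving Lipschitz weak
homeomorphism of the circle onto a Dini-smooth Jordan curve bounding `D` and the
continuous factor `T[f]` of the boundary Jacobian is strictly positive, then the
Poisson extension `w = P[F]` is a diffeomorphism of the unit disk onto `D`. -/
theorem main_theorem (l : ℝ) (hl : 0 < l) (L : NNReal)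
    (D : Set ℂ) (hDo : IsOpen D) (hDb : Bornology.IsBounded D) (hDc : IsConnected D)
    (g : ℝ → ℂ) (hg : ContDiff ℝ 1 g)
    (hper : ∀ s, g (s + l) = g s)
    (hunit : ∀ s, ‖deriv g s‖ = 1)
    (hfront : g '' Icc 0 l = frontier D)
    (hginj : InjOn g (Ico 0 l))
    (ω : ℝ → ℝ)
    (hω : ∀ δ ≥ (0:ℝ), ∀ x y : ℝ, |x - y| ≤ δ → ‖deriv g x - deriv g y‖ ≤ ω δ)
    (hωD : ∃ k > (0:ℝ), IntegrableOn (fun t => ω t / t) (Ioc 0 k))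
    (f : ℝ → ℝ) (hf : Monotone f) (hfl : LipschitzWith L f) (hf0 : f 0 = 0)
    (hfqp : ∀ t, f (t + 2 * π) = f t + l)
    (hT : ∀ τ : ℝ, 0 < Topf g f τ) :
    Set.BijOn (poissonExt (fun t => g (f t))) (Metric.ball (0:ℂ) 1) D ∧
    ContDiffOn ℝ (⊤ : ℕ∞) (poissonExt (fun t => g (f t))) (Metric.ball (0:ℂ) 1) ∧
    ∀ z ∈ Metric.ball (0:ℂ) 1, Jac (poissonExt (fun t => g (f t))) z ≠ 0 := by
  have hg' : IsUnitSpeedJordan g l := ⟨hl, hg, hper, hunit, hginj⟩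
  have hf' : IsLipschitzWeakHomeo f L l := ⟨hf, hfl, hfqp⟩
  have hω' : HasDiniModulus g ω := ⟨hω, hωD⟩
  have hD : IsInteriorDomain g D := ⟨hDo, hDb, hDc, hfront ▸ image_subset_range g _⟩
  refine ⟨hg'.bijOn_poissonExt hf' hω' hT hD,
    contDiffOn_poissonExt (hg'.continuous_comp hf') (hg'.periodic_comp hf'), fun z hz ↦ ?_⟩
  obtain ⟨M, hM, h_deriv⟩ := hg'.exists_sensePreserving_hasStrictFDerivAt hf' hω' hT hz
  exact Jac_ne_zero_of_hasFDerivAt hM h_deriv.hasFDerivAt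
end
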